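/- arXiv:1311.3464 — 3 statements merged into one kernel-verified Lean document; each statement's English description precedes it below -/
import Mathlib

section
/- Fix p > 0. Let B_p^n = {x ∈ ℝⁿ : |x_1|^p + ... + |x_n|^p ≤ 1}, and let c_{p,n} > 0 be chosen so that the random vector X distributed uniformly on c_{p,n}B_p^n is isotropic. Then for every θ ∈ S^{n-1}, every t ∈ ℝ, and G a standard Gaussian random variable, |P(θ·X ≤ t) − P(G ≤ t)| ≤ C_p Σ_{k=1}^n |θ_k|³, where C_p > 0 depends only on p and not on n. -/
open MeasureTheory ProbabilityTheory Real
open scoped Pointwise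
noncomputable def PhiG (t : ℝ) : ℝ := (gaussianReal 0 1).real (Set.Iic t)

lemma PhiG_nonneg (t : ℝ) : 0 ≤ PhiG t := measureReal_nonneg
lemma PhiG_le_one (t : ℝ) : PhiG t ≤ 1 := measureReal_le_one

lemma PhiG_mono {a b : ℝ} (h : a ≤ b) : PhiG a ≤ PhiG b :=
  measureReal_mono (Set.Iic_subset_Iic.2 h)

lemma PhiG_core {a b m : ℝ} (hab : a ≤ b) (hm : 0 ≤ m) (h : ∀ x ∈ Set.Ioc a b, m ≤ |x|) :
    PhiG b - PhiG a ≤ (b - a) * exp (-m ^ 2 / 2) := by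
  have h1 : PhiG b - PhiG a = (gaussianReal 0 1).real (Set.Ioc a b) := by
    have : Set.Iic b = Set.Iic a ∪ Set.Ioc a b := (Set.Iic_union_Ioc_eq_Iic hab).symm
    unfold PhiG
    rw [this, measureReal_union _ measurableSet_Ioc]
    · ring
    · rw [Set.disjoint_left]
      intro x hx hx'
      exact absurd hx'.1 (not_lt.2 hx)
  rw [h1, measureReal_def, gaussianReal_apply_eq_integral 0 one_ne_zero, ENNReal.toReal_ofReal
    (setIntegral_nonneg measurableSet_Ioc (fun x _ => gaussianPDFReal_nonneg _ _ _))]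
  have h2 : ∫ x in Set.Ioc a b, gaussianPDFReal 0 1 x ≤ ∫ x in Set.Ioc a b, exp (-m ^ 2 / 2) := by
    apply setIntegral_mono_on
    · exact (integrable_gaussianPDFReal 0 1).integrableOn
    · exact integrableOn_const (by simp)
    · exact measurableSet_Ioc
    · intro x hx
      have h3 := h x hx
      have h4 : m ^ 2 ≤ x ^ 2 := by
        rw [← sq_abs x]; gcongr
      rw [gaussianPDFReal]
      have h5 : (√(2 * π * ((1 : NNReal) : ℝ)))⁻¹ ≤ 1 := by
        apply inv_le_one_of_one_le₀
        rw [Real.one_le_sqrt]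
        have := Real.pi_gt_three
        simp
        linarith
      calc _ ≤ 1 * exp (-(x - 0) ^ 2 / (2 * ((1 : NNReal) : ℝ))) := by gcongr
        _ ≤ _ := by
          rw [one_mul]
          apply exp_le_exp.2
          simp
          linarith
  refine h2.trans ?_
  simp [hab]

lemma PhiG_core2 {s t m : ℝ} (hm : 0 ≤ m) (h : ∀ x ∈ Set.uIcc s t, m ≤ |x|) :
    |PhiG s - PhiG t| ≤ |s - t| * exp (-m ^ 2 / 2) := by
  rcases le_total s t with hst | hst
  · have := PhiG_core hst hm (fun x hx => h x (by
      rw [Set.uIcc_of_le hst]; exact Set.Ioc_subset_Icc_self hx))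
    rw [abs_sub_comm, abs_of_nonneg (sub_nonneg.2 (PhiG_mono hst)), abs_sub_comm,
      abs_of_nonneg (sub_nonneg.2 hst)]
    exact this
  · have := PhiG_core hst hm (fun x hx => h x (by
      rw [Set.uIcc_of_ge hst]; exact Set.Ioc_subset_Icc_self hx))
    rw [abs_of_nonneg (sub_nonneg.2 (PhiG_mono hst)),
      abs_of_nonneg (sub_nonneg.2 hst)]
    exact this

lemma mul_exp_sq_le (x : ℝ) : x * exp (-x ^ 2 / 2) ≤ 1 := by
  have h := add_one_le_exp (x ^ 2 / 2)
  have h2 : exp (-x ^ 2 / 2) = (exp (x ^ 2 / 2))⁻¹ := by rw [← exp_neg]; congr 1; ring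
  rw [h2, ← div_eq_mul_inv, div_le_one (exp_pos _)]
  nlinarith [sq_nonneg (x - 1)]

lemma uIcc_abs_ge {s w : ℝ} (hw : 1 ≤ w) : ∀ x ∈ Set.uIcc s (s * w), |s| ≤ |x| := by
  intro x hx
  rcases le_total 0 s with h | h
  · rw [Set.uIcc_of_le (by nlinarith)] at hx
    rw [abs_of_nonneg h, abs_of_nonneg (h.trans hx.1)]; exact hx.1
  · rw [Set.uIcc_of_ge (by nlinarith)] at hx
    rw [abs_of_nonpos h, abs_of_nonpos (hx.2.trans h)]; linarith [hx.2]

lemma PhiG_lip {w : ℝ} (hw : 0 < w) (t : ℝ) : |PhiG (t / w) - PhiG t| ≤ 2 * |w - 1| := by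
  rcases le_total w (1 / 2) with h | h
  · have : |PhiG (t / w) - PhiG t| ≤ 1 := by
      rw [abs_le]
      constructor <;> linarith [PhiG_nonneg t, PhiG_le_one t, PhiG_nonneg (t / w), PhiG_le_one (t / w)]
    have h0 : |w - 1| = -(w - 1) := abs_of_nonpos (by linarith)
    rw [h0]; linarith
  rcases le_total 1 w with h1 | h1
  · have hs : t = (t / w) * w := by field_simp
    have := PhiG_core2 (abs_nonneg (t / w)) (uIcc_abs_ge (s := t / w) h1)
    rw [← hs] at this
    refine this.trans ?_
    have h2 : |t / w - t| = |t / w| * |w - 1| := by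
      rw [← abs_mul, abs_sub_comm]; congr 1; field_simp
    rw [h2]
    have := mul_exp_sq_le |t / w|
    nlinarith [abs_nonneg (w - 1)]
  · have h3 : 1 ≤ w⁻¹ := (one_le_inv₀ hw).2 h1
    have := PhiG_core2 (abs_nonneg t) (uIcc_abs_ge (s := t) h3)
    rw [← div_eq_mul_inv] at this
    rw [abs_sub_comm]
    refine this.trans ?_
    have h2 : |t - t / w| = |t| * |w - 1| * w⁻¹ := by
      have e : t - t / w = t * (w - 1) * w⁻¹ := by field_simp
      rw [e, abs_mul, abs_mul, abs_of_pos (inv_pos.2 hw)]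
    rw [h2]
    have h4 : w⁻¹ ≤ 2 := by
      rw [inv_le_comm₀ hw (by norm_num)]; linarith
    have := mul_exp_sq_le |t|
    have h5 := exp_pos (-|t| ^ 2 / 2)
    calc |t| * |w - 1| * w⁻¹ * exp (-|t| ^ 2 / 2) = (|t| * exp (-|t| ^ 2 / 2)) * (w⁻¹ * |w - 1|) := by ring
      _ ≤ 1 * (2 * |w - 1|) := by gcongr
      _ = _ := by ring

/-- one-sided demixing -/
lemma demix_core {R : Type*} [MeasurableSpace R] (ν : Measure R) [IsProbabilityMeasure ν]
    (W : R → ℝ) (hW : Measurable W) (hpos : ∀ᵐ r ∂ν, 0 < W r) (η : ℝ) (hη : 0 < η) (hη' : η ≤ 1 / 4)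
    (hI : Integrable (fun r => (W r - 1) ^ 2) ν) (hvar : ∫ r, (W r - 1) ^ 2 ∂ν ≤ η ^ 2)
    (H : R → ℝ) (hH : Integrable H ν) (v D t s : ℝ) (hD : 0 ≤ D) (hv : 0 ≤ v)
    (hs : |s - 1| ≤ 2 * η) (hs0 : 0 < s)
    (hA : ∀ r, |W r - 1| ≤ 2 * η → 0 < W r → v + PhiG t ≤ H r)
    (hB : ∀ r, 0 < W r → PhiG (t * s / W r) - D ≤ H r) :
    3 / 4 * v - D / 4 - 6 * η ≤ ∫ r, H r ∂ν - PhiG (t * s) := by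
  set A := {r | |W r - 1| ≤ 2 * η} with hAdef
  have hAm : MeasurableSet A := measurableSet_le (by fun_prop) measurable_const
  have hI1 : Integrable (fun r => |W r - 1|) ν := by
    have : MemLp (fun r => W r - 1) 2 ν := by
      rw [memLp_two_iff_integrable_sq (by fun_prop)]; exact hI
    exact (this.integrable one_le_two).abs
  have hst : |PhiG t - PhiG (t * s)| ≤ 4 * η := by
    have := PhiG_lip hs0 (t * s)
    rw [mul_div_cancel_right₀ _ hs0.ne'] at this
    linarith
  have hAc : ν.real Aᶜ ≤ 1 / 4 := by
    have h1 := mul_meas_ge_le_integral_of_nonneg (μ := ν) (f := fun r => (W r - 1) ^ 2)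
      (Filter.Eventually.of_forall (fun r => sq_nonneg _)) hI ((2 * η) ^ 2)
    have h2 : ν.real Aᶜ ≤ ν.real {r | (2 * η) ^ 2 ≤ (W r - 1) ^ 2} := by
      refine measureReal_mono ?_ (measure_ne_top _ _)
      intro r hr
      have hr : 2 * η < |W r - 1| := not_le.1 hr
      show (2 * η) ^ 2 ≤ (W r - 1) ^ 2
      rw [← sq_abs (W r - 1)]; gcongr
    have : (2 * η) ^ 2 * ν.real Aᶜ ≤ η ^ 2 := by
      calc _ ≤ (2 * η) ^ 2 * ν.real {r | (2 * η) ^ 2 ≤ (W r - 1) ^ 2} := by gcongr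
        _ ≤ _ := h1.trans hvar
    have h3 : 0 < η ^ 2 := by positivity
    nlinarith
  have hmean : ∫ r, |W r - 1| ∂ν ≤ η := by
    have h : ∀ r, |W r - 1| ≤ η / 2 + (2 * η)⁻¹ * (W r - 1) ^ 2 := by
      intro r
      have : 0 ≤ (2 * η)⁻¹ * (|W r - 1| - η) ^ 2 := by positivity
      have e : (2 * η)⁻¹ * (|W r - 1| - η) ^ 2 = (2 * η)⁻¹ * (W r - 1) ^ 2 - |W r - 1| + η / 2 := by
        rw [sub_sq, sq_abs]; field_simp
      linarith
    calc _ ≤ ∫ r, (η / 2 + (2 * η)⁻¹ * (W r - 1) ^ 2) ∂ν :=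
          integral_mono hI1 ((integrable_const _).add (hI.const_mul _)) h
      _ = η / 2 + (2 * η)⁻¹ * ∫ r, (W r - 1) ^ 2 ∂ν := by
          rw [integral_add (integrable_const _) (hI.const_mul _), integral_const_mul]; simp
      _ ≤ η / 2 + (2 * η)⁻¹ * η ^ 2 := by gcongr
      _ = η := by field_simp; ring
  have hpt : ∀ᵐ r ∂ν, v - 4 * η - 2 * |W r - 1| - Aᶜ.indicator (fun _ => v + D) r
      ≤ H r - PhiG (t * s) := by
    filter_upwards [hpos] with r hr
    by_cases h : r ∈ A
    · have := hA r h hr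
      simp only [Set.indicator, Set.mem_compl_iff, h]
      have := (abs_le.1 hst).1
      simp
      linarith [abs_nonneg (W r - 1)]
    · have h1 := hB r hr
      have h2 := PhiG_lip hr (t * s)
      simp only [Set.indicator, Set.mem_compl_iff, h]
      have := (abs_le.1 h2).1
      simp
      linarith
  have hfin := integral_mono_ae (((integrable_const (v - 4 * η)).sub (hI1.const_mul 2)).sub
    ((integrable_const (v + D)).indicator hAm.compl)) (hH.sub (integrable_const (PhiG (t * s)))) hpt
  rw [integral_sub' ((integrable_const (v - 4 * η)).sub (hI1.const_mul 2))
    ((integrable_const (v + D)).indicator hAm.compl), integral_sub' (integrable_const (v - 4 * η)) (hI1.const_mul 2), integral_sub' hH (integrable_const (PhiG (t * s))),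
    integral_indicator_const _ hAm.compl, integral_const_mul] at hfin
  simp at hfin
  have : (v + D) * ν.real Aᶜ ≤ (v + D) * (1 / 4) := by gcongr
  linarith

lemma demix {R : Type*} [MeasurableSpace R] (ν : Measure R) [IsProbabilityMeasure ν]
    (W : R → ℝ) (hW : Measurable W) (hpos : ∀ᵐ r ∂ν, 0 < W r) (η : ℝ) (hη : 0 < η)
    (hI : Integrable (fun r => (W r - 1) ^ 2) ν) (hvar : ∫ r, (W r - 1) ^ 2 ∂ν ≤ η ^ 2)
    (F : ℝ → ℝ) (hF : Monotone F) (hF0 : ∀ t, 0 ≤ F t) (hF1 : ∀ t, F t ≤ 1) (ε : ℝ)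
    (hG : ∀ t, |∫ r, F (t / W r) ∂ν - PhiG t| ≤ ε) (t : ℝ) :
    |F t - PhiG t| ≤ 2 * ε + 12 * η := by
  have hε : 0 ≤ ε := (abs_nonneg _).trans (hG 0)
  have hb1 : ∀ t, |F t - PhiG t| ≤ 1 := by
    intro t
    rw [abs_le]
    constructor <;> linarith [PhiG_nonneg t, PhiG_le_one t, hF0 t, hF1 t]
  rcases le_total (1 / 4) η with h | hη'
  · linarith [hb1 t]
  have hbdd : BddAbove (Set.range fun t => |F t - PhiG t|) := ⟨1, by rintro _ ⟨t, rfl⟩; exact hb1 t⟩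
  set D := ⨆ t, |F t - PhiG t| with hDdef
  have hle : ∀ t, |F t - PhiG t| ≤ D := fun t => le_ciSup hbdd t
  have hD : 0 ≤ D := (abs_nonneg _).trans (hle 0)
  have hFint : ∀ t, Integrable (fun r => F (t / W r)) ν := by
    intro t
    refine Integrable.of_bound (C := 1) ((hF.measurable.comp (measurable_const.div hW)).aestronglyMeasurable) ?_
    refine Filter.Eventually.of_forall (fun r => ?_)
    rw [Real.norm_eq_abs, abs_of_nonneg (hF0 _)]; exact hF1 _
  have key : ∀ t, |F t - PhiG t| ≤ (4 / 3) * (D / 4 + ε + 6 * η) := by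
    intro t
    -- factors
    have up : ∃ s : ℝ, 0 < s ∧ |s - 1| ≤ 2 * η ∧ ∀ w, 0 < w → |w - 1| ≤ 2 * η → t ≤ t * s / w := by
      rcases le_total 0 t with h | h
      · refine ⟨1 + 2 * η, by positivity, by rw [abs_of_nonneg] <;> linarith, fun w hw hw' => ?_⟩
        rw [le_div_iff₀ hw]
        have := (abs_le.1 hw').2
        gcongr; linarith
      · refine ⟨1 - 2 * η, by linarith, by rw [abs_of_nonpos] <;> linarith, fun w hw hw' => ?_⟩
        rw [le_div_iff₀ hw]
        have := (abs_le.1 hw').1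
        nlinarith
    have dn : ∃ s : ℝ, 0 < s ∧ |s - 1| ≤ 2 * η ∧ ∀ w, 0 < w → |w - 1| ≤ 2 * η → t * s / w ≤ t := by
      rcases le_total 0 t with h | h
      · refine ⟨1 - 2 * η, by linarith, by rw [abs_of_nonpos] <;> linarith, fun w hw hw' => ?_⟩
        rw [div_le_iff₀ hw]
        have := (abs_le.1 hw').1
        gcongr; linarith
      · refine ⟨1 + 2 * η, by positivity, by rw [abs_of_nonneg] <;> linarith, fun w hw hw' => ?_⟩
        rw [div_le_iff₀ hw]
        have := (abs_le.1 hw').2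
        nlinarith
    rcases le_total 0 (F t - PhiG t) with h | h
    · obtain ⟨s, hs0, hs1, hs⟩ := up
      have := demix_core ν W hW hpos η hη hη' hI hvar (fun r => F (t * s / W r)) (hFint _)
        (F t - PhiG t) D t s hD h hs1 hs0 (fun r h1 h2 => by
          have := hF (hs _ h2 h1); linarith) (fun r h2 => by
          have := (abs_le.1 (hle (t * s / W r))).1; linarith)
      have h3 := (abs_le.1 (hG (t * s))).2
      rw [abs_of_nonneg h]
      linarith
    · -- reflect
      obtain ⟨s, hs0, hs1, hs⟩ := dn
      have refl : ∀ x, PhiG (-x) = 1 - PhiG x := by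
        intro x
        have hm : (gaussianReal 0 1).map (fun y => -y) = gaussianReal 0 1 := by
          rw [gaussianReal_map_neg]; simp
        have : PhiG (-x) = (gaussianReal 0 1).real (Set.Iio x)ᶜ := by
          unfold PhiG
          conv_lhs => rw [← hm]
          rw [map_measureReal_apply measurable_neg measurableSet_Iic]
          congr 1
          ext y; simp
        rw [this, measureReal_compl measurableSet_Iio]
        simp only [probReal_univ]
        congr 1
        unfold PhiG
        have : NullSingletonClass (gaussianReal 0 1) := nullSingletonClass_gaussianReal one_ne_zero
        exact measureReal_congr Iio_ae_eq_Iic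
      have := demix_core ν W hW hpos η hη hη' hI hvar (fun r => 1 - F (t * s / W r)) ((integrable_const _).sub (hFint _))
        (-(F t - PhiG t)) D (-t) s hD (by linarith) hs1 hs0 (fun r h1 h2 => by
          have := hF (hs _ h2 h1); simp only [refl]; linarith) (fun r h2 => by
          have := (abs_le.1 (hle (t * s / W r))).2
          rw [neg_mul, neg_div, refl]; linarith)
      rw [integral_sub (integrable_const _) (hFint _), neg_mul, refl] at this
      simp at this
      have h3 := (abs_le.1 (hG (t * s))).1
      rw [abs_of_nonpos h]
      linarith
  have hDle : D ≤ (4 / 3) * (D / 4 + ε + 6 * η) := ciSup_le key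
  linarith [hle t]
noncomputable def kk (x : ℝ) (y : ℝ × ℝ) : ℂ :=
  (Set.Iio x).indicator (fun _ => (1 : ℂ)) y.1 - (Set.Iio x).indicator (fun _ => (1 : ℂ)) y.2

lemma kk_of_le {y : ℝ × ℝ} (h : y.1 ≤ y.2) (x : ℝ) :
    kk x y = (Set.Ioc y.1 y.2).indicator (fun _ => (1 : ℂ)) x := by
  simp only [kk, Set.indicator, Set.mem_Iio, Set.mem_Ioc]
  split_ifs <;> first | (exfalso; grind) | simp

lemma kk_of_ge {y : ℝ × ℝ} (h : y.2 ≤ y.1) (x : ℝ) :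
    kk x y = - (Set.Ioc y.2 y.1).indicator (fun _ => (1 : ℂ)) x := by
  simp only [kk, Set.indicator, Set.mem_Iio, Set.mem_Ioc]
  split_ifs <;> first | (exfalso; grind) | simp

lemma norm_kk (y : ℝ × ℝ) (x : ℝ) :
    ‖kk x y‖ = (Set.Ioc (min y.1 y.2) (max y.1 y.2)).indicator (fun _ => (1 : ℝ)) x := by
  rcases le_total y.1 y.2 with h | h
  · rw [kk_of_le h, min_eq_left h, max_eq_right h, norm_indicator_eq_indicator_norm]; simp
  · rw [kk_of_ge h, min_eq_right h, max_eq_left h, norm_neg, norm_indicator_eq_indicator_norm]; simp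

lemma integral_kk (y : ℝ × ℝ) (f : ℝ → ℂ) :
    ∫ x, f x * kk x y = ∫ x in y.1..y.2, f x := by
  rcases le_total y.1 y.2 with h | h
  · rw [intervalIntegral.integral_of_le h, ← integral_indicator measurableSet_Ioc]
    congr 1; ext x
    rw [kk_of_le h]; simp [Set.indicator]
  · rw [intervalIntegral.integral_of_ge h, ← integral_indicator measurableSet_Ioc, ← integral_neg]
    congr 1; ext x
    rw [kk_of_ge h]; simp [Set.indicator]

lemma measurable_kk : Measurable (fun z : ℝ × (ℝ × ℝ) => kk z.1 z.2) := by
  have h1 : Measurable (fun z : ℝ × (ℝ × ℝ) => (Set.Iio z.1).indicator (fun _ => (1 : ℂ)) z.2.1) := by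
    have : (fun z : ℝ × (ℝ × ℝ) => (Set.Iio z.1).indicator (fun _ => (1 : ℂ)) z.2.1)
      = {z : ℝ × (ℝ × ℝ) | z.2.1 < z.1}.indicator (fun _ => 1) := by
      ext z; simp [Set.indicator]
    rw [this]
    exact measurable_const.indicator (measurableSet_lt (by fun_prop) (by fun_prop))
  have h2 : Measurable (fun z : ℝ × (ℝ × ℝ) => (Set.Iio z.1).indicator (fun _ => (1 : ℂ)) z.2.2) := by
    have : (fun z : ℝ × (ℝ × ℝ) => (Set.Iio z.1).indicator (fun _ => (1 : ℂ)) z.2.2)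
      = {z : ℝ × (ℝ × ℝ) | z.2.2 < z.1}.indicator (fun _ => 1) := by
      ext z; simp [Set.indicator]
    rw [this]
    exact measurable_const.indicator (measurableSet_lt (by fun_prop) (by fun_prop))
  exact h1.sub h2

lemma integrable_kk (μ ν : Measure ℝ) [IsProbabilityMeasure μ] [IsProbabilityMeasure ν]
    (hμ : Integrable (fun x : ℝ => x) μ) (hν : Integrable (fun x : ℝ => x) ν)  :
    Integrable (fun z : ℝ × (ℝ × ℝ) => kk z.1 z.2) ((volume : Measure ℝ).prod (μ.prod ν)) := by
  rw [integrable_prod_iff' measurable_kk.aestronglyMeasurable]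
  constructor
  · refine Filter.Eventually.of_forall (fun y => ?_)
    have hm : Measurable (fun x => kk x y) := measurable_kk.comp (measurable_id.prodMk measurable_const)
    rw [← integrable_norm_iff hm.aestronglyMeasurable]
    simp only [norm_kk]
    exact (integrable_indicator_iff measurableSet_Ioc).2 (integrableOn_const (by simp))
  · have : (fun y : ℝ × ℝ => ∫ x, ‖kk x y‖) = fun y => |y.1 - y.2| := by
      ext y
      simp only [norm_kk]
      rw [integral_indicator_const _ measurableSet_Ioc]
      simp [max_sub_min_eq_abs, abs_sub_comm]
    simp only [this]
    exact ((hμ.comp_fst ν).sub (hν.comp_snd μ)).abs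

lemma continuous_Iio (μ : Measure ℝ) [IsProbabilityMeasure μ] [NullSingletonClass μ] :
    Continuous (fun x => μ.real (Set.Iio x)) := by
  have h : (fun x => μ.real (Set.Iio x)) = fun x => ∫ s, (Set.Iio x).indicator (fun _ => (1 : ℝ)) s ∂μ := by
    ext x
    rw [integral_indicator_const _ measurableSet_Iio]; simp
  rw [h, continuous_iff_continuousAt]
  intro x0
  refine continuousAt_of_dominated (bound := fun _ => 1) ?_ ?_ (integrable_const _) ?_
  · exact Filter.Eventually.of_forall (fun x => (measurable_const.indicator measurableSet_Iio).aestronglyMeasurable)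
  · refine Filter.Eventually.of_forall (fun x => Filter.Eventually.of_forall (fun s => ?_))
    simp only [Set.indicator]; split_ifs <;> simp
  · have : ∀ᵐ s ∂μ, s ≠ x0 := by
      rw [ae_iff]; simp
    filter_upwards [this] with s hs
    rcases lt_or_gt_of_ne hs with h | h
    · have : (fun x => (Set.Iio x).indicator (fun _ => (1 : ℝ)) s) =ᶠ[nhds x0] fun _ => 1 := by
        filter_upwards [lt_mem_nhds h] with x hx
        simp [hx]
      exact continuousAt_const.congr this.symm
    · have : (fun x => (Set.Iio x).indicator (fun _ => (1 : ℝ)) s) =ᶠ[nhds x0] fun _ => 0 := by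
        filter_upwards [gt_mem_nhds h] with x hx
        simp [le_of_lt hx]
      exact continuousAt_const.congr this.symm

lemma inv_bound (μ ν : Measure ℝ) [IsProbabilityMeasure μ] [IsProbabilityMeasure ν]
    [NullSingletonClass μ] [NullSingletonClass ν]
    (hμ : Integrable (fun x : ℝ => x) μ) (hν : Integrable (fun x : ℝ => x) ν)
    (b : ℝ → ℝ) (hb : Integrable b) (hb0 : ∀ t, 0 ≤ b t)
    (hbd : ∀ t, t ≠ 0 → ‖charFun μ t - charFun ν t‖ ≤ |t| * b t) (x : ℝ) :
    |μ.real (Set.Iic x) - ν.real (Set.Iic x)| ≤ ∫ t, b t := by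
  have e1 : μ.real (Set.Iic x) = μ.real (Set.Iio x) := measureReal_congr Iio_ae_eq_Iic.symm
  have e2 : ν.real (Set.Iic x) = ν.real (Set.Iio x) := measureReal_congr Iio_ae_eq_Iic.symm
  rw [e1, e2]
  set H : ℝ → ℂ := fun x => ((μ.real (Set.Iio x) - ν.real (Set.Iio x) : ℝ) : ℂ) with hH
  have hHc : Continuous H := Complex.continuous_ofReal.comp ((continuous_Iio μ).sub (continuous_Iio ν))
  have hHk : ∀ x, H x = ∫ y, kk x y ∂(μ.prod ν) := by
    intro x
    simp only [kk]
    have i1 : Integrable (fun y : ℝ => (Set.Iio x).indicator (fun _ => (1 : ℂ)) y) μ :=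
      (integrable_const _).indicator measurableSet_Iio
    have i2 : Integrable (fun y : ℝ => (Set.Iio x).indicator (fun _ => (1 : ℂ)) y) ν :=
      (integrable_const _).indicator measurableSet_Iio
    rw [integral_sub (i1.comp_fst ν) (i2.comp_snd μ),
      integral_fun_fst (μ := μ) (ν := ν) (fun y : ℝ => (Set.Iio x).indicator (fun _ => (1 : ℂ)) y),
      integral_fun_snd (μ := μ) (ν := ν) (fun y : ℝ => (Set.Iio x).indicator (fun _ => (1 : ℂ)) y),
      integral_indicator_const _ measurableSet_Iio, integral_indicator_const _ measurableSet_Iio]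
    simp [hH]
  have hki := integrable_kk μ ν hμ hν
  have hHi : Integrable H := by
    have := hki.integral_prod_left
    exact this.congr (Filter.Eventually.of_forall (fun x => (hHk x).symm))
  have hF : ∀ ξ : ℝ, ξ ≠ 0 → FourierTransform.fourier H ξ
      = (charFun ν (-2 * π * ξ) - charFun μ (-2 * π * ξ)) / ((-2 * π * ξ : ℝ) * Complex.I) := by
    intro ξ hξ
    rw [Real.fourier_eq']
    have s1 : ∀ v : ℝ, Complex.exp (↑(-2 * π * inner ℝ v ξ) * Complex.I) • H v
        = ∫ y, Complex.exp (((-2 * π * ξ : ℝ) * Complex.I) * v) * kk v y ∂(μ.prod ν) := by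
      intro v
      rw [integral_const_mul, ← hHk, smul_eq_mul]
      congr 2
      simp; ring
    simp_rw [s1]
    rw [integral_integral_swap]
    · simp_rw [integral_kk]
      have hc : ((-2 * π * ξ : ℝ) * Complex.I) ≠ 0 := by
        simp [hξ, Real.pi_ne_zero]
      simp_rw [integral_exp_mul_complex hc]
      rw [integral_div]
      congr 1
      have i1 : ∀ (m : Measure ℝ) [IsProbabilityMeasure m], Integrable (fun y : ℝ => Complex.exp (((-2 * π * ξ : ℝ) * Complex.I) * y)) m := by
        intro m _
        refine Integrable.of_bound (C := 1) (by fun_prop) (Filter.Eventually.of_forall (fun y => ?_))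
        rw [show ((-2 * π * ξ : ℝ) * Complex.I) * (y : ℂ) = ((-2 * π * ξ * y : ℝ) : ℂ) * Complex.I by push_cast; ring,
          Complex.norm_exp_ofReal_mul_I]
      rw [integral_sub ((i1 ν).comp_snd μ) ((i1 μ).comp_fst ν),
        integral_fun_fst (μ := μ) (ν := ν) (fun y : ℝ => Complex.exp (((-2 * π * ξ : ℝ) * Complex.I) * y)),
        integral_fun_snd (μ := μ) (ν := ν) (fun y : ℝ => Complex.exp (((-2 * π * ξ : ℝ) * Complex.I) * y)),
        charFun_apply_real, charFun_apply_real]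
      simp only [probReal_univ, one_smul]
      congr 1 <;> (congr 1; ext y; congr 1; push_cast; ring)
    · refine hki.bdd_mul (c := 1) (f := fun z : ℝ × (ℝ × ℝ) => Complex.exp (((-2 * π * ξ : ℝ) * Complex.I) * z.1)) (by fun_prop) (Filter.Eventually.of_forall (fun z => ?_))
      rw [show ((-2 * π * ξ : ℝ) * Complex.I) * (z.1 : ℂ) = ((-2 * π * ξ * z.1 : ℝ) : ℂ) * Complex.I by push_cast; ring,
          Complex.norm_exp_ofReal_mul_I]
  have h2pi : (-2 * π) ≠ 0 := by simp [Real.pi_ne_zero]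
  have hFb : ∀ᵐ ξ : ℝ, ‖FourierTransform.fourier H ξ‖ ≤ b (-2 * π * ξ) := by
    have : ∀ᵐ ξ : ℝ, ξ ≠ 0 := by rw [ae_iff]; simp
    filter_upwards [this] with ξ hξ
    have hne : -2 * π * ξ ≠ 0 := mul_ne_zero h2pi hξ
    rw [hF ξ hξ, norm_div, norm_sub_rev, norm_mul, Complex.norm_I, mul_one, Complex.norm_real,
      div_le_iff₀ (by positivity)]
    have := hbd _ hne
    rw [Real.norm_eq_abs]
    linarith
  have hbi : Integrable (fun ξ => b (-2 * π * ξ)) := hb.comp_mul_left' h2pi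
  have hFc : Continuous (FourierTransform.fourier H) := by
    exact VectorFourier.fourierIntegral_continuous continuous_fourierChar (by exact continuous_inner) hHi
  have hFi : Integrable (FourierTransform.fourier H) :=
    hbi.mono' hFc.aestronglyMeasurable hFb
  have hinv := congrFun (hHc.fourierInv_fourier_eq hHi hFi) x
  have hn : |μ.real (Set.Iio x) - ν.real (Set.Iio x)| = ‖H x‖ := by
    simp only [hH]; rw [Complex.norm_real, Real.norm_eq_abs]
  rw [hn, ← hinv, Real.fourierInv_eq']
  calc _ ≤ ∫ ξ, ‖Complex.exp (↑(2 * π * inner ℝ ξ x) * Complex.I) • FourierTransform.fourier H ξ‖ :=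
        norm_integral_le_integral_norm _
    _ = ∫ ξ, ‖FourierTransform.fourier H ξ‖ := by
        congr 1; ext ξ
        rw [norm_smul, Complex.norm_exp_ofReal_mul_I, one_mul]
    _ ≤ ∫ ξ, b (-2 * π * ξ) := integral_mono_ae hFi.norm hbi hFb
    _ = |(-2 * π)⁻¹| * ∫ t, b t := by
        rw [Measure.integral_comp_mul_left]; rfl
    _ ≤ 1 * ∫ t, b t := by
        gcongr
        · exact integral_nonneg hb0
        · rw [abs_inv]
          apply inv_le_one_of_one_le₀
          rw [abs_mul, abs_neg, abs_of_pos Real.pi_pos]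
          have := Real.pi_gt_three
          norm_num
          linarith
    _ = _ := one_mul _
lemma gamma_lower {n : ℕ} (θ : Fin n → ℝ) (hθ : ∑ k, θ k ^ 2 = 1) :
    1 ≤ (n : ℝ) * (∑ k, |θ k| ^ 3) ^ 2 := by
  have h1 : (∑ k, θ k ^ 2) ^ 2 ≤ (∑ k, |θ k|) * ∑ k, |θ k| ^ 3 := by
    apply Finset.sum_sq_le_sum_mul_sum_of_sq_le_mul
    · intro i _; positivity
    · intro i _; positivity
    · intro i _; rw [← sq_abs (θ i)]; apply le_of_eq; ring
  have h2 : (∑ k, |θ k|) ^ 2 ≤ (n : ℝ) * ∑ k, |θ k| ^ 2 := by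
    have := sq_sum_le_card_mul_sum_sq (s := Finset.univ) (f := fun k => |θ k|)
    simpa using this
  simp only [sq_abs, hθ] at h1 h2
  have h3 : 0 ≤ ∑ k, |θ k| ^ 3 := Finset.sum_nonneg (fun i _ => by positivity)
  have h4 : 0 ≤ ∑ k, |θ k| := Finset.sum_nonneg (fun i _ => by positivity)
  calc (1 : ℝ) = (1 ^ 2) ^ 2 := by norm_num
    _ ≤ ((∑ k, |θ k|) * ∑ k, |θ k| ^ 3) ^ 2 := by gcongr
    _ = (∑ k, |θ k|) ^ 2 * (∑ k, |θ k| ^ 3) ^ 2 := by ring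
    _ ≤ _ := by gcongr; linarith

lemma gamma_pos {n : ℕ} (θ : Fin n → ℝ) (hθ : ∑ k, θ k ^ 2 = 1) : 0 < ∑ k, |θ k| ^ 3 := by
  have h3 : 0 ≤ ∑ k, |θ k| ^ 3 := Finset.sum_nonneg (fun i _ => by positivity)
  rcases h3.eq_or_lt with h | h
  · have := gamma_lower θ hθ
    rw [← h] at this; norm_num at this
  · exact h

lemma prod_diff {ι : Type*} (s : Finset ι) (a b d : ι → ℝ) (hd : ∀ i, 0 < d i)
    (ha : ∀ i, |a i| ≤ d i) (hb : ∀ i, |b i| ≤ d i) :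
    |∏ i ∈ s, a i - ∏ i ∈ s, b i| ≤ (∏ i ∈ s, d i) * ∑ i ∈ s, |a i - b i| / d i := by
  classical
  induction s using Finset.induction_on with
  | empty => simp
  | insert k s hk ih =>
    rw [Finset.prod_insert hk, Finset.prod_insert hk, Finset.prod_insert hk, Finset.sum_insert hk]
    have hpa : |∏ i ∈ s, a i| ≤ ∏ i ∈ s, d i := by
      rw [Finset.abs_prod]; exact Finset.prod_le_prod (fun i _ => abs_nonneg _) (fun i _ => ha i)
    have e : a k * ∏ i ∈ s, a i - b k * ∏ i ∈ s, b i
      = (a k - b k) * ∏ i ∈ s, a i + b k * (∏ i ∈ s, a i - ∏ i ∈ s, b i) := by ring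
    rw [e]
    calc _ ≤ |a k - b k| * |∏ i ∈ s, a i| + |b k| * |∏ i ∈ s, a i - ∏ i ∈ s, b i| := by
          refine (abs_add_le _ _).trans ?_; rw [abs_mul, abs_mul]
      _ ≤ |a k - b k| * (∏ i ∈ s, d i) + d k * ((∏ i ∈ s, d i) * ∑ i ∈ s, |a i - b i| / d i) := by
          gcongr
          · exact (hd k).le
          · exact hb k
      _ = _ := by
          have := (hd k).ne'
          field_simp

lemma prod_one_add_ge {ι : Type*} (s : Finset ι) (f : ι → ℝ) (hf : ∀ i, 0 ≤ f i) :
    1 + ∑ i ∈ s, f i ≤ ∏ i ∈ s, (1 + f i) := by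
  classical
  induction s using Finset.induction_on with
  | empty => simp
  | insert k s hk ih =>
    rw [Finset.prod_insert hk, Finset.sum_insert hk]
    have : 0 ≤ ∑ i ∈ s, f i := Finset.sum_nonneg (fun i _ => hf i)
    nlinarith [hf k, mul_nonneg (hf k) this]

lemma an_low (φ : ℝ → ℝ) (M : ℝ) (hM : 1 / 2 ≤ M)
    (h1 : ∀ u, |φ u - (1 - u ^ 2 / 2)| ≤ M * |u| ^ 3) (h2 : ∀ u, 1 - u ^ 2 / 2 ≤ φ u)
    (h3 : ∀ u, |φ u| ≤ 1) (n : ℕ) (θ : Fin n → ℝ) (hθ : ∑ k, θ k ^ 2 = 1)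
    (hγ : ∑ k, |θ k| ^ 3 ≤ 1 / 8) (t : ℝ) (ht : M * (∑ k, |θ k| ^ 3) * |t| ≤ 1 / 8) :
    |∏ k, φ (θ k * t) - exp (-t ^ 2 / 2)|
      ≤ |t| * ((M + 2) * (∑ k, |θ k| ^ 3) * (t ^ 2 * exp (-(1 / 4) * t ^ 2))) := by
  have hd : ∀ u, |φ u| ≤ exp (-u ^ 2 / 2 + M * |u| ^ 3) := by
    intro u
    rcases le_total |u| 1 with h | h
    · have : 0 ≤ φ u := by
        have := h2 u
        have h5 : u ^ 2 ≤ 1 := by rw [← sq_abs]; nlinarith [abs_nonneg u]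
        linarith
      rw [abs_of_nonneg this]
      have h6 := (abs_le.1 (h1 u)).2
      have := add_one_le_exp (-u ^ 2 / 2 + M * |u| ^ 3)
      linarith
    · refine (h3 u).trans (one_le_exp ?_)
      have : |u| ^ 3 ≥ u ^ 2 := by rw [← sq_abs]; nlinarith [sq_nonneg |u|]
      nlinarith [sq_nonneg u]
  have hg : ∀ u : ℝ, |exp (-u ^ 2 / 2)| ≤ exp (-u ^ 2 / 2 + M * |u| ^ 3) := by
    intro u
    rw [abs_of_pos (exp_pos _)]
    apply exp_le_exp.2
    have : 0 ≤ M * |u| ^ 3 := by positivity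
    linarith
  have hdiff : ∀ u, |φ u - exp (-u ^ 2 / 2)| ≤ (M + 2) * |u| ^ 3 := by
    intro u
    have hu3 : 0 ≤ |u| ^ 3 := by positivity
    rcases le_total |u| 1 with h | h
    · have a1 : |φ u - exp (-u ^ 2 / 2)| ≤ |φ u - (1 - u ^ 2 / 2)| + |exp (-u ^ 2 / 2) - 1 - (-u ^ 2 / 2)| := by
        rw [show φ u - exp (-u ^ 2 / 2) = (φ u - (1 - u ^ 2 / 2)) - (exp (-u ^ 2 / 2) - 1 - (-u ^ 2 / 2)) by ring]
        exact abs_sub _ _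
      have h5 : u ^ 2 ≤ 1 := by rw [← sq_abs]; nlinarith [abs_nonneg u]
      have a2 := Real.abs_exp_sub_one_sub_id_le (x := -u ^ 2 / 2) (by
        rw [abs_le]; constructor <;> nlinarith [sq_nonneg u])
      have a3 : (-u ^ 2 / 2) ^ 2 ≤ |u| ^ 3 := by
        have : (-u ^ 2 / 2) ^ 2 = |u| ^ 3 * |u| / 4 := by
          rw [show (-u ^ 2 / 2) ^ 2 = (u ^ 2) ^ 2 / 4 by ring, ← sq_abs u]; ring
        rw [this]; nlinarith
      have := h1 u
      linarith
    · have a1 : |φ u - exp (-u ^ 2 / 2)| ≤ 2 := by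
        refine (abs_sub _ _).trans ?_
        rw [abs_of_pos (exp_pos _)]
        have : exp (-u ^ 2 / 2) ≤ 1 := exp_le_one_iff.2 (by nlinarith [sq_nonneg u])
        linarith [h3 u]
      have : 1 ≤ |u| ^ 3 := one_le_pow₀ h
      nlinarith
  set γ := ∑ k, |θ k| ^ 3 with hγdef
  have hγ0 : 0 ≤ γ := Finset.sum_nonneg (fun i _ => by positivity)
  have hprodg : exp (-t ^ 2 / 2) = ∏ k, exp (-(θ k * t) ^ 2 / 2) := by
    rw [← exp_sum]; congr 1
    have : ∑ k, -(θ k * t) ^ 2 / 2 = -((∑ k, θ k ^ 2) * t ^ 2) / 2 := by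
      rw [Finset.sum_mul, ← Finset.sum_neg_distrib, Finset.sum_div]
      exact Finset.sum_congr rfl (fun k _ => by ring)
    rw [this, hθ]; ring
  have hprodd : ∏ k, exp (-(θ k * t) ^ 2 / 2 + M * |θ k * t| ^ 3) = exp (-t ^ 2 / 2 + M * γ * |t| ^ 3) := by
    rw [← exp_sum]; congr 1
    have : ∑ k, (-(θ k * t) ^ 2 / 2 + M * |θ k * t| ^ 3) = -((∑ k, θ k ^ 2) * t ^ 2) / 2 + M * γ * |t| ^ 3 := by
      rw [Finset.sum_add_distrib, hγdef, Finset.sum_mul, ← Finset.sum_neg_distrib, Finset.sum_div,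
        Finset.mul_sum, Finset.sum_mul]
      congr 1
      · exact Finset.sum_congr rfl (fun k _ => by ring)
      · exact Finset.sum_congr rfl (fun k _ => by rw [abs_mul]; ring)
    rw [this, hθ]; ring
  have key := prod_diff Finset.univ (fun k => φ (θ k * t)) (fun k => exp (-(θ k * t) ^ 2 / 2))
    (fun k => exp (-(θ k * t) ^ 2 / 2 + M * |θ k * t| ^ 3)) (fun k => exp_pos _) (fun k => hd _) (fun k => hg _)
  rw [hprodd, ← hprodg] at key
  refine key.trans ?_
  have hsum : ∑ k, |φ (θ k * t) - exp (-(θ k * t) ^ 2 / 2)| / exp (-(θ k * t) ^ 2 / 2 + M * |θ k * t| ^ 3)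
      ≤ ∑ k, (M + 2) * (|θ k| ^ 3 * |t| ^ 3) * exp (t ^ 2 / 8) := by
    apply Finset.sum_le_sum
    intro k _
    rw [div_eq_mul_inv, ← exp_neg]
    have hk : |θ k| ≤ 1 / 2 := by
      have : |θ k| ^ 3 ≤ γ := Finset.single_le_sum (f := fun k => |θ k| ^ 3) (fun i _ => by positivity) (Finset.mem_univ k)
      by_contra hcon
      push Not at hcon
      have : (1 / 2 : ℝ) ^ 3 < |θ k| ^ 3 := by gcongr
      norm_num at this
      linarith
    gcongr
    · refine (hdiff _).trans (le_of_eq ?_)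
      rw [abs_mul]; ring
    · have : (θ k * t) ^ 2 ≤ t ^ 2 / 4 := by
        rw [mul_pow, ← sq_abs (θ k)]
        nlinarith [sq_nonneg t, abs_nonneg (θ k), mul_nonneg (sq_nonneg t) (by nlinarith [abs_nonneg (θ k)] : 0 ≤ 1 / 4 - |θ k| ^ 2)]
      have : 0 ≤ M * |θ k * t| ^ 3 := by positivity
      linarith
  have hsum2 : ∑ k, (M + 2) * (|θ k| ^ 3 * |t| ^ 3) * exp (t ^ 2 / 8) = (M + 2) * γ * |t| ^ 3 * exp (t ^ 2 / 8) := by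
    rw [hγdef, Finset.mul_sum, Finset.sum_mul, Finset.sum_mul]
    exact Finset.sum_congr rfl (fun k _ => by ring)
  rw [hsum2] at hsum
  calc _ ≤ exp (-t ^ 2 / 2 + M * γ * |t| ^ 3) * ((M + 2) * γ * |t| ^ 3 * exp (t ^ 2 / 8)) := by gcongr
    _ = (M + 2) * γ * |t| ^ 3 * exp (-t ^ 2 / 2 + M * γ * |t| ^ 3 + t ^ 2 / 8) := by rw [exp_add _ (t ^ 2 / 8)]; ring
    _ ≤ (M + 2) * γ * |t| ^ 3 * exp (-(1 / 4) * t ^ 2) := by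
        gcongr
        have : M * γ * |t| ^ 3 = (M * γ * |t|) * t ^ 2 := by rw [← sq_abs t]; ring
        rw [this]
        nlinarith [sq_nonneg t]
    _ = _ := by rw [← sq_abs t]; ring

lemma an_high (φ : ℝ → ℝ) (c : ℝ) (hc : 0 < c)
    (h4 : ∀ u, φ u ^ 2 * (1 + c * u ^ 2) ≤ 1) (n : ℕ) (θ : Fin n → ℝ) (hθ : ∑ k, θ k ^ 2 = 1)
    (t : ℝ) :
    |∏ k, φ (θ k * t) - exp (-t ^ 2 / 2)| * |t| ≤ (√c)⁻¹ + 1 := by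
  have hp1 : (∏ k, φ (θ k * t)) ^ 2 * (c * t ^ 2) ≤ 1 := by
    have e1 : ∏ k, (φ (θ k * t) ^ 2 * (1 + c * (θ k * t) ^ 2)) ≤ 1 :=
      Finset.prod_le_one (fun k _ => by positivity) (fun k _ => h4 _)
    rw [Finset.prod_mul_distrib, Finset.prod_pow] at e1
    have e2 := prod_one_add_ge Finset.univ (fun k => c * (θ k * t) ^ 2) (fun k => by positivity)
    have e3 : ∑ k, c * (θ k * t) ^ 2 = c * t ^ 2 := by
      have : ∑ k, c * (θ k * t) ^ 2 = c * ((∑ k, θ k ^ 2) * t ^ 2) := by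
        rw [Finset.sum_mul, Finset.mul_sum]
        exact Finset.sum_congr rfl (fun k _ => by ring)
      rw [this, hθ, one_mul]
    rw [e3] at e2
    refine le_trans ?_ e1
    gcongr
    linarith
  have hp2 : |∏ k, φ (θ k * t)| * |t| ≤ (√c)⁻¹ := by
    rw [← abs_mul]
    apply abs_le_of_sq_le_sq
    · rw [inv_pow, Real.sq_sqrt hc.le, ← one_div, le_div_iff₀ hc, mul_pow]
      linarith
    · positivity
  have hp3 : exp (-t ^ 2 / 2) * |t| ≤ 1 := by
    have := mul_exp_sq_le |t|
    rw [sq_abs] at this; linarith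
  calc _ ≤ (|∏ k, φ (θ k * t)| + exp (-t ^ 2 / 2)) * |t| := by
        gcongr
        refine (abs_sub _ _).trans ?_
        rw [abs_of_pos (exp_pos _)]
    _ ≤ _ := by linarith

lemma an_main (φ : ℝ → ℝ) (M c : ℝ) (hM : 1 / 2 ≤ M) (hc : 0 < c)
    (h1 : ∀ u, |φ u - (1 - u ^ 2 / 2)| ≤ M * |u| ^ 3) (h2 : ∀ u, 1 - u ^ 2 / 2 ≤ φ u)
    (h3 : ∀ u, |φ u| ≤ 1) (h4 : ∀ u, φ u ^ 2 * (1 + c * u ^ 2) ≤ 1) :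
    ∃ C : ℝ, 0 < C ∧ ∀ (n : ℕ) (θ : Fin n → ℝ), ∑ k, θ k ^ 2 = 1 → ∑ k, |θ k| ^ 3 ≤ 1 / 8 →
      ∃ b : ℝ → ℝ, Integrable b ∧ (∀ t, 0 ≤ b t) ∧ ∫ t, b t ≤ C * ∑ k, |θ k| ^ 3 ∧
        ∀ t, |∏ k, φ (θ k * t) - exp (-t ^ 2 / 2)| ≤ |t| * b t := by
  have hJi : Integrable (fun t : ℝ => t ^ 2 * exp (-(1 / 4) * t ^ 2)) := by
    have := integrable_rpow_mul_exp_neg_mul_sq (b := 1 / 4) (by norm_num) (s := 2) (by norm_num)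
    simpa using this
  set J := ∫ t : ℝ, t ^ 2 * exp (-(1 / 4) * t ^ 2) with hJ
  have hJ0 : 0 ≤ J := integral_nonneg (fun t => by positivity)
  set A := (√c)⁻¹ + 1 with hA
  have hA0 : 0 < A := by positivity
  refine ⟨(M + 2) * J + 16 * M * A * π, by positivity, fun n θ hθ hγ => ?_⟩
  set γ := ∑ k, |θ k| ^ 3 with hγdef
  have hγ0 : 0 < γ := gamma_pos θ hθ
  set S := 8 * M * γ with hS
  have hS0 : 0 < S := by positivity
  have hi2 : Integrable (fun t : ℝ => (1 + (S * t) ^ 2)⁻¹) :=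
    integrable_inv_one_add_sq.comp_mul_left' hS0.ne'
  refine ⟨fun t => (M + 2) * γ * (t ^ 2 * exp (-(1 / 4) * t ^ 2)) + 2 * A * S ^ 2 * (1 + (S * t) ^ 2)⁻¹,
    (hJi.const_mul _).add (hi2.const_mul _), fun t => by positivity, ?_, fun t => ?_⟩
  · rw [integral_add (hJi.const_mul _) (hi2.const_mul _), integral_const_mul, integral_const_mul,
      Measure.integral_comp_mul_left (fun x : ℝ => (1 + x ^ 2)⁻¹), integral_univ_inv_one_add_sq,
      abs_of_pos (inv_pos.2 hS0), smul_eq_mul]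
    apply le_of_eq
    rw [← hJ]
    field_simp
    rw [hS]; ring
  · rcases le_total (S * |t|) 1 with h | h
    · refine (an_low φ M hM h1 h2 h3 n θ hθ hγ t (by rw [← hγdef]; linarith)).trans ?_
      gcongr
      rw [← hγdef]
      have : 0 ≤ 2 * A * S ^ 2 * (1 + (S * t) ^ 2)⁻¹ := by positivity
      linarith
    · have ht : 0 < |t| := by
        by_contra hcon
        have : |t| = 0 := le_antisymm (not_lt.1 hcon) (abs_nonneg _)
        rw [this] at h; norm_num at h
      have hh := an_high φ c hc h4 n θ hθ t
      rw [← le_div_iff₀ ht] at hh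
      refine hh.trans ?_
      have e : A / |t| ≤ |t| * (2 * A * S ^ 2 * (1 + (S * t) ^ 2)⁻¹) := by
        rw [div_le_iff₀ ht]
        have h5 : 1 ≤ (S * |t|) ^ 2 := one_le_pow₀ h
        have h6 : (S * t) ^ 2 = (S * |t|) ^ 2 := by rw [mul_pow S t, mul_pow S |t|, sq_abs]
        rw [h6]
        have : |t| * (2 * A * S ^ 2 * (1 + (S * |t|) ^ 2)⁻¹) * |t| = A * (2 * (S * |t|) ^ 2 / (1 + (S * |t|) ^ 2)) := by
          field_simp
        rw [this]
        have h7 : 1 ≤ 2 * (S * |t|) ^ 2 / (1 + (S * |t|) ^ 2) := by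
          rw [le_div_iff₀ (by positivity)]; linarith
        nlinarith
      refine e.trans ?_
      gcongr
      have : 0 ≤ (M + 2) * γ * (t ^ 2 * exp (-(1 / 4) * t ^ 2)) := by positivity
      linarith
lemma cos_taylor (y : ℝ) : |cos y - (1 - y ^ 2 / 2)| ≤ |y| ^ 3 := by
  rcases le_total |y| 1 with h | h
  · refine (Real.cos_bound h).trans ?_
    have : 0 ≤ |y| ^ 3 := by positivity
    have e : |y| ^ 4 = |y| ^ 3 * |y| := by ring
    rw [e]; nlinarith
  · have h1 := Real.one_sub_sq_div_two_le_cos (x := y)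
    have h2 := Real.cos_le_one y
    rw [abs_of_nonneg (by linarith)]
    have : y ^ 2 ≤ |y| ^ 3 := by rw [← sq_abs]; nlinarith [sq_nonneg |y|]
    nlinarith [sq_nonneg y]

lemma integrable_cos (μ : Measure ℝ) [IsProbabilityMeasure μ] (u : ℝ) :
    Integrable (fun x => cos (u * x)) μ :=
  Integrable.of_bound (C := 1) (by fun_prop)
    (Filter.Eventually.of_forall (fun x => by rw [Real.norm_eq_abs]; exact Real.abs_cos_le_one _))

lemma phi_doubling (μ : Measure ℝ) [IsProbabilityMeasure μ] (u : ℝ) :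
    1 - ∫ x, cos (2 * u * x) ∂μ ≤ 4 * (1 - ∫ x, cos (u * x) ∂μ) := by
  have h : ∫ x, (4 * cos (u * x) - 3) ∂μ ≤ ∫ x, cos (2 * u * x) ∂μ := by
    apply integral_mono (((integrable_cos μ u).const_mul 4).sub (integrable_const _)) (integrable_cos μ _)
    intro x
    show 4 * cos (u * x) - 3 ≤ cos (2 * u * x)
    rw [mul_assoc, cos_two_mul]
    nlinarith [sq_nonneg (cos (u * x) - 1)]
  rw [integral_sub ((integrable_cos μ u).const_mul 4) (integrable_const _), integral_const_mul] at h
  simp at h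
  linarith

lemma phi_sq (μ : Measure ℝ) [IsProbabilityMeasure μ] (u : ℝ) :
    2 * (∫ x, cos (u * x) ∂μ) ^ 2 - 1 ≤ ∫ x, cos (2 * u * x) ∂μ := by
  set m := ∫ x, cos (u * x) ∂μ with hm
  have h : ∫ x, ((4 * m) * cos (u * x) - (2 * m ^ 2 + 1)) ∂μ ≤ ∫ x, cos (2 * u * x) ∂μ := by
    apply integral_mono (((integrable_cos μ u).const_mul _).sub (integrable_const _)) (integrable_cos μ _)
    intro x
    show (4 * m) * cos (u * x) - (2 * m ^ 2 + 1) ≤ cos (2 * u * x)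
    rw [mul_assoc 2 u x, cos_two_mul]
    nlinarith [sq_nonneg (cos (u * x) - m)]
  rw [integral_sub ((integrable_cos μ u).const_mul _) (integrable_const _), integral_const_mul] at h
  simp [← hm] at h
  linarith

lemma phi_pow (μ : Measure ℝ) [IsProbabilityMeasure μ] (u : ℝ) (m : ℕ) :
    1 - ∫ x, cos (2 ^ m * u * x) ∂μ ≤ 4 ^ m * (1 - ∫ x, cos (u * x) ∂μ) := by
  induction m with
  | zero => simp
  | succ m ih =>
    have := phi_doubling μ (2 ^ m * u)
    rw [← mul_assoc, ← pow_succ'] at this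
    rw [pow_succ' (4 : ℝ)]
    linarith

lemma phi_decay (μ : Measure ℝ) [IsProbabilityMeasure μ] (A : ℝ) (hA : 0 < A)
    (h : ∀ u, |∫ x, cos (u * x) ∂μ| * |u| ≤ A) (u : ℝ) :
    (∫ x, cos (u * x) ∂μ) ^ 2 * (1 + (1 / (16 * A ^ 2)) * u ^ 2) ≤ 1 := by
  have hbig : ∀ v, 2 * A ≤ |v| → ∫ x, cos (v * x) ∂μ ≤ 1 / 2 := by
    intro v hv
    have h1 := h v
    have h2 := le_abs_self (∫ x, cos (v * x) ∂μ)
    by_contra hcon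
    push Not at hcon
    nlinarith
  have hsmall : ∀ v, |v| ≤ 4 * A → v ^ 2 / (32 * A ^ 2) ≤ 1 - ∫ x, cos (v * x) ∂μ := by
    intro v hv
    rcases le_total (2 * A) |v| with h2 | h2
    · have := hbig v h2
      have : v ^ 2 / (32 * A ^ 2) ≤ 1 / 2 := by
        rw [div_le_iff₀ (by positivity), ← sq_abs]
        nlinarith [abs_nonneg v]
      linarith
    · rcases eq_or_ne v 0 with rfl | hv0
      · simp
      have hvp : 0 < |v| := abs_pos.2 hv0
      obtain ⟨m, hm1, hm2⟩ := exists_nat_pow_near (x := 2 * A / |v|) (y := 2)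
        (by rw [le_div_iff₀ hvp]; linarith) (by norm_num)
      rw [le_div_iff₀ hvp] at hm1
      rw [div_lt_iff₀ hvp] at hm2
      have h3 := phi_pow μ v (m + 1)
      have h4 := hbig (2 ^ (m + 1) * v) (by rw [abs_mul, abs_of_pos (by positivity)]; exact hm2.le)
      have h5 : (2 ^ (m + 1) * |v|) ≤ 4 * A := by rw [pow_succ]; linarith
      have h6 : (4 : ℝ) ^ (m + 1) * v ^ 2 ≤ 16 * A ^ 2 := by
        have : (4 : ℝ) ^ (m + 1) * v ^ 2 = (2 ^ (m + 1) * |v|) ^ 2 := by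
          rw [mul_pow, sq_abs, ← pow_mul, mul_comm (m + 1) 2, pow_mul]; norm_num
        rw [this]
        calc _ ≤ (4 * A) ^ 2 := by gcongr
          _ = _ := by ring
      have h7 : 1 / 2 ≤ 4 ^ (m + 1) * (1 - ∫ x, cos (v * x) ∂μ) := by linarith
      rw [div_le_iff₀ (by positivity)]
      have h8 : (0 : ℝ) < 4 ^ (m + 1) := by positivity
      have h9 : 0 ≤ 1 - ∫ x, cos (v * x) ∂μ := by
        by_contra hcon
        push Not at hcon
        nlinarith
      -- 4^(m+1) v^2 ≤ 16 A^2 ≤ 32 A^2 * 4^(m+1) * X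
      have h10 : 4 ^ (m + 1) * v ^ 2 ≤ 4 ^ (m + 1) * ((1 - ∫ x, cos (v * x) ∂μ) * (32 * A ^ 2)) := by
        have : 0 < A ^ 2 := by positivity
        nlinarith
      exact le_of_mul_le_mul_left h10 h8
  have hA2 : 0 < A ^ 2 := by positivity
  rcases le_total |u| (2 * A) with h2 | h2
  · have h3 := hsmall (2 * u) (by rw [abs_mul, abs_two]; linarith)
    have h4 := phi_sq μ u
    set q := 1 / (16 * A ^ 2) * u ^ 2 with hq
    have h5 : (2 * u) ^ 2 / (32 * A ^ 2) = 2 * q := by rw [hq]; field_simp; ring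
    rw [h5] at h3
    have hq0 : 0 ≤ q := by positivity
    have h6 : (∫ x, cos (u * x) ∂μ) ^ 2 ≤ 1 - q := by linarith
    nlinarith
  · have h3 := h u
    have h4 : (∫ x, cos (u * x) ∂μ) ^ 2 * u ^ 2 ≤ A ^ 2 := by
      rw [← mul_pow, ← sq_abs, abs_mul]; gcongr
    have h5 : 4 * A ^ 2 ≤ u ^ 2 := by rw [← sq_abs u]; nlinarith
    have h6 : (∫ x, cos (u * x) ∂μ) ^ 2 ≤ 1 / 4 := by
      by_contra hcon
      push Not at hcon
      nlinarith
    have h7 : (∫ x, cos (u * x) ∂μ) ^ 2 * (1 / (16 * A ^ 2) * u ^ 2) ≤ 1 / 16 := by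
      calc _ = ((∫ x, cos (u * x) ∂μ) ^ 2 * u ^ 2) / (16 * A ^ 2) := by ring
        _ ≤ A ^ 2 / (16 * A ^ 2) := by gcongr
        _ = _ := by field_simp
    linarith

lemma hyperplane_null {n : ℕ} (θ : Fin n → ℝ) (hθ : ∑ k, θ k ^ 2 = 1) (t : ℝ) :
    (volume : Measure (Fin n → ℝ)) {x | ∑ k, θ k * x k = t} = 0 := by
  let L : (Fin n → ℝ) →ₗ[ℝ] ℝ := ∑ k, θ k • LinearMap.proj k
  have hL : ∀ x, L x = ∑ k, θ k * x k := by intro x; simp [L]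
  have hLθ : L θ = 1 := by rw [hL, ← hθ]; exact Finset.sum_congr rfl (fun k _ => by ring)
  let S : AffineSubspace ℝ (Fin n → ℝ) := AffineSubspace.mk' (t • θ) (LinearMap.ker L)
  have hS : (S : Set (Fin n → ℝ)) = {x | ∑ k, θ k * x k = t} := by
    ext x
    simp only [S, SetLike.mem_coe, AffineSubspace.mem_mk', Set.mem_setOf_eq, LinearMap.mem_ker, vsub_eq_sub, map_sub, map_smul, hLθ, ← hL]
    simp [sub_eq_zero]
  rw [← hS]
  apply Measure.addHaar_affineSubspace
  intro htop
  have : (t + 1) • θ ∈ S := by rw [htop]; trivial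
  rw [← SetLike.mem_coe, hS] at this
  have h2 : L ((t + 1) • θ) = t := by rw [hL]; exact this
  rw [map_smul, hLθ] at h2
  simp at h2

theorem berry_esseen (μ : Measure ℝ) [IsProbabilityMeasure μ]
    (hac : ∀ n : ℕ, Measure.pi (fun _ : Fin n => μ) ≪ volume)
    (hi3 : Integrable (fun x => |x| ^ 3) μ) (hv : ∫ x, x ^ 2 ∂μ = 1)
    (hsin : ∀ u, ∫ x, sin (u * x) ∂μ = 0) (A : ℝ) (hA : 0 < A)
    (hdec : ∀ u, |∫ x, cos (u * x) ∂μ| * |u| ≤ A) :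
    ∃ C : ℝ, 0 < C ∧ ∀ (n : ℕ) (θ : Fin n → ℝ), ∑ k, θ k ^ 2 = 1 → ∀ t,
      |(Measure.pi (fun _ : Fin n => μ)).real {x | ∑ k, θ k * x k ≤ t} - PhiG t|
        ≤ C * ∑ k, |θ k| ^ 3 := by
  have hi2 : Integrable (fun x : ℝ => x ^ 2) μ := by
    by_contra hcon
    rw [integral_undef hcon] at hv; norm_num at hv
  have hi1 : Integrable (fun x : ℝ => x) μ := by
    refine ((integrable_const (1 : ℝ)).add hi2).mono' (by fun_prop) (Filter.Eventually.of_forall (fun x => ?_))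
    rw [Real.norm_eq_abs]
    simp only [Pi.add_apply]
    rw [← sq_abs]; nlinarith [sq_nonneg (|x| - 1)]
  set φ : ℝ → ℝ := fun u => ∫ x, cos (u * x) ∂μ with hφ
  set M := ∫ x, |x| ^ 3 ∂μ + 1 / 2 with hM
  have hM0 : 0 ≤ ∫ x, |x| ^ 3 ∂μ := integral_nonneg (fun x => by positivity)
  have iq : ∀ u : ℝ, Integrable (fun x : ℝ => 1 - (u * x) ^ 2 / 2) μ := by
    intro u
    simp_rw [mul_pow]
    exact (integrable_const _).sub ((hi2.const_mul _).div_const _)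
  have eq1 : ∀ u : ℝ, ∫ x, (1 - (u * x) ^ 2 / 2) ∂μ = 1 - u ^ 2 / 2 := by
    intro u
    simp_rw [mul_pow]
    rw [integral_sub (integrable_const _) ((hi2.const_mul _).div_const _), integral_div, integral_const_mul, hv]
    simp
  have h1 : ∀ u, |φ u - (1 - u ^ 2 / 2)| ≤ M * |u| ^ 3 := by
    intro u
    rw [hφ, ← eq1, ← integral_sub (integrable_cos μ u) (iq u)]
    calc _ ≤ ∫ x, |cos (u * x) - (1 - (u * x) ^ 2 / 2)| ∂μ := abs_integral_le_integral_abs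
      _ ≤ ∫ x, |u| ^ 3 * |x| ^ 3 ∂μ := by
          apply integral_mono ((integrable_cos μ u).sub (iq u)).abs (hi3.const_mul _)
          intro x
          show |cos (u * x) - (1 - (u * x) ^ 2 / 2)| ≤ |u| ^ 3 * |x| ^ 3
          rw [← mul_pow, ← abs_mul]; exact cos_taylor _
      _ = |u| ^ 3 * ∫ x, |x| ^ 3 ∂μ := integral_const_mul _ _
      _ ≤ _ := by
          rw [mul_comm]; gcongr; linarith
  have h2 : ∀ u, 1 - u ^ 2 / 2 ≤ φ u := by
    intro u
    rw [hφ, ← eq1]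
    exact integral_mono (iq u) (integrable_cos μ u) (fun x => Real.one_sub_sq_div_two_le_cos)
  have h3 : ∀ u, |φ u| ≤ 1 := by
    intro u
    calc _ ≤ ∫ x, |cos (u * x)| ∂μ := abs_integral_le_integral_abs
      _ ≤ ∫ x, 1 ∂μ := integral_mono (integrable_cos μ u).abs (integrable_const _) (fun x => Real.abs_cos_le_one _)
      _ = 1 := by simp
  obtain ⟨C, hC, hmain⟩ := an_main φ M (1 / (16 * A ^ 2)) (by linarith) (by positivity) h1 h2 h3
    (fun u => phi_decay μ A hA hdec u)
  refine ⟨C + 8, by positivity, fun n θ hθ t => ?_⟩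
  have hγ0 := gamma_pos θ hθ
  set P := Measure.pi (fun _ : Fin n => μ) with hP
  rcases le_total (1 / 8) (∑ k, |θ k| ^ 3) with hbig | hsmall
  · have : |P.real {x | ∑ k, θ k * x k ≤ t} - PhiG t| ≤ 1 := by
      have a1 : P.real {x | ∑ k, θ k * x k ≤ t} ≤ 1 := measureReal_le_one
      have a2 : 0 ≤ P.real {x | ∑ k, θ k * x k ≤ t} := measureReal_nonneg
      rw [abs_le]
      constructor <;> linarith [PhiG_nonneg t, PhiG_le_one t]
    nlinarith
  obtain ⟨b, hb, hb0, hbi, hbd⟩ := hmain n θ hθ hsmall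
  have hmeas : Measurable (fun x : Fin n → ℝ => ∑ k, θ k * x k) := by fun_prop
  have hprob : IsProbabilityMeasure (P.map (fun x => ∑ k, θ k * x k)) :=
    Measure.isProbabilityMeasure_map hmeas.aemeasurable
  have hatom : NullSingletonClass (P.map (fun x => ∑ k, θ k * x k)) := by
    constructor
    intro y
    rw [Measure.map_apply hmeas (measurableSet_singleton y)]
    exact hac n (hyperplane_null θ hθ y)
  have hgatom : NullSingletonClass (gaussianReal 0 1) := nullSingletonClass_gaussianReal one_ne_zero
  have hint : Integrable (fun x : ℝ => x) (P.map (fun x => ∑ k, θ k * x k)) := by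
    rw [integrable_map_measure (by fun_prop) hmeas.aemeasurable]
    exact integrable_finsetSum _ (fun k _ => (integrable_comp_eval (μ := fun _ : Fin n => μ) (i := k) hi1).const_mul (θ k))
  have hgint : Integrable (fun x : ℝ => x) (gaussianReal 0 1) := by
    have := memLp_id_gaussianReal (μ := 0) (v := 1) 1
    exact (this.integrable (by simp))
  have hcf1 : ∀ u : ℝ, charFun μ u = (φ u : ℂ) := by
    intro u
    rw [charFun_apply_real]
    have is : Integrable (fun x => sin (u * x)) μ :=
      Integrable.of_bound (C := 1) (by fun_prop)
        (Filter.Eventually.of_forall (fun x => by rw [Real.norm_eq_abs]; exact Real.abs_sin_le_one _))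
    have e : ∀ x : ℝ, Complex.exp (u * x * Complex.I) = ((cos (u * x) : ℝ) : ℂ) + ((sin (u * x) : ℝ) : ℂ) * Complex.I := by
      intro x
      rw [Complex.exp_mul_I]; push_cast; rfl
    simp_rw [e]
    rw [integral_add (integrable_cos μ u).ofReal (is.ofReal.mul_const _), integral_mul_const,
      integral_complex_ofReal, integral_complex_ofReal, hsin]
    simp [hφ]
  have hcf : ∀ u : ℝ, charFun (P.map (fun x => ∑ k, θ k * x k)) u = ((∏ k, φ (θ k * u) : ℝ) : ℂ) := by
    intro u
    rw [charFun_apply_real, integral_map hmeas.aemeasurable (by fun_prop)]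
    have e : ∀ x : Fin n → ℝ, Complex.exp (u * ((∑ k, θ k * x k : ℝ) : ℂ) * Complex.I)
        = ∏ k, Complex.exp (((θ k * u : ℝ) : ℂ) * x k * Complex.I) := by
      intro x
      rw [← Complex.exp_sum]
      congr 1
      push_cast
      rw [Finset.mul_sum, Finset.sum_mul]
      exact Finset.sum_congr rfl (fun k _ => by ring)
    simp_rw [e]
    rw [hP, integral_fintype_prod_eq_prod (fun k (y : ℝ) => Complex.exp (((θ k * u : ℝ) : ℂ) * y * Complex.I))]
    push_cast
    refine Finset.prod_congr rfl (fun k _ => ?_)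
    rw [← hcf1, charFun_apply_real]
    push_cast; rfl
  have hcg : ∀ u : ℝ, charFun (gaussianReal 0 1) u = ((exp (-u ^ 2 / 2) : ℝ) : ℂ) := by
    intro u
    rw [charFun_gaussianReal]; push_cast; congr 1; simp; ring
  have := inv_bound (P.map (fun x => ∑ k, θ k * x k)) (gaussianReal 0 1) hint hgint b hb hb0
    (fun u _ => by
      rw [hcf, hcg, ← Complex.ofReal_sub, Complex.norm_real, Real.norm_eq_abs]; exact hbd u) t
  rw [map_measureReal_apply hmeas measurableSet_Iic] at this
  have h5 : P.real {x | ∑ k, θ k * x k ≤ t} = P.real ((fun x => ∑ k, θ k * x k) ⁻¹' Set.Iic t) := rfl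
  rw [h5]
  refine this.trans (hbi.trans ?_)
  nlinarith

theorem integrable_of_comp_abs {f : ℝ → ℝ} (hf : IntegrableOn f (Set.Ioi 0)) :
    Integrable (fun x => f |x|) := by
  have hp : IntegrableOn (fun x => f |x|) (Set.Ioi 0) := by
    refine hf.congr_fun (fun x hx => ?_) measurableSet_Ioi
    simp only [abs_of_pos (Set.mem_Ioi.1 hx)]
  have int_Iic : IntegrableOn (fun x ↦ f |x|) (Set.Iic 0) := by
    rw [← Measure.map_neg_eq_self (volume : Measure ℝ)]
    let m : MeasurableEmbedding fun x : ℝ => -x := (Homeomorph.neg ℝ).measurableEmbedding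
    rw [m.integrableOn_map_iff]
    simp_rw [Function.comp_def, abs_neg, Set.neg_preimage, Set.neg_Iic, neg_zero]
    exact Iff.mpr integrableOn_Ici_iff_integrableOn_Ioi hp
  have := int_Iic.union hp
  rwa [Set.Iic_union_Ioi, integrableOn_univ] at this

theorem pi_withDensity_real {n : ℕ} (g : ℝ → ℝ) (hg0 : ∀ x, 0 ≤ g x) (hgi : Integrable g)
    [SigmaFinite ((volume : Measure ℝ).withDensity (fun x => ENNReal.ofReal (g x)))] :
    Measure.pi (fun _ : Fin n => (volume : Measure ℝ).withDensity (fun x => ENNReal.ofReal (g x)))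
      = (volume : Measure (Fin n → ℝ)).withDensity (fun x => ENNReal.ofReal (∏ i, g (x i))) := by
  apply Measure.pi_eq
  intro s hs
  rw [withDensity_apply _ (MeasurableSet.univ_pi hs)]
  have h1 : ∀ i, ((volume : Measure ℝ).withDensity (fun x => ENNReal.ofReal (g x))) (s i)
      = ENNReal.ofReal (∫ x, (s i).indicator g x) := by
    intro i
    rw [withDensity_apply _ (hs i), integral_indicator (hs i),
      ofReal_integral_eq_lintegral_ofReal hgi.integrableOn (Filter.Eventually.of_forall hg0)]
  simp_rw [h1]
  rw [← ENNReal.ofReal_prod_of_nonneg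
    (fun i _ => integral_nonneg fun x => Set.indicator_nonneg (fun _ _ => hg0 _) _)]
  rw [← integral_fintype_prod_volume_eq_prod (fun i x => (s i).indicator g x)]
  rw [ofReal_integral_eq_lintegral_ofReal]
  · rw [← lintegral_indicator (MeasurableSet.univ_pi hs)]
    congr 1; ext x
    by_cases hx : x ∈ Set.univ.pi s
    · rw [Set.indicator_of_mem hx]
      congr 1
      refine Finset.prod_congr rfl fun i _ => ?_
      rw [Set.indicator_of_mem (hx i (Set.mem_univ _))]
    · rw [Set.indicator_of_notMem hx]
      simp only [Set.mem_pi, Set.mem_univ, true_imp_iff, not_forall] at hx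
      obtain ⟨i, hi⟩ := hx
      rw [Finset.prod_eq_zero (Finset.mem_univ i) (Set.indicator_of_notMem hi _)]
      simp
  · exact Integrable.fintype_prod (fun i => hgi.indicator (hs i))
  · exact Filter.Eventually.of_forall fun x => Finset.prod_nonneg fun i _ =>
      Set.indicator_nonneg (fun _ _ => hg0 _) _

theorem cos_decay (p b : ℝ) (hp : 0 < p) (hb : 0 < b) (u : ℝ) :
    |∫ x, cos (u*x) * exp (-b * |x|^p)| * |u| ≤ 2 := by
  by_cases hu : u = 0
  · subst hu; simp
  have e1 : ∫ x, cos (u*x) * exp (-b * |x|^p)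
      = 2 * ∫ x in Set.Ioi (0:ℝ), cos (u*x) * exp (-b * x^p) := by
    rw [← integral_comp_abs (f := fun x => cos (u*x) * exp (-b * x^p))]
    congr 1; ext x
    congr 1
    rcases abs_choice x with h | h <;> rw [h]
    rw [mul_neg, cos_neg]
  have hi0 : IntegrableOn (fun x : ℝ => exp (-b * x^p)) (Set.Ioi 0) := by
    have := integrableOn_rpow_mul_exp_neg_mul_rpow (s := 0) (by norm_num) hp hb
    simpa using this
  have hi1 : IntegrableOn (fun x : ℝ => x^(p-1) * exp (-b * x^p)) (Set.Ioi 0) :=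
    integrableOn_rpow_mul_exp_neg_mul_rpow (s := p-1) (by linarith) hp hb
  have hI1 : ∫ x in Set.Ioi (0:ℝ), x^(p-1) * exp (-b * x^p) = 1/(b*p) := by
    rw [integral_rpow_mul_exp_neg_mul_rpow hp (by linarith) hb]
    have : (p - 1 + 1)/p = 1 := by field_simp; ring
    rw [neg_div, this, Gamma_one, rpow_neg_one]
    field_simp
  have hd : ∀ x ∈ Set.Ioi (0:ℝ), HasDerivAt (fun x : ℝ => exp (-b * x^p))
      (-(b*p) * (x^(p-1) * exp (-b * x^p))) x := by
    intro x hx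
    have := ((Real.hasDerivAt_rpow_const (x := x) (p := p) (Or.inl (ne_of_gt hx))).const_mul (-b)).exp
    convert this using 1
    ring
  have hs : ∀ x ∈ Set.Ioi (0:ℝ), HasDerivAt (fun x : ℝ => sin (u*x) / u) (cos (u*x)) x := by
    intro x hx
    have h : HasDerivAt (fun x : ℝ => sin (u*x) / u) (cos (u*x) * (u*1) / u) x :=
      (((hasDerivAt_id x).const_mul u).sin).div_const u
    rwa [mul_one, mul_div_assoc, div_self hu, mul_one] at h
  have hcont : Continuous (fun x : ℝ => exp (-b * x^p)) :=
    continuous_exp.comp (continuous_const.mul (continuous_id.rpow_const fun x => Or.inr hp.le))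
  have hbd : ∀ x : ℝ, |sin (u*x) / u| ≤ 1/|u| := by
    intro x
    rw [abs_div]
    gcongr
    exact abs_sin_le_one _
  have hiL : IntegrableOn (fun x : ℝ => (-(b*p) * (x^(p-1) * exp (-b * x^p))) * (sin (u*x)/u))
      (Set.Ioi 0) := by
    refine Integrable.mul_bdd (c := 1/|u|) (hi1.const_mul _) (by fun_prop) ?_
    exact Filter.Eventually.of_forall fun x => by rw [Real.norm_eq_abs]; exact hbd x
  have key := integral_Ioi_mul_deriv_eq_deriv_mul (a := 0) (a' := 0) (b' := 0) hd hs
    (by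
      refine Integrable.mul_bdd (c := 1) hi0 (by fun_prop) ?_
      exact Filter.Eventually.of_forall fun x => by rw [Real.norm_eq_abs]; exact abs_cos_le_one _)
    hiL
    (by
      have : Continuous ((fun x : ℝ => exp (-b * x^p)) * fun x => sin (u*x)/u) :=
        hcont.mul (by fun_prop)
      have h := (this.tendsto 0).mono_left (nhdsWithin_le_nhds (s := Set.Ioi 0))
      simpa using h)
    (by
      have h1 : Filter.Tendsto (fun x : ℝ => exp (-b * x^p)) Filter.atTop (nhds 0) := by
        refine tendsto_exp_atBot.comp ?_
        exact (tendsto_rpow_atTop hp).const_mul_atTop_of_neg (by linarith)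
      refine Filter.Tendsto.zero_mul_isBoundedUnder_le h1 ?_
      refine ⟨1/|u|, ?_⟩
      simp only [Filter.eventually_map]
      exact Filter.Eventually.of_forall fun x => by
        simp only [Function.comp, Real.norm_eq_abs]; exact hbd x)
  have e2 : ∫ x in Set.Ioi (0:ℝ), cos (u*x) * exp (-b * x^p)
      = - ∫ x in Set.Ioi (0:ℝ), (-(b*p) * (x^(p-1) * exp (-b * x^p))) * (sin (u*x)/u) := by
    rw [zero_sub, neg_zero, zero_sub] at key
    rw [← key]
    congr 1; ext x; ring
  have e3 : |∫ x in Set.Ioi (0:ℝ), (-(b*p) * (x^(p-1) * exp (-b * x^p))) * (sin (u*x)/u)|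
      ≤ 1/|u| := by
    calc _ ≤ ∫ x in Set.Ioi (0:ℝ), (b*p*(1/|u|)) * (x^(p-1) * exp (-b * x^p)) := by
          rw [← Real.norm_eq_abs]
          refine norm_integral_le_of_norm_le (hi1.const_mul _) ?_
          filter_upwards [ae_restrict_mem measurableSet_Ioi] with x hx
          have hx : 0 < x := hx
          have h0 : 0 ≤ x^(p-1) * exp (-b * x^p) := by positivity
          rw [Real.norm_eq_abs, abs_mul, abs_mul, abs_of_nonneg h0, abs_neg, abs_of_pos (mul_pos hb hp)]
          have := mul_le_mul_of_nonneg_left (hbd x) (mul_nonneg (mul_pos hb hp).le h0)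
          linarith
      _ = 1/|u| := by
          rw [integral_const_mul, hI1]
          field_simp
  rw [e1, e2, abs_mul, abs_neg, abs_two]
  have hu' : 0 < |u| := abs_pos.2 hu
  calc _ ≤ 2 * (1/|u|) * |u| := by gcongr
    _ = 2 := by field_simp

noncomputable def bP (p : ℝ) : ℝ := (Gamma (3/p) / Gamma (1/p)) ^ (p/2)

noncomputable def kP (p : ℝ) : ℝ := (∫ x : ℝ, exp (-(bP p) * |x|^p))⁻¹

noncomputable def gP (p : ℝ) (x : ℝ) : ℝ := kP p * exp (-(bP p) * |x|^p)

noncomputable def muP (p : ℝ) : Measure ℝ :=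
  (volume : Measure ℝ).withDensity (fun x => ENNReal.ofReal (gP p x))

theorem bP_pos (p : ℝ) (hp : 0 < p) : 0 < bP p := by
  unfold bP
  have h1 := Gamma_pos_of_pos (show 0 < 3/p by positivity)
  have h2 := Gamma_pos_of_pos (show 0 < 1/p by positivity)
  positivity

theorem int_abs_rpow (p q : ℝ) (hp : 0 < p) (hq : -1 < q) :
    Integrable (fun x : ℝ => |x|^q * exp (-(bP p) * |x|^p)) := by
  exact integrable_of_comp_abs (f := fun x => x^q * exp (-(bP p) * x^p))
    (integrableOn_rpow_mul_exp_neg_mul_rpow hq hp (bP_pos p hp))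

theorem int_abs_exp (p : ℝ) (hp : 0 < p) :
    Integrable (fun x : ℝ => exp (-(bP p) * |x|^p)) := by
  have := int_abs_rpow p 0 hp (by norm_num)
  simpa using this

theorem integral_abs_rpow (p q : ℝ) (hp : 0 < p) (hq : -1 < q) :
    ∫ x : ℝ, |x|^q * exp (-(bP p) * |x|^p)
      = 2 * ((bP p)^(-(q+1)/p) * (1/p) * Gamma ((q+1)/p)) := by
  rw [integral_comp_abs (f := fun x => x^q * exp (-(bP p) * x^p)),
    integral_rpow_mul_exp_neg_mul_rpow hp hq (bP_pos p hp)]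

theorem integral_exp_eq (p : ℝ) (hp : 0 < p) :
    ∫ x : ℝ, exp (-(bP p) * |x|^p)
      = 2 * ((bP p)^(-(1)/p) * (1/p) * Gamma (1/p)) := by
  have := integral_abs_rpow p 0 hp (by norm_num)
  simpa using this

theorem kP_pos (p : ℝ) (hp : 0 < p) : 0 < kP p := by
  unfold kP
  rw [integral_exp_eq p hp]
  have h2 := Gamma_pos_of_pos (show 0 < 1/p by positivity)
  have := bP_pos p hp
  positivity

theorem gP_nonneg (p : ℝ) (hp : 0 < p) (x : ℝ) : 0 ≤ gP p x := by
  unfold gP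
  have := kP_pos p hp
  positivity

theorem gP_meas (p : ℝ) : Measurable (gP p) := by
  unfold gP
  fun_prop

theorem gP_int (p : ℝ) (hp : 0 < p) : Integrable (gP p) :=
  (int_abs_exp p hp).const_mul _

theorem gP_integral (p : ℝ) (hp : 0 < p) : ∫ x, gP p x = 1 := by
  unfold gP
  rw [integral_const_mul]
  have h := kP_pos p hp
  unfold kP at h ⊢
  exact inv_mul_cancel₀ (by intro h0; rw [h0] at h; simp at h)

theorem muP_prob (p : ℝ) (hp : 0 < p) : IsProbabilityMeasure (muP p) := by
  constructor
  unfold muP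
  rw [withDensity_apply _ MeasurableSet.univ, Measure.restrict_univ,
    ← ofReal_integral_eq_lintegral_ofReal (gP_int p hp)
      (Filter.Eventually.of_forall (gP_nonneg p hp)), gP_integral p hp]
  simp

theorem muP_integral (p : ℝ) (hp : 0 < p) (f : ℝ → ℝ) :
    ∫ x, f x ∂(muP p) = ∫ x, gP p x * f x := by
  unfold muP
  rw [integral_withDensity_eq_integral_toReal_smul (gP_meas p).ennreal_ofReal
    (Filter.Eventually.of_forall fun x => ENNReal.ofReal_lt_top)]
  congr 1; ext x
  rw [ENNReal.toReal_ofReal (gP_nonneg p hp x), smul_eq_mul]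

theorem muP_integrable (p : ℝ) (hp : 0 < p) (f : ℝ → ℝ) (h : Integrable (fun x => gP p x * f x)) :
    Integrable f (muP p) := by
  unfold muP
  rw [integrable_withDensity_iff_integrable_smul' (gP_meas p).ennreal_ofReal
    (Filter.Eventually.of_forall fun x => ENNReal.ofReal_lt_top)]
  refine h.congr (Filter.Eventually.of_forall fun x => ?_)
  simp only [ENNReal.toReal_ofReal (gP_nonneg p hp x), smul_eq_mul]

theorem muP_cube (p : ℝ) (hp : 0 < p) : Integrable (fun x => |x|^3) (muP p) := by
  apply muP_integrable p hp
  refine ((int_abs_rpow p 3 hp (by norm_num)).const_mul (kP p)).congr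
    (Filter.Eventually.of_forall fun x => ?_)
  simp only [gP]
  have : |x|^(3:ℝ) = |x|^3 := by exact_mod_cast rpow_natCast |x| 3
  rw [this]; ring

theorem muP_sq (p : ℝ) (hp : 0 < p) : Integrable (fun x => x^2) (muP p) := by
  apply muP_integrable p hp
  refine ((int_abs_rpow p 2 hp (by norm_num)).const_mul (kP p)).congr
    (Filter.Eventually.of_forall fun x => ?_)
  simp only [gP]
  have : |x|^(2:ℝ) = |x|^2 := by exact_mod_cast rpow_natCast |x| 2
  rw [this, sq_abs]; ring

theorem muP_var (p : ℝ) (hp : 0 < p) : ∫ x, x^2 ∂(muP p) = 1 := by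
  rw [muP_integral p hp]
  have e : ∀ x : ℝ, gP p x * x^2 = kP p * (|x|^(2:ℝ) * exp (-(bP p) * |x|^p)) := by
    intro x
    simp only [gP]
    have : |x|^(2:ℝ) = |x|^2 := by exact_mod_cast rpow_natCast |x| 2
    rw [this, sq_abs]; ring
  simp_rw [e]
  rw [integral_const_mul, integral_abs_rpow p 2 hp (by norm_num), kP, integral_exp_eq p hp]
  have hb := bP_pos p hp
  have h1 := Gamma_pos_of_pos (show 0 < 3/p by positivity)
  have h2 := Gamma_pos_of_pos (show 0 < 1/p by positivity)
  have h3 : (bP p)^(-(2+1)/p) = (bP p)^(-1/p) * (Gamma (1/p) / Gamma (3/p)) := by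
    have : -(2+1)/p = -1/p + -(2/p) := by ring
    rw [this, rpow_add hb]
    congr 1
    unfold bP
    rw [← rpow_mul (by positivity), show p/2 * -(2/p) = -1 by field_simp, rpow_neg_one, inv_div]
  rw [h3, show (2+1)/p = 3/p by norm_num]
  have hb' : 0 < (bP p)^(-1/p) := by positivity
  field_simp

theorem muP_sin (p : ℝ) (hp : 0 < p) (u : ℝ) : ∫ x, sin (u*x) ∂(muP p) = 0 := by
  rw [muP_integral p hp]
  have h := integral_neg_eq_self (fun x => gP p x * sin (u*x)) (volume : Measure ℝ)
  have e : ∀ x, gP p (-x) * sin (u * -x) = -(gP p x * sin (u*x)) := by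
    intro x
    simp [gP]
  simp_rw [e] at h
  rw [integral_neg] at h
  linarith

theorem muP_cos (p : ℝ) (hp : 0 < p) (u : ℝ) : |∫ x, cos (u*x) ∂(muP p)| * |u| ≤ 2 * kP p := by
  rw [muP_integral p hp]
  have e : ∀ x, gP p x * cos (u * x) = kP p * (cos (u*x) * exp (-(bP p) * |x|^p)) := by
    intro x
    simp only [gP]; ring
  simp_rw [e]
  rw [integral_const_mul, abs_mul, abs_of_pos (kP_pos p hp)]
  have := mul_le_mul_of_nonneg_left (cos_decay p (bP p) hp (bP_pos p hp) u) (kP_pos p hp).le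
  linarith

theorem muP_pi (p : ℝ) (hp : 0 < p) (n : ℕ) : Measure.pi (fun _ : Fin n => muP p)
    = (volume : Measure (Fin n → ℝ)).withDensity (fun x => ENNReal.ofReal (∏ i, gP p (x i))) := by
  have := muP_prob p hp
  unfold muP at this ⊢
  exact pi_withDensity_real (gP p) (gP_nonneg p hp) (gP_int p hp)

theorem muP_berry (p : ℝ) (hp : 0 < p) :
    ∃ C, 0 < C ∧ ∀ (n : ℕ) (θ : Fin n → ℝ), ∑ k, θ k^2 = 1 → ∀ t,
      |(Measure.pi (fun _ : Fin n => muP p)).real {x | ∑ k, θ k * x k ≤ t} - PhiG t|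
        ≤ C * ∑ k, |θ k|^3 := by
  have := muP_prob p hp
  refine berry_esseen (muP p) (fun n => ?_) (muP_cube p hp) (muP_var p hp) (muP_sin p hp)
    (2 * kP p) (by have := kP_pos p hp; linarith) (muP_cos p hp)
  rw [muP_pi p hp n]
  exact withDensity_absolutelyContinuous _ _

theorem lintegral_smul_var {n : ℕ} (w : ℝ) (hw : 0 < w) (f : (Fin n → ℝ) → ENNReal)
    (hf : Measurable f) :
    ∫⁻ x, f x = ENNReal.ofReal (w^n) * ∫⁻ y, f (w • y) := by
  have h := Measure.map_addHaar_smul (volume : Measure (Fin n → ℝ)) hw.ne'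
  have h2 : ∫⁻ y, f (w • y) = ∫⁻ x, f x ∂(Measure.map (fun x => w • x) volume) := by
    rw [lintegral_map hf (by fun_prop)]
  have h3 : Measure.map (fun x : Fin n → ℝ => w • x) volume
    = ENNReal.ofReal |(w ^ n)⁻¹| • (volume : Measure (Fin n → ℝ)) := by
    simpa using h
  rw [h2, h3, lintegral_smul_measure, smul_eq_mul, ← mul_assoc,
    ← ENNReal.ofReal_mul (by positivity), abs_of_pos (by positivity),
    mul_inv_cancel₀ (by positivity)]
  simp

theorem layer_exp (b A s : ℝ) (hb : 0 < b) (hA : 0 ≤ A) (hs : 0 ≤ s) :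
    ENNReal.ofReal (A * exp (-b * s))
      = ∫⁻ r in Set.Ioi 0, ENNReal.ofReal (A * b * exp (-b * r)) *
          (Set.Ici s).indicator (fun _ => (1:ENNReal)) r := by
  have h1 : ∀ r, ENNReal.ofReal (A * b * exp (-b * r)) *
          (Set.Ici s).indicator (fun _ => (1:ENNReal)) r
        = (Set.Ici s).indicator (fun r => ENNReal.ofReal (A * b * exp (-b * r))) r := by
    intro r
    by_cases h : r ∈ Set.Ici s <;> simp [h]
  simp_rw [h1]
  rw [lintegral_indicator measurableSet_Ici, Measure.restrict_restrict measurableSet_Ici]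
  have h2 : (volume : Measure ℝ).restrict (Set.Ici s ∩ Set.Ioi 0) = volume.restrict (Set.Ioi s) := by
    rcases hs.eq_or_lt with h | h
    · rw [← h, Set.inter_eq_right.2 Set.Ioi_subset_Ici_self]
    · rw [Set.inter_eq_left.2 (Set.Ici_subset_Ioi.2 h)]
      exact (Measure.restrict_congr_set Ioi_ae_eq_Ici).symm
  rw [h2, ← ofReal_integral_eq_lintegral_ofReal]
  · rw [integral_const_mul, integral_exp_mul_Ioi (by linarith)]
    congr 1
    field_simp
  · exact ((integrableOn_exp_mul_Ioi (by linarith : -b < 0) s)).const_mul _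
  · exact Filter.Eventually.of_forall fun r => by positivity

theorem ball_mem {n : ℕ} (p c : ℝ) (hp : 0 < p) (hc : 0 < c) (r : ℝ) (hr : 0 < r) (y : Fin n → ℝ) :
    (∑ k, |((r^(1/p)/c) • y) k|^p ≤ r) ↔ y ∈ c • {x : Fin n → ℝ | ∑ k, |x k| ^ p ≤ 1} := by
  rw [Set.mem_smul_set_iff_inv_smul_mem₀ hc.ne']
  simp only [Set.mem_ofPred_eq, Pi.smul_apply, smul_eq_mul]
  have h1 : ∀ k, |r^(1/p)/c * y k|^p = r * |c⁻¹ * y k|^p := by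
    intro k
    have : r^(1/p)/c * y k = r^(1/p) * (c⁻¹ * y k) := by ring
    rw [this, abs_mul, mul_rpow (abs_nonneg _) (abs_nonneg _), abs_of_pos (by positivity),
      ← rpow_mul hr.le, one_div_mul_cancel hp.ne', rpow_one]
  simp_rw [h1]
  rw [← Finset.mul_sum]
  constructor
  · intro h; by_contra h'; push Not at h'; nlinarith
  · intro h; nlinarith

theorem mixture {n : ℕ} (p c : ℝ) (hp : 0 < p) (hc : 0 < c) (ρ : Measure (Fin n → ℝ))
    [IsProbabilityMeasure ρ]
    (hρ : ρ = (volume (c • {x : Fin n → ℝ | ∑ k, |x k| ^ p ≤ 1}))⁻¹ •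
            (volume : Measure (Fin n → ℝ)).restrict
              (c • {x : Fin n → ℝ | ∑ k, |x k| ^ p ≤ 1})) :
    ∃ K : ℝ, 0 < K ∧ ∀ f : (Fin n → ℝ) → ENNReal, Measurable f →
      ∫⁻ x, f x ∂(Measure.pi (fun _ : Fin n => muP p))
        = ∫⁻ r in Set.Ioi (0:ℝ), ENNReal.ofReal (K * (r^((n:ℝ)/p) * exp (-(bP p * r)))) *
            ∫⁻ x, f ((r^(1/p)/c) • x) ∂ρ := by
  set S := c • {x : Fin n → ℝ | ∑ k, |x k| ^ p ≤ 1} with hS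
  set V := volume S with hV
  have hSm : MeasurableSet S := by
    apply MeasurableSet.const_smul_of_ne_zero _ hc.ne'
    exact measurableSet_le (by fun_prop) measurable_const
  have hu : V⁻¹ * V = 1 := by
    have := measure_univ (μ := ρ)
    rw [hρ] at this
    simpa using this
  have hV0 : V ≠ 0 := by rintro h; rw [h] at hu; simp at hu
  have hVt : V ≠ ⊤ := by rintro h; rw [h] at hu; simp at hu
  have hVr : 0 < V.toReal := ENNReal.toReal_pos hV0 hVt
  have hk := kP_pos p hp
  have hb := bP_pos p hp
  refine ⟨(kP p)^n * bP p * V.toReal / c^n, by positivity, fun f hf => ?_⟩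
  have hprod : ∀ x : Fin n → ℝ, ∏ i, gP p (x i) = (kP p)^n * exp (-(bP p) * ∑ k, |x k|^p) := by
    intro x
    simp only [gP]
    rw [Finset.prod_mul_distrib, ← Real.exp_sum, Finset.mul_sum]
    simp
  have hgm : Measurable (fun x : Fin n → ℝ => ENNReal.ofReal (∏ i, gP p (x i))) :=
    (Finset.measurable_prod _ (fun i _ => (gP_meas p).comp (measurable_pi_apply i))).ennreal_ofReal
  rw [muP_pi p hp, lintegral_withDensity_eq_lintegral_mul _ hgm hf]
  have e1 : ∀ x : Fin n → ℝ, ((fun x : Fin n → ℝ => ENNReal.ofReal (∏ i, gP p (x i))) * f) x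
      = ∫⁻ r in Set.Ioi 0, (ENNReal.ofReal ((kP p)^n * bP p * exp (-(bP p) * r)) *
          (Set.Ici (∑ k, |x k|^p)).indicator (fun _ => (1:ENNReal)) r) * f x := by
    intro x
    rw [Pi.mul_apply, hprod, layer_exp (bP p) _ _ hb (by positivity)
      (Finset.sum_nonneg fun k _ => rpow_nonneg (abs_nonneg _) _), lintegral_mul_const]
    exact (by fun_prop : Measurable fun r => ENNReal.ofReal ((kP p)^n * bP p * exp (-(bP p) * r))).mul
      (measurable_const.indicator measurableSet_Ici)
  simp_rw [e1]
  have hset : MeasurableSet {z : (Fin n → ℝ) × ℝ | ∑ k, |z.1 k|^p ≤ z.2} :=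
    measurableSet_le (by fun_prop) measurable_snd
  rw [lintegral_lintegral_swap]
  · refine setLIntegral_congr_fun measurableSet_Ioi (fun r hr => ?_)
    have hr : 0 < r := hr
    have hw : 0 < r^(1/p)/c := by positivity
    have e2 : ∀ x : Fin n → ℝ, (ENNReal.ofReal ((kP p)^n * bP p * exp (-(bP p) * r)) *
          (Set.Ici (∑ k, |x k|^p)).indicator (fun _ => (1:ENNReal)) r) * f x
        = ENNReal.ofReal ((kP p)^n * bP p * exp (-(bP p) * r)) *
          ({x : Fin n → ℝ | ∑ k, |x k|^p ≤ r}.indicator f x) := by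
      intro x
      by_cases h : ∑ k, |x k|^p ≤ r <;> simp [Set.indicator, h]
    have hsm : MeasurableSet {x : Fin n → ℝ | ∑ k, |x k|^p ≤ r} :=
      measurableSet_le (by fun_prop) measurable_const
    simp_rw [e2]
    rw [lintegral_const_mul _ (hf.indicator hsm), lintegral_smul_var _ hw _ (hf.indicator hsm)]
    have e3 : ∀ y : Fin n → ℝ, ({x : Fin n → ℝ | ∑ k, |x k|^p ≤ r}.indicator f ((r^(1/p)/c) • y))
        = S.indicator (fun y => f ((r^(1/p)/c) • y)) y := by
      intro y
      have := ball_mem p c hp hc r hr y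
      by_cases h : y ∈ S
      · rw [Set.indicator_of_mem h, Set.indicator_of_mem]
        exact this.2 h
      · rw [Set.indicator_of_notMem h, Set.indicator_of_notMem]
        exact fun h' => h (this.1 h')
    simp_rw [e3]
    rw [lintegral_indicator hSm, hρ, lintegral_smul_measure, smul_eq_mul]
    have e4 : (kP p)^n * bP p * V.toReal / c^n * (r^((n:ℝ)/p) * exp (-(bP p * r)))
        = ((kP p)^n * bP p * exp (-(bP p) * r)) * ((r^(1/p)/c)^n) * V.toReal := by
      rw [div_pow, ← rpow_natCast (r^(1/p)) n, ← rpow_mul hr.le,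
        show 1/p*(n:ℝ) = n/p by ring, neg_mul]
      ring
    have e5 : ∀ A B : ℝ, 0 ≤ A → 0 ≤ B → ENNReal.ofReal (A * B * V.toReal)
        = ENNReal.ofReal A * (ENNReal.ofReal B * V) := by
      intro A B hA hB
      rw [ENNReal.ofReal_mul (by positivity), ENNReal.ofReal_mul hA, ENNReal.ofReal_toReal hVt,
        mul_assoc]
    rw [e4, e5 _ _ (by positivity) (by positivity)]
    rw [mul_assoc (ENNReal.ofReal (kP p ^ n * bP p * exp (-bP p * r))), mul_assoc (ENNReal.ofReal _) V]
    congr 2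
    rw [← mul_assoc, mul_comm V, hu, one_mul]
  · apply Measurable.aemeasurable
    have : (Function.uncurry fun (x : Fin n → ℝ) (r : ℝ) =>
        (ENNReal.ofReal ((kP p)^n * bP p * exp (-(bP p) * r)) *
          (Set.Ici (∑ k, |x k|^p)).indicator (fun _ => (1:ENNReal)) r) * f x)
      = fun z => (ENNReal.ofReal ((kP p)^n * bP p * exp (-(bP p) * z.2)) *
          {z : (Fin n → ℝ) × ℝ | ∑ k, |z.1 k|^p ≤ z.2}.indicator (fun _ => (1:ENNReal)) z) * f z.1 := by
      ext z
      simp [Function.uncurry, Set.indicator]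
    rw [this]
    refine Measurable.mul (Measurable.mul (by fun_prop) (measurable_const.indicator hset)) (by fun_prop)

theorem gamma_ratio (a h : ℝ) (ha : 1 < a) (hh : 0 < h) :
    Gamma (a + 2*h) * Gamma a ≤ Gamma (a + h)^2 * exp (h * (2*h+1) / (a-1)) := by
  have cv := convexOn_log_Gamma
  have step : ∀ x : ℝ, 0 < x → log (Gamma (x+1)) - log (Gamma x) = log x := by
    intro x hx
    rw [Gamma_add_one hx.ne', log_mul hx.ne' (Gamma_pos_of_pos hx).ne']
    ring
  have s1 := cv.slope_mono_adjacent (x := a+h) (y := a+2*h) (z := a+2*h+1)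
    (Set.mem_Ioi.2 (by linarith)) (Set.mem_Ioi.2 (by linarith)) (by linarith) (by linarith)
  have s2 := cv.slope_mono_adjacent (x := a-1) (y := a) (z := a+h)
    (Set.mem_Ioi.2 (by linarith)) (Set.mem_Ioi.2 (by linarith)) (by linarith) (by linarith)
  have t1 := step (a+2*h) (by linarith)
  have t2 := step (a-1) (by linarith)
  rw [sub_add_cancel] at t2
  simp only [Function.comp] at s1 s2
  rw [t1, show a + 2*h + 1 - (a+2*h) = 1 by ring, show a + 2*h - (a+h) = h by ring, div_one,
    div_le_iff₀ hh] at s1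
  rw [t2, show a - (a-1) = 1 by ring, show a + h - a = h by ring, div_one, le_div_iff₀ hh] at s2
  have g1 := Gamma_pos_of_pos (show 0 < a by linarith)
  have g2 := Gamma_pos_of_pos (show 0 < a + h by linarith)
  have g3 := Gamma_pos_of_pos (show 0 < a + 2*h by linarith)
  have l : log (a+2*h) - log (a-1) ≤ (2*h+1)/(a-1) := by
    rw [← log_div (by linarith) (by linarith)]
    have h1 := log_le_sub_one_of_pos (show 0 < (a+2*h)/(a-1) from div_pos (by linarith) (by linarith))
    have h2 : (a+2*h)/(a-1) - 1 = (2*h+1)/(a-1) := by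
      have : a - 1 ≠ 0 := by linarith
      field_simp; ring
    linarith
  have l2 := mul_le_mul_of_nonneg_left l hh.le
  rw [← log_le_log_iff (by positivity) (by positivity), log_mul g3.ne' g1.ne',
    log_mul (by positivity) (exp_pos _).ne', log_exp, log_pow, mul_div_assoc]
  push_cast
  linarith

noncomputable def nuP (n : ℕ) (p K : ℝ) : Measure ℝ :=
  ((volume : Measure ℝ).restrict (Set.Ioi 0)).withDensity
    (fun r => ENNReal.ofReal (K * (r^((n:ℝ)/p) * exp (-(bP p * r)))))

theorem nuP_meas (n : ℕ) (p K : ℝ) :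
    Measurable (fun r : ℝ => ENNReal.ofReal (K * (r^((n:ℝ)/p) * exp (-(bP p * r))))) := by
  fun_prop

theorem nuP_pos (n : ℕ) (p K : ℝ) : ∀ᵐ r ∂(nuP n p K), 0 < r := by
  unfold nuP
  exact (withDensity_absolutelyContinuous _ _).ae_le (ae_restrict_mem measurableSet_Ioi)

theorem nuP_moment (n : ℕ) (p K q : ℝ) (hp : 0 < p) (hK : 0 < K) (hq : 0 ≤ q) :
    Integrable (fun r : ℝ => r^q) (nuP n p K) ∧
    ∫ r, r^q ∂(nuP n p K) = K * ((1/bP p)^(1+n/p+q) * Gamma (1+n/p+q)) := by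
  have hb := bP_pos p hp
  have hn : (0:ℝ) ≤ n/p := by positivity
  have e : ∀ r ∈ Set.Ioi (0:ℝ),
      (ENNReal.ofReal (K * (r^((n:ℝ)/p) * exp (-(bP p * r))))).toReal • r^q
      = K * (r^((1+n/p+q)-1) * exp (-(bP p * r))) := by
    intro r hr
    have hr : 0 < r := hr
    rw [ENNReal.toReal_ofReal (by positivity), smul_eq_mul,
      show (1+(n:ℝ)/p+q)-1 = n/p+q by ring, rpow_add hr]
    ring
  constructor
  · unfold nuP
    rw [integrable_withDensity_iff_integrable_smul' (nuP_meas n p K)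
      (Filter.Eventually.of_forall fun x => ENNReal.ofReal_lt_top)]
    have h := integrableOn_rpow_mul_exp_neg_mul_rpow (s := (1+n/p+q)-1) (p := 1) (b := bP p)
      (by linarith) one_pos hb
    refine (h.const_mul K).congr ?_
    filter_upwards [ae_restrict_mem measurableSet_Ioi] with r hr
    rw [e r hr]
    simp
  · unfold nuP
    rw [integral_withDensity_eq_integral_toReal_smul (nuP_meas n p K)
      (Filter.Eventually.of_forall fun x => ENNReal.ofReal_lt_top),
      setIntegral_congr_fun measurableSet_Ioi e, integral_const_mul,
      integral_rpow_mul_exp_neg_mul_Ioi (by linarith) hb]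

theorem nuP_conc (n : ℕ) (hn : 0 < n) (p K c : ℝ) (hp : 0 < p) (hK : 0 < K) (hc : 0 < c)
    [IsProbabilityMeasure (nuP n p K)]
    (h2 : ∫ r, (r^(1/p)/c)^2 ∂(nuP n p K) = 1) :
    Integrable (fun r : ℝ => (r^(1/p)/c - 1)^2) (nuP n p K) ∧
    ∫ r, (r^(1/p)/c - 1)^2 ∂(nuP n p K) ≤ 2*(4/p+1) * exp (2*(4/p+1)) / n := by
  have hb := bP_pos p hp
  have hnr : (1:ℝ) ≤ n := by exact_mod_cast hn
  have hpos := nuP_pos n p K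
  obtain ⟨i0, m0⟩ := nuP_moment n p K 0 hp hK le_rfl
  obtain ⟨i1, m1⟩ := nuP_moment n p K (2/p) hp hK (by positivity)
  obtain ⟨i2, m2⟩ := nuP_moment n p K (2*(2/p)) hp hK (by positivity)
  have e2 : ∀ᵐ r ∂(nuP n p K), (r^(1/p)/c)^2 = r^(2/p) / c^2 := by
    filter_upwards [hpos] with r hr
    rw [div_pow, ← rpow_natCast (r^(1/p)) 2, ← rpow_mul hr.le]
    congr 2; push_cast; ring
  have e4 : ∀ᵐ r ∂(nuP n p K), (r^(1/p)/c)^4 = r^(2*(2/p)) / c^4 := by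
    filter_upwards [hpos] with r hr
    rw [div_pow, ← rpow_natCast (r^(1/p)) 4, ← rpow_mul hr.le]
    congr 2; push_cast; ring
  have I2 : Integrable (fun r : ℝ => (r^(1/p)/c)^2) (nuP n p K) :=
    (i1.div_const (c^2)).congr (by filter_upwards [e2] with r hr; rw [hr])
  have I4 : Integrable (fun r : ℝ => (r^(1/p)/c)^4) (nuP n p K) :=
    (i2.div_const (c^4)).congr (by filter_upwards [e4] with r hr; rw [hr])
  have hM1 : ∫ r, r^(2/p) ∂(nuP n p K) = c^2 := by
    rw [integral_congr_ae e2, integral_div] at h2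
    field_simp at h2
    exact h2
  have hM0 : ∫ r, r^(0:ℝ) ∂(nuP n p K) = 1 := by simp
  have h4 : ∫ r, (r^(1/p)/c)^4 ∂(nuP n p K) = (∫ r, r^(2*(2/p)) ∂(nuP n p K)) / c^4 := by
    rw [integral_congr_ae e4, integral_div]
  have hratio := gamma_ratio (1+n/p) (2/p) (by have : 0 < (n:ℝ)/p := by positivity
                                               linarith) (by positivity)
  have hex : 2/p * (2*(2/p)+1) / (1 + (n:ℝ)/p - 1) = 2*(4/p+1)/n := by
    have hn0 : (n:ℝ) ≠ 0 := by linarith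
    rw [add_sub_cancel_left]
    field_simp; ring
  rw [hex] at hratio
  have h4b : ∫ r, (r^(1/p)/c)^4 ∂(nuP n p K) ≤ exp (2*(4/p+1)/n) := by
    rw [h4, div_le_iff₀ (by positivity)]
    rw [hM0] at m0
    rw [hM1] at m1
    have hc4 : c^4 = (c^2)^2 := by ring
    have hB : ∀ q, (1/bP p)^(1+n/p+q) = (1/bP p)^(1+n/p) * (1/bP p)^q := fun q =>
      rpow_add (by positivity) _ _
    rw [m2, hc4, m1]
    rw [hB, rpow_zero, mul_one, add_zero] at m0
    rw [hB, hB, show (1/bP p)^(2*(2/p)) = ((1/bP p)^(2/p))^2 by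
      rw [← rpow_natCast ((1/bP p)^(2/p)) 2, ← rpow_mul (by positivity)]; congr 1; push_cast; ring]
    have hβ : 0 < (1/bP p)^(1+(n:ℝ)/p) := by positivity
    have hγ : 0 < (1/bP p)^(2/p) := by positivity
    generalize (1/bP p)^(1+(n:ℝ)/p) = β at *
    generalize (1/bP p)^(2/p) = γ at *
    have hg0 : 0 < Gamma (1+(n:ℝ)/p) := Gamma_pos_of_pos (by positivity)
    generalize Gamma (1+(n:ℝ)/p) = G0 at *
    generalize Gamma (1+(n:ℝ)/p + 2/p) = G1 at *
    generalize Gamma (1+(n:ℝ)/p + 2*(2/p)) = G2 at *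
    have hmul := mul_le_mul_of_nonneg_left hratio (show 0 ≤ K^2 * β^2 * γ^2 by positivity)
    calc K * (β * γ^2 * G2) = (K * (β * γ^2 * G2)) * (K * (β * G0)) := by rw [← m0, mul_one]
      _ = K^2 * β^2 * γ^2 * (G2 * G0) := by ring
      _ ≤ _ := hmul
      _ = _ := by ring
  have hexp : exp (2*(4/p+1)/n) - 1 ≤ 2*(4/p+1) * exp (2*(4/p+1)) / n := by
    have hy : (0:ℝ) ≤ 2*(4/p+1)/n := by positivity
    have hy2 : 2*(4/p+1)/n ≤ 2*(4/p+1) := div_le_self (by positivity) hnr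
    set y := 2*(4/p+1)/n with hydef
    have h1 : exp y - 1 ≤ y * exp y := by
      have := add_one_le_exp (-y)
      have h3 : exp (-y) * exp y = 1 := by rw [← exp_add]; simp
      nlinarith [exp_pos y]
    have h2 : y * exp y ≤ y * exp (2*(4/p+1)) := by gcongr
    have h3 : y * exp (2*(4/p+1)) = 2*(4/p+1) * exp (2*(4/p+1)) / n := by rw [hydef]; ring
    linarith
  have I : Integrable (fun r : ℝ => (r^(1/p)/c)^4 - 2 * (r^(1/p)/c)^2 + 1) (nuP n p K) :=
    (I4.sub (I2.const_mul 2)).add (integrable_const 1)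
  have hle : ∀ᵐ r ∂(nuP n p K), (r^(1/p)/c - 1)^2 ≤ (r^(1/p)/c)^4 - 2 * (r^(1/p)/c)^2 + 1 := by
    filter_upwards [hpos] with r hr
    have : 0 ≤ r^(1/p)/c := by positivity
    generalize r^(1/p)/c = w at *
    nlinarith [mul_nonneg (sq_nonneg (w-1)) (mul_nonneg this (by linarith : 0 ≤ w + 2))]
  have Iw : Integrable (fun r : ℝ => (r^(1/p)/c - 1)^2) (nuP n p K) := by
    refine I.mono' (Measurable.aestronglyMeasurable (by fun_prop)) ?_
    filter_upwards [hle] with r hr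
    rw [Real.norm_eq_abs, abs_of_nonneg (sq_nonneg _)]
    exact hr
  refine ⟨Iw, (integral_mono_ae Iw I hle).trans ?_⟩
  have I5 : Integrable (fun r : ℝ => (r^(1/p)/c)^4 - 2 * (r^(1/p)/c)^2) (nuP n p K) :=
    I4.sub (I2.const_mul 2)
  rw [integral_add I5 (integrable_const 1), integral_sub I4 (I2.const_mul 2),
    integral_const_mul, h2]
  simp only [integral_const, probReal_univ, smul_eq_mul]
  linarith

theorem lp_core (p : ℝ) (hp : 0 < p) (CB : ℝ)
    (hCB : ∀ (n : ℕ) (θ : Fin n → ℝ), ∑ k, θ k^2 = 1 → ∀ t,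
      |(Measure.pi (fun _ : Fin n => muP p)).real {x | ∑ k, θ k * x k ≤ t} - PhiG t|
        ≤ CB * ∑ k, |θ k|^3)
    (n : ℕ) (c : ℝ) (hc : 0 < c) (ρ : Measure (Fin n → ℝ)) [IsProbabilityMeasure ρ]
    (hρ : ρ = (volume (c • {x : Fin n → ℝ | ∑ k, |x k| ^ p ≤ 1}))⁻¹ •
            (volume : Measure (Fin n → ℝ)).restrict
              (c • {x : Fin n → ℝ | ∑ k, |x k| ^ p ≤ 1}))
    (hiso : ∀ i, ∫ x, x i * x i ∂ρ = 1)
    (θ : Fin n → ℝ) (hθ : ∑ k, θ k^2 = 1) (t : ℝ) :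
    |ρ.real {x | ∑ k, θ k * x k ≤ t} - PhiG t|
      ≤ (2 * CB + 12 * √(2*(4/p+1) * exp (2*(4/p+1)))) * ∑ k, |θ k|^3 := by
  have hpr := muP_prob p hp
  have hn : 0 < n := by
    rcases Nat.eq_zero_or_pos n with h | h
    · subst h; simp at hθ
    · exact h
  obtain ⟨K, hK, hmix⟩ := mixture p c hp hc ρ hρ
  have hmix' : ∀ f : (Fin n → ℝ) → ENNReal, Measurable f →
      ∫⁻ x, f x ∂(Measure.pi (fun _ : Fin n => muP p))
        = ∫⁻ r, ∫⁻ x, f ((r^(1/p)/c) • x) ∂ρ ∂(nuP n p K) := by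
    intro f hf
    rw [hmix f hf, nuP, lintegral_withDensity_eq_lintegral_mul _ (nuP_meas n p K)]
    · rfl
    · refine Measurable.lintegral_prod_right' (f := fun z : ℝ × (Fin n → ℝ) => f ((z.1^(1/p)/c) • z.2)) ?_
      fun_prop
  have hprob : IsProbabilityMeasure (nuP n p K) := by
    constructor
    have := hmix' (fun _ => 1) measurable_const
    simpa using this.symm
  have hpos := nuP_pos n p K
  have hW : Measurable (fun r : ℝ => r^(1/p)/c) := by fun_prop
  have hWpos : ∀ᵐ r ∂(nuP n p K), 0 < r^(1/p)/c := by
    filter_upwards [hpos] with r hr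
    positivity
  -- second moment
  have h2 : ∫ r, (r^(1/p)/c)^2 ∂(nuP n p K) = 1 := by
    let i : Fin n := ⟨0, hn⟩
    have hm := hmix' (fun x => ENNReal.ofReal (x i ^2)) (by fun_prop)
    have hl : ∫⁻ x, ENNReal.ofReal (x i ^2) ∂(Measure.pi (fun _ : Fin n => muP p)) = 1 := by
      have mp := measurePreserving_eval (fun _ : Fin n => muP p) i
      have := mp.lintegral_comp (f := fun y => ENNReal.ofReal (y^2)) (by fun_prop)
      simp only [Function.eval] at this
      rw [this, ← ofReal_integral_eq_lintegral_ofReal (muP_sq p hp)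
        (Filter.Eventually.of_forall fun x => sq_nonneg x), muP_var p hp, ENNReal.ofReal_one]
    have hI : Integrable (fun x : Fin n → ℝ => x i ^2) ρ := by
      by_contra h
      have h3 := hiso i
      simp_rw [← sq] at h3
      rw [integral_undef h] at h3
      simp at h3
    have hr : ∫⁻ x, ENNReal.ofReal (x i ^2) ∂ρ = 1 := by
      rw [← ofReal_integral_eq_lintegral_ofReal hI
        (Filter.Eventually.of_forall fun x => sq_nonneg _)]
      have h3 := hiso i
      simp_rw [← sq] at h3
      rw [h3, ENNReal.ofReal_one]
    have e : ∀ r : ℝ, ∫⁻ x, ENNReal.ofReal (((r^(1/p)/c) • x) i ^2) ∂ρ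
        = ENNReal.ofReal ((r^(1/p)/c)^2) := by
      intro r
      simp only [Pi.smul_apply, smul_eq_mul, mul_pow]
      simp_rw [ENNReal.ofReal_mul (sq_nonneg (r^(1/p)/c))]
      rw [lintegral_const_mul _ (by fun_prop), hr, mul_one]
    rw [hl] at hm
    simp_rw [e] at hm
    rw [integral_eq_lintegral_of_nonneg_ae (Filter.Eventually.of_forall fun r => sq_nonneg _)
      (Measurable.aestronglyMeasurable (by fun_prop)), ← hm]
    simp
  obtain ⟨hI, hvar⟩ := nuP_conc n hn p K c hp hK hc h2
  set D := 2*(4/p+1) * exp (2*(4/p+1)) with hD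
  have hDpos : 0 < D := by positivity
  have hnr : (0:ℝ) < n := by exact_mod_cast hn
  have hgl := gamma_lower θ hθ
  have hgp := gamma_pos θ hθ
  set T := ∑ k, |θ k|^3 with hT
  have hη : 0 < √D * T := by positivity
  have hvar' : ∫ r, (r^(1/p)/c - 1)^2 ∂(nuP n p K) ≤ (√D * T)^2 := by
    refine hvar.trans ?_
    rw [mul_pow, sq_sqrt hDpos.le, div_le_iff₀ hnr]
    nlinarith
  let F : ℝ → ℝ := fun s => ρ.real {x | ∑ k, θ k * x k ≤ s}
  have hF : Monotone F := fun a b hab => measureReal_mono (fun x hx => le_trans hx hab)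
  have hG : ∀ s, |∫ r, F (s / (r^(1/p)/c)) ∂(nuP n p K) - PhiG s| ≤ CB * T := by
    intro s
    have key : (Measure.pi (fun _ : Fin n => muP p)).real {x | ∑ k, θ k * x k ≤ s}
        = ∫ r, F (s / (r^(1/p)/c)) ∂(nuP n p K) := by
      have hsm : ∀ s, MeasurableSet {x : Fin n → ℝ | ∑ k, θ k * x k ≤ s} := fun s =>
        measurableSet_le (by fun_prop) measurable_const
      have hm := hmix' ({x : Fin n → ℝ | ∑ k, θ k * x k ≤ s}.indicator (fun _ => 1))
        (measurable_const.indicator (hsm s))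
      rw [lintegral_indicator (hsm s), setLIntegral_one] at hm
      rw [measureReal_def, hm, integral_eq_lintegral_of_nonneg_ae
        (Filter.Eventually.of_forall fun r => measureReal_nonneg)
        ((hF.measurable.comp (by fun_prop : Measurable fun r : ℝ => s / (r^(1/p)/c))).aestronglyMeasurable)]
      congr 1
      refine lintegral_congr_ae ?_
      filter_upwards [hWpos] with r hr
      generalize r^(1/p)/c = w at hr ⊢
      have : ∀ x : Fin n → ℝ, ({x : Fin n → ℝ | ∑ k, θ k * x k ≤ s}.indicator (fun _ => (1:ENNReal))) (w • x)
          = {x : Fin n → ℝ | ∑ k, θ k * x k ≤ s / w}.indicator (fun _ => (1:ENNReal)) x := by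
        intro x
        have : ∑ k, θ k * (w • x) k ≤ s ↔ ∑ k, θ k * x k ≤ s / w := by
          rw [le_div_iff₀ hr, Finset.sum_mul]
          have : ∀ k, θ k * (w • x) k = θ k * x k * w := fun k => by
            simp only [Pi.smul_apply, smul_eq_mul]; ring
          simp_rw [this]
        simp only [Set.indicator, Set.mem_ofPred_eq, this]
      simp_rw [this]
      rw [lintegral_indicator (hsm _), setLIntegral_one]
      simp [F]
    rw [← key]
    exact hCB n θ hθ s
  have := demix (nuP n p K) (fun r : ℝ => r^(1/p)/c) hW hWpos (√D * T) hη hI hvar' F hF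
    (fun _ => measureReal_nonneg) (fun _ => measureReal_le_one) (CB * T) hG t
  calc _ ≤ 2 * (CB * T) + 12 * (√D * T) := this
    _ = _ := by ring

/-- Berry-Esseen type bound for marginals of the uniform distribution on a suitably
rescaled `l_p` ball `c_{p,n} B_p^n`, chosen so that the vector is isotropic. -/
theorem clt_lp_ball (p : ℝ) (hp : 0 < p) :
    ∃ C : ℝ, 0 < C ∧
      ∀ (n : ℕ) (Ω : Type) [MeasureSpace Ω] [IsProbabilityMeasure (ℙ : Measure Ω)]
        (X : Ω → Fin n → ℝ) (c : ℝ), 0 < c →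
        Measurable X →
        -- X is distributed uniformly on c • B_p^n
        Measure.map X ℙ =
          (volume (c • {x : Fin n → ℝ | ∑ k, |x k| ^ p ≤ 1}))⁻¹ •
            (volume : Measure (Fin n → ℝ)).restrict
              (c • {x : Fin n → ℝ | ∑ k, |x k| ^ p ≤ 1}) →
        -- c is chosen so that X is isotropic
        (∀ i, ∫ ω, X ω i ∂ℙ = 0) →
        (∀ i j, ∫ ω, X ω i * X ω j ∂ℙ = if i = j then 1 else 0) →
        ∀ θ : Fin n → ℝ, (∑ k, (θ k) ^ 2) = 1 →
        ∀ t : ℝ,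
          |(ℙ {ω | ∑ k, θ k * X ω k ≤ t}).toReal
              - ((gaussianReal 0 1) {x | x ≤ t}).toReal|
            ≤ C * ∑ k, |θ k| ^ 3 := by
  obtain ⟨CB, hCB0, hCB⟩ := muP_berry p hp
  refine ⟨2 * CB + 12 * √(2*(4/p+1) * exp (2*(4/p+1))), by positivity, ?_⟩
  intro n Ω _ _ X c hc hX hmap _ hcov θ hθ t
  have hprob : IsProbabilityMeasure (Measure.map X (ℙ : Measure Ω)) :=
    Measure.isProbabilityMeasure_map hX.aemeasurable
  have h := lp_core p hp CB hCB n c hc (Measure.map X ℙ) hmap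
    (fun i => by
      rw [integral_map hX.aemeasurable (Measurable.aestronglyMeasurable (by fun_prop)), hcov i i]
      simp) θ hθ t
  rw [measureReal_def, Measure.map_apply hX (measurableSet_le (by fun_prop) measurable_const)] at h
  exact h
end

section
/- Let κ > 1 and let φ : ℝⁿ → ℝ be a function such that e^{-φ} is an unconditional probability density and (x_1,...,x_n) ↦ φ(x_1^κ,...,x_n^κ) is convex on the positive orthant ℝⁿ₊. Let X be a random vector with density e^{-φ(x)}. Then Var(|X|²) ≤ c_κ Σ_{j=1}^n E|X_j|⁴, where c_κ depends only on κ. -/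
open MeasureTheory ProbabilityTheory Real

namespace KPL
open scoped ENNReal

lemma vol_half (a : ℝ) (K : Set ℝ) :
    2 * volume ((fun x : ℝ => (1/2:ℝ) * x + a) '' K) = volume K := by
  have : (fun x : ℝ => (1/2:ℝ) * x + a) '' K = (fun x => x + a) '' ((fun x => (1/2:ℝ) • x) '' K) := by
    rw [Set.image_image]; rfl
  rw [this, Set.image_add_right, measure_preimage_add_right, Set.image_smul, Measure.addHaar_smul]
  rw [← mul_assoc]
  have : (2:ℝ≥0∞) * ENNReal.ofReal |(1/2:ℝ) ^ Module.finrank ℝ ℝ| = 1 := by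
    rw [show (2:ℝ≥0∞) = ENNReal.ofReal 2 by simp, ← ENNReal.ofReal_mul (by norm_num)]
    norm_num
  rw [this, one_mul]

lemma bm_compact {A B C : Set ℝ} (hA : IsCompact A) (hB : IsCompact B) (hA' : A.Nonempty)
    (hB' : B.Nonempty) (h : ∀ a ∈ A, ∀ b ∈ B, (a + b) / 2 ∈ C) :
    volume A + volume B ≤ 2 * volume C := by
  obtain ⟨a, ha, hamax⟩ := hA.exists_isGreatest hA'
  obtain ⟨b, hb, hbmin⟩ := hB.exists_isLeast hB'
  set S := (fun x : ℝ => (1/2:ℝ) * x + b/2) '' A with hS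
  set T := (fun x : ℝ => (1/2:ℝ) * x + a/2) '' B with hT
  have hSm : MeasurableSet S := (hA.image (by fun_prop)).measurableSet
  have hTm : MeasurableSet T := (hB.image (by fun_prop)).measurableSet
  have hdis : AEDisjoint volume S T := by
    refine measure_mono_null (t := {(a+b)/2}) ?_ (by simp)
    rintro x ⟨⟨y, hy, rfl⟩, ⟨z, hz, hzy⟩⟩
    have h1 := hamax hy
    have h2 := hbmin hz
    simp only [Set.mem_singleton_iff] at *
    linarith
  have hsub : S ∪ T ⊆ C := by
    rintro x (⟨y, hy, rfl⟩ | ⟨y, hy, rfl⟩)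
    · have := h y hy b hb
      convert this using 1; ring
    · have := h a ha y hy
      convert this using 1; ring
  calc volume A + volume B = 2 * volume S + 2 * volume T := by rw [hS, hT, vol_half, vol_half]
    _ = 2 * volume (S ∪ T) := by rw [measure_union₀ hTm.nullMeasurableSet hdis, mul_add]
    _ ≤ 2 * volume C := by gcongr

lemma bm {A B C : Set ℝ} (hA : MeasurableSet A) (hB : MeasurableSet B) (hA' : A.Nonempty)
    (hB' : B.Nonempty) (h : ∀ a ∈ A, ∀ b ∈ B, (a + b) / 2 ∈ C) :
    volume A + volume B ≤ 2 * volume C := by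
  obtain ⟨a, ha⟩ := hA'
  obtain ⟨b, hb⟩ := hB'
  rw [hA.measure_eq_iSup_isCompact, hB.measure_eq_iSup_isCompact]
  simp only [iSup_and']
  refine ENNReal.biSup_add_biSup_le' ⟨∅, by simp⟩ ⟨∅, by simp⟩ ?_
  rintro S ⟨hSA, hS⟩ T ⟨hTB, hT⟩
  refine le_trans (add_le_add (measure_mono (Set.subset_insert a S))
    (measure_mono (Set.subset_insert b T))) ?_
  refine bm_compact (hS.insert a) (hT.insert b) (Set.insert_nonempty _ _)
    (Set.insert_nonempty _ _) fun x hx y hy => h x ?_ y ?_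
  · exact Set.insert_subset ha hSA hx
  · exact Set.insert_subset hb hTB hy

lemma am_gm {a b c : ℝ≥0∞} (h : a + b ≤ 2 * c) : a * b ≤ c ^ 2 := by
  by_cases hc : c = ∞
  · simp [hc]
  have h2 : 2 * c ≠ ∞ := ENNReal.mul_ne_top (by simp) hc
  have ha : a ≠ ∞ := ne_top_of_le_ne_top h2 (le_self_add.trans h)
  have hb : b ≠ ∞ := ne_top_of_le_ne_top h2 (le_add_self.trans h)
  lift a to NNReal using ha
  lift b to NNReal using hb
  lift c to NNReal using hc
  norm_cast at *
  have h' : (a:ℝ) + b ≤ 2 * c := by exact_mod_cast h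
  have : (a:ℝ) * b ≤ c ^ 2 := by nlinarith [sq_nonneg ((a:ℝ) - b), a.2, b.2, c.2]
  exact_mod_cast this

lemma pl_norm {F G H : ℝ → ℝ} (hF : Measurable F) (hG : Measurable G) (hH : Measurable H)
    (F0 : ∀ x, 0 ≤ F x) (G0 : ∀ x, 0 ≤ G x) (H0 : ∀ x, 0 ≤ H x)
    (F1 : ∀ x, F x ≤ 1) (G1 : ∀ x, G x ≤ 1)
    (F2 : ∀ t < 1, ∃ x, t < F x) (G2 : ∀ t < 1, ∃ x, t < G x)
    (h : ∀ x y, F x * G y ≤ H ((x + y) / 2) ^ 2) :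
    (∫⁻ x, ENNReal.ofReal (F x)) * (∫⁻ x, ENNReal.ofReal (G x)) ≤
      (∫⁻ x, ENNReal.ofReal (H x)) ^ 2 := by
  apply am_gm
  rw [lintegral_eq_lintegral_meas_lt _ (.of_forall F0) hF.aemeasurable,
    lintegral_eq_lintegral_meas_lt _ (.of_forall G0) hG.aemeasurable,
    lintegral_eq_lintegral_meas_lt _ (.of_forall H0) hH.aemeasurable]
  rw [← lintegral_const_mul' _ _ (by simp), ← lintegral_add_left]
  · refine setLIntegral_mono' measurableSet_Ioi fun t ht => ?_
    rcases lt_or_ge t 1 with h1 | h1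
    · refine bm (measurableSet_lt measurable_const hF) (measurableSet_lt measurable_const hG)
        (F2 t h1) (G2 t h1) ?_
      intro a ha b hb
      have ht : 0 < t := ht
      have ha : t < F a := ha
      have hb : t < G b := hb
      have := h a b
      show t < H _
      refine lt_of_pow_lt_pow_left₀ 2 (H0 _) ?_
      nlinarith
    · have e1 : {a | t < F a} = ∅ := by
        ext x; simpa using (F1 x).trans h1
      have e2 : {a | t < G a} = ∅ := by
        ext x; simpa using (G1 x).trans h1
      simp [e1, e2]
  · exact Antitone.measurable (fun s t hst => measure_mono fun x hx => lt_of_le_of_lt hst hx)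

lemma pl_bdd {f g h : ℝ → ℝ} (hf : Measurable f) (hg : Measurable g) (hh : Measurable h)
    (f0 : ∀ x, 0 ≤ f x) (g0 : ∀ x, 0 ≤ g x) (h0 : ∀ x, 0 ≤ h x)
    (fb : BddAbove (Set.range f)) (gb : BddAbove (Set.range g))
    (hfg : ∀ x y, f x * g y ≤ h ((x + y) / 2) ^ 2) :
    (∫⁻ x, ENNReal.ofReal (f x)) * (∫⁻ x, ENNReal.ofReal (g x)) ≤
      (∫⁻ x, ENNReal.ofReal (h x)) ^ 2 := by
  set M := ⨆ x, f x with hM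
  set L := ⨆ x, g x with hL
  have fM : ∀ x, f x ≤ M := le_ciSup fb
  have gL : ∀ x, g x ≤ L := le_ciSup gb
  rcases (Real.iSup_nonneg f0).eq_or_lt with hM0 | hM0
  · have : ∀ x, f x = 0 := fun x => le_antisymm ((fM x).trans hM0.symm.le) (f0 x)
    simp [this]
  rcases (Real.iSup_nonneg g0).eq_or_lt with hL0 | hL0
  · have : ∀ x, g x = 0 := fun x => le_antisymm ((gL x).trans hL0.symm.le) (g0 x)
    simp [this]
  have hr : 0 < √(M * L) := Real.sqrt_pos.2 (mul_pos hM0 hL0)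
  have key := pl_norm (F := fun x => f x / M) (G := fun x => g x / L)
    (H := fun x => h x / √(M * L)) (hf.div_const _) (hg.div_const _) (hh.div_const _)
    (fun x => div_nonneg (f0 x) hM0.le) (fun x => div_nonneg (g0 x) hL0.le)
    (fun x => div_nonneg (h0 x) hr.le)
    (fun x => (div_le_one hM0).2 (fM x)) (fun x => (div_le_one hL0).2 (gL x))
    (fun t ht => by
      obtain ⟨x, hx⟩ := exists_lt_of_lt_ciSup (show t * M < ⨆ x, f x by nlinarith)
      exact ⟨x, (lt_div_iff₀ hM0).2 hx⟩)
    (fun t ht => by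
      obtain ⟨x, hx⟩ := exists_lt_of_lt_ciSup (show t * L < ⨆ x, g x by nlinarith)
      exact ⟨x, (lt_div_iff₀ hL0).2 hx⟩)
    (fun x y => by
      rw [div_mul_div_comm, div_pow, Real.sq_sqrt (mul_pos hM0 hL0).le]
      gcongr
      exact hfg x y)
  have e : ∀ (u : ℝ → ℝ) (c : ℝ), 0 < c → Measurable u →
      ∫⁻ x, ENNReal.ofReal (u x) = ENNReal.ofReal c * ∫⁻ x, ENNReal.ofReal (u x / c) := by
    intro u c hc hu
    rw [← lintegral_const_mul _ (hu.div_const _).ennreal_ofReal]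
    refine lintegral_congr fun x => ?_
    rw [← ENNReal.ofReal_mul hc.le, mul_div_cancel₀ _ hc.ne']
  rw [e f M hM0 hf, e g L hL0 hg, e h _ hr hh, mul_pow, ← ENNReal.ofReal_pow hr.le,
    Real.sq_sqrt (mul_pos hM0 hL0).le, ENNReal.ofReal_mul hM0.le, mul_mul_mul_comm]
  gcongr

lemma pl_real {f g h : ℝ → ℝ≥0∞} (hf : Measurable f) (hg : Measurable g) (hh : Measurable h)
    (hfg : ∀ x y, f x * g y ≤ h ((x + y) / 2) ^ 2) :
    (∫⁻ x, f x) * (∫⁻ x, g x) ≤ (∫⁻ x, h x) ^ 2 := by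
  have lim : ∀ u : ℝ → ℝ≥0∞, Measurable u →
      ∫⁻ x, u x = ⨆ N : ℕ, ∫⁻ x, min (u x) (N : ℝ≥0∞) := by
    intro u hu
    rw [← lintegral_iSup (fun N => hu.min measurable_const)]
    · refine lintegral_congr fun x => ?_
      refine le_antisymm ?_ (iSup_le fun N => min_le_left _ _)
      refine le_of_forall_lt fun c hc => ?_
      obtain ⟨N, hN⟩ := ENNReal.exists_nat_gt hc.ne_top
      exact lt_iSup_iff.2 ⟨N, lt_min hc hN⟩
    · intro N M hNM x
      exact min_le_min le_rfl (by exact_mod_cast hNM)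
  have mono : ∀ u : ℝ → ℝ≥0∞, Monotone (fun N : ℕ => ∫⁻ x, min (u x) (N : ℝ≥0∞)) := by
    intro u N M hNM
    exact lintegral_mono fun x => min_le_min le_rfl (by exact_mod_cast hNM)
  rw [lim f hf, lim g hg]
  simp only [ENNReal.iSup_mul, ENNReal.mul_iSup]
  refine iSup₂_le fun i j => ?_
  set N := max i j
  refine le_trans (mul_le_mul' (mono f (le_max_right i j)) (mono g (le_max_left i j))) ?_
  change (∫⁻ x, min (f x) (N : ℝ≥0∞)) * (∫⁻ x, min (g x) (N : ℝ≥0∞)) ≤ _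
  have fin : ∀ (u : ℝ → ℝ≥0∞) x, min (u x) (N : ℝ≥0∞) ≠ ∞ := fun u x =>
    ne_top_of_le_ne_top (ENNReal.natCast_ne_top N) (min_le_right _ _)
  have e : ∀ u : ℝ → ℝ≥0∞, ∫⁻ x, min (u x) (N : ℝ≥0∞) =
      ∫⁻ x, ENNReal.ofReal (min (u x) (N : ℝ≥0∞)).toReal := by
    intro u
    exact lintegral_congr fun x => (ENNReal.ofReal_toReal (fin u x)).symm
  have bd : ∀ u : ℝ → ℝ≥0∞, BddAbove (Set.range fun x => (min (u x) (N : ℝ≥0∞)).toReal) := by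
    intro u
    refine ⟨N, ?_⟩
    rintro _ ⟨x, rfl⟩
    exact ENNReal.toReal_le_of_le_ofReal (by simp) (by simp)
  have key := pl_bdd (f := fun x => (min (f x) (N : ℝ≥0∞)).toReal)
    (g := fun x => (min (g x) (N : ℝ≥0∞)).toReal) (h := fun x => (min (h x) (N : ℝ≥0∞)).toReal)
    (hf.min measurable_const).ennreal_toReal (hg.min measurable_const).ennreal_toReal
    (hh.min measurable_const).ennreal_toReal (fun x => ENNReal.toReal_nonneg)
    (fun x => ENNReal.toReal_nonneg) (fun x => ENNReal.toReal_nonneg) (bd f) (bd g) (by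
      intro x y
      rw [← ENNReal.toReal_mul, ← ENNReal.toReal_pow]
      refine ENNReal.toReal_mono (ENNReal.pow_ne_top (fin h _)) ?_
      rcases le_total (h ((x+y)/2)) N with h1 | h1
      · rw [min_eq_left h1]
        exact (mul_le_mul' (min_le_left _ _) (min_le_left _ _)).trans (hfg x y)
      · rw [min_eq_right h1, sq]
        exact mul_le_mul' (min_le_right _ _) (min_le_right _ _))
  rw [← e, ← e, ← e] at key
  refine key.trans ?_
  gcongr
  exact min_le_left _ _

def PLP {α : Type} [MeasurableSpace α] (μ : Measure α) (m : α → α → α) (K : α → α → ℝ≥0∞) : Prop :=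
  ∀ f g h : α → ℝ≥0∞, Measurable f → Measurable g → Measurable h →
    (∀ a b, f a * g b ≤ (K a b * h (m a b)) ^ 2) →
    (∫⁻ x, f x ∂μ) * (∫⁻ x, g x ∂μ) ≤ (∫⁻ x, h x ∂μ) ^ 2

lemma PLP.prod {α β : Type} [MeasurableSpace α] [MeasurableSpace β] {μ : Measure α} {ν : Measure β}
    [SFinite μ] [SFinite ν]
    {m : α → α → α} {K : α → α → ℝ≥0∞} {m' : β → β → β} {K' : β → β → ℝ≥0∞}
    (H : PLP μ m K) (H' : PLP ν m' K') :
    PLP (μ.prod ν) (fun x y => (m x.1 y.1, m' x.2 y.2)) (fun x y => K x.1 y.1 * K' x.2 y.2) := by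
  intro f g h hf hg hh hfg
  rw [lintegral_prod _ hf.aemeasurable, lintegral_prod _ hg.aemeasurable,
    lintegral_prod _ hh.aemeasurable]
  refine H _ _ _ hf.lintegral_prod_right' hg.lintegral_prod_right' hh.lintegral_prod_right' ?_
  intro a b
  rw [← lintegral_const_mul (K a b) (f := fun y => h (m a b, y)) (by fun_prop)]
  refine H' (fun x => f (a, x)) (fun x => g (b, x)) (fun x => K a b * h (m a b, x))
    (by fun_prop) (by fun_prop) (by fun_prop) ?_
  intro x y
  refine (hfg (a, x) (b, y)).trans (le_of_eq ?_)
  ring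

lemma PLP.pi {μ : Measure ℝ} [SigmaFinite μ] {m : ℝ → ℝ → ℝ} {K : ℝ → ℝ → ℝ≥0∞}
    (H : PLP μ m K) (n : ℕ) :
    PLP (Measure.pi (fun _ : Fin n => μ)) (fun x y i => m (x i) (y i))
      (fun x y => ∏ i, K (x i) (y i)) := by
  induction n with
  | zero =>
    intro f g h hf hg hh hfg
    rw [Measure.pi_of_empty _ default]
    rw [lintegral_dirac, lintegral_dirac, lintegral_dirac]
    have := hfg default default
    simp only [Finset.univ_eq_empty, Finset.prod_empty, one_mul] at this
    convert this
  | succ n ih =>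
    intro f g h hf hg hh hfg
    have mp := (measurePreserving_piFinSuccAbove (fun _ : Fin (n+1) => μ) 0).symm
    have e : ∀ u : (Fin (n+1) → ℝ) → ℝ≥0∞, Measurable u →
        ∫⁻ x, u x ∂(Measure.pi (fun _ : Fin (n+1) => μ)) =
        ∫⁻ z, u ((MeasurableEquiv.piFinSuccAbove (fun _ : Fin (n+1) => ℝ) 0).symm z)
          ∂(μ.prod (Measure.pi (fun _ : Fin n => μ))) := by
      intro u hu
      rw [mp.lintegral_comp hu]
    rw [e f hf, e g hg, e h hh]
    refine H.prod ih _ _ _ (hf.comp (MeasurableEquiv.measurable _))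
      (hg.comp (MeasurableEquiv.measurable _)) (hh.comp (MeasurableEquiv.measurable _)) ?_
    intro a b
    refine (hfg _ _).trans (le_of_eq ?_)
    congr 1
    beta_reduce
    rw [Fin.prod_univ_succ]
    congr 2
    ext i
    refine Fin.cases ?_ (fun j => ?_) i <;> simp [MeasurableEquiv.piFinSuccAbove]

lemma scal1 {κ u v : ℝ} (hκ : 1 < κ) (hu : 0 < u) (hv : 0 < v) (huv : v ≤ u) :
    ((u ^ (2*κ) - v ^ (2*κ)) * (u + v)) ^ 2 ≤
      (4 * κ * (u - v)) ^ 2 * ((u ^ (2*κ)) ^ 2 + (v ^ (2*κ)) ^ 2) := by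
  set A := u ^ (2*κ) with hA
  set B := v ^ (2*κ) with hB
  have A0 : 0 < A := by positivity
  have hBA : B ≤ A := Real.rpow_le_rpow hv.le huv (by linarith)
  have h1 : 1 + 2*κ * (v/u - 1) ≤ B / A := by
    have := one_add_mul_self_le_rpow_one_add (s := v/u - 1) (by
      have : 0 < v/u := by positivity
      linarith) (p := 2*κ) (by linarith)
    rw [add_sub_cancel, Real.div_rpow hv.le hu.le] at this
    exact this
  have h2 : (A - B) * u ≤ 2*κ * A * (u - v) := by
    rw [le_div_iff₀ A0] at h1
    have : (1 + 2*κ * (v/u - 1)) * A * u = A * u + 2*κ*A*(v-u) := by field_simp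
    nlinarith
  have h3 : (A - B) * (u + v) ≤ 4 * κ * (u - v) * A := by nlinarith
  calc _ ≤ (4 * κ * (u - v) * A) ^ 2 := by
        apply pow_le_pow_left₀ _ h3
        exact mul_nonneg (by linarith) (by linarith)
    _ = (4 * κ * (u - v)) ^ 2 * A ^ 2 := by ring
    _ ≤ _ := by gcongr; nlinarith [sq_nonneg B]

lemma scal2 {κ u v : ℝ} (hκ : 1 < κ) (hu : 0 < u) (hv : 0 < v) :
    ((u ^ (2*κ) - v ^ (2*κ)) * (u + v)) ^ 2 ≤
      (4 * κ * (u - v)) ^ 2 * ((u ^ (2*κ)) ^ 2 + (v ^ (2*κ)) ^ 2) := by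
  rcases le_total v u with h | h
  · exact scal1 hκ hu hv h
  · have := scal1 hκ hv hu h
    linarith

lemma scal3 {κ u v : ℝ} (hκ : 1 < κ) (hu : 0 < u) (hv : 0 < v) (s : ℝ) :
    u ^ (κ-1) * v ^ (κ-1) * Real.exp (s * ((u^κ)^2 - (v^κ)^2)
      - (4*κ^2/(κ-1)) * s^2 * ((u^κ)^4 + (v^κ)^4)) ≤ (((u+v)/2) ^ (κ-1)) ^ 2 := by
  have hp : 0 < κ - 1 := by linarith
  have hw : 0 < (u+v)/2 := by positivity
  have e2 : ∀ x : ℝ, 0 < x → (x^κ)^2 = x^(2*κ) := fun x hx => by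
    rw [← Real.rpow_natCast, ← Real.rpow_mul hx.le]; norm_num [mul_comm]
  have e4 : ∀ x : ℝ, 0 < x → (x^κ)^4 = (x^(2*κ))^2 := fun x hx => by
    rw [← e2 x hx]; ring
  rw [e2 u hu, e2 v hv, e4 u hu, e4 v hv]
  have key := scal2 hκ hu hv
  set A := u ^ (2*κ) with hA
  set B := v ^ (2*κ) with hB
  have A0 : 0 < A := by positivity
  have B0 : 0 < B := by positivity
  rw [Real.rpow_def_of_pos hu, Real.rpow_def_of_pos hv, Real.rpow_def_of_pos hw,
    ← Real.exp_add, ← Real.exp_add, ← Real.exp_nat_mul, Real.exp_le_exp]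
  have hL : (u-v)^2/(u+v)^2 ≤ 2 * Real.log ((u+v)/2) - Real.log u - Real.log v := by
    have h1 := Real.log_le_sub_one_of_pos (x := u * v / ((u+v)/2)^2) (by positivity)
    rw [Real.log_div (by positivity) (by positivity), Real.log_mul hu.ne' hv.ne', Real.log_pow] at h1
    have h2 : u * v / ((u+v)/2)^2 - 1 = - ((u-v)^2/(u+v)^2) := by field_simp; ring
    push_cast at h1
    linarith
  have hq : s * (A - B) - (4*κ^2/(κ-1)) * s^2 * (A^2+B^2) ≤ (κ-1) * ((u-v)^2/(u+v)^2) := by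
    have hS : 0 < A^2+B^2 := by positivity
    have h3 : (A-B)^2 / (16*κ^2*(A^2+B^2)) ≤ (u-v)^2/(u+v)^2 := by
      rw [div_le_div_iff₀ (by positivity) (by positivity)]
      nlinarith
    have h4 : s * (A - B) - (4*κ^2/(κ-1)) * s^2 * (A^2+B^2) ≤
        (κ-1) * ((A-B)^2 / (16*κ^2*(A^2+B^2))) := by
      have : (κ-1) * ((A-B)^2 / (16*κ^2*(A^2+B^2))) -
        (s * (A - B) - (4*κ^2/(κ-1)) * s^2 * (A^2+B^2)) =
        (4*κ^2/(κ-1)) * (A^2+B^2) * (s - (κ-1)*(A-B)/(8*κ^2*(A^2+B^2)))^2 := by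
        field_simp
        ring
      have h5 : 0 ≤ (4*κ^2/(κ-1)) * (A^2+B^2) * (s - (κ-1)*(A-B)/(8*κ^2*(A^2+B^2)))^2 := by
        positivity
      linarith
    exact h4.trans (mul_le_mul_of_nonneg_left h3 hp.le)
  have := mul_le_mul_of_nonneg_left hL hp.le
  push_cast
  nlinarith

noncomputable def mm (κ a b : ℝ) : ℝ := ((a ^ κ⁻¹ + b ^ κ⁻¹)/2) ^ κ
noncomputable def KK (C s a b : ℝ) : ℝ≥0∞ :=
  ENNReal.ofReal (Real.exp ((s * (a^2 - b^2) - C * s^2 * (a^4 + b^4))/2))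

noncomputable def absM : Measure ℝ :=
  volume.restrict (Set.Ioi 0) + volume.restrict (Set.Ioi 0)

instance : SigmaFinite absM := by unfold absM; infer_instance

lemma lint_abs (f : ℝ → ℝ≥0∞) (hf : Measurable f) : ∫⁻ x, f |x| = ∫⁻ x, f x ∂absM := by
  rw [absM, lintegral_add_measure, ← lintegral_add_compl _ (measurableSet_Ioi (a := (0:ℝ)))]
  congr 1
  · exact setLIntegral_congr_fun measurableSet_Ioi fun x hx => by
      rw [abs_of_pos hx]
  · rw [Set.compl_Ioi, setLIntegral_congr (Iio_ae_eq_Iic (a := (0:ℝ))).symm]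
    rw [setLIntegral_congr_fun measurableSet_Iio (g := fun x => f (-x)) fun x hx => by
      rw [abs_of_neg hx]]
    have := (Measure.measurePreserving_neg (volume : Measure ℝ)).setLIntegral_comp_preimage
      (measurableSet_Ioi (a := (0:ℝ))) hf
    rw [← this]
    simp

lemma map_abs : (volume : Measure ℝ).map (fun x => |x|) = absM := by
  refine Measure.ext_of_lintegral _ fun f hf => ?_
  rw [lintegral_map hf (by fun_prop), lint_abs f hf]

lemma lint_absM {κ : ℝ} (hκ : 1 < κ) (f : ℝ → ℝ≥0∞) :
    ∫⁻ x, f x ∂absM = 2 * ∫⁻ y, (Set.Ioi (0:ℝ)).indicator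
      (fun y => ENNReal.ofReal (κ * y^(κ-1)) * f (y^κ)) y := by
  have hk : 0 < κ := by linarith
  rw [absM, lintegral_add_measure, ← two_mul, lintegral_indicator measurableSet_Ioi]
  congr 1
  have himg : (fun y : ℝ => y^κ) '' (Set.Ioi 0) = Set.Ioi 0 := by
    ext x; constructor
    · rintro ⟨y, hy, rfl⟩; exact Real.rpow_pos_of_pos hy _
    · intro hx
      exact ⟨x ^ κ⁻¹, Real.rpow_pos_of_pos hx _, Real.rpow_inv_rpow (le_of_lt hx) hk.ne'⟩
  have := lintegral_image_eq_lintegral_deriv_mul_of_monotoneOn (s := Set.Ioi (0:ℝ))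
    (f := fun y => y^κ) (f' := fun y => κ * y^(κ-1)) measurableSet_Ioi
    (fun x hx => (Real.hasDerivAt_rpow_const (Or.inl (ne_of_gt hx))).hasDerivWithinAt)
    (fun x hx y hy hxy => Real.rpow_le_rpow (le_of_lt hx) hxy hk.le) f
  rw [himg] at this
  exact this

lemma plp1 {κ : ℝ} (hκ : 1 < κ) (s : ℝ) : PLP absM (mm κ) (KK (4*κ^2/(κ-1)) s) := by
  intro f g h hf hg hh hfg
  have hk : 0 < κ := by linarith
  rw [lint_absM hκ f, lint_absM hκ g, lint_absM hκ h, mul_pow, mul_mul_mul_comm, ← sq]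
  gcongr
  have meas : ∀ u : ℝ → ℝ≥0∞, Measurable u → Measurable ((Set.Ioi (0:ℝ)).indicator
      (fun y => ENNReal.ofReal (κ * y^(κ-1)) * u (y^κ))) := fun u hu =>
    Measurable.indicator (by fun_prop) measurableSet_Ioi
  refine pl_real (meas f hf) (meas g hg) (meas h hh) ?_
  intro u v
  by_cases hu : 0 < u
  swap
  · simp [hu]
  by_cases hv : 0 < v
  swap
  · simp [hv]
  have hw : 0 < (u+v)/2 := by positivity
  rw [Set.indicator_of_mem (Set.mem_Ioi.2 hu), Set.indicator_of_mem (Set.mem_Ioi.2 hv),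
    Set.indicator_of_mem (Set.mem_Ioi.2 hw)]
  have hm : mm κ (u^κ) (v^κ) = ((u+v)/2)^κ := by
    rw [mm, Real.rpow_rpow_inv hu.le hk.ne', Real.rpow_rpow_inv hv.le hk.ne']
  have h1 := hfg (u^κ) (v^κ)
  rw [hm, mul_pow] at h1
  rw [mul_mul_mul_comm, mul_pow]
  refine (mul_le_mul_right h1 _).trans ?_
  rw [← mul_assoc]
  refine mul_le_mul_left ?_ _
  rw [KK, ← ENNReal.ofReal_pow (by positivity), ← ENNReal.ofReal_mul (by positivity),
    ← ENNReal.ofReal_mul (by positivity), ← ENNReal.ofReal_pow (by positivity)]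
  apply ENNReal.ofReal_le_ofReal
  rw [← Real.exp_nat_mul]
  have h3 := mul_le_mul_of_nonneg_left (scal3 hκ hu hv s) (sq_nonneg κ)
  have e : ((2:ℕ):ℝ) * ((s * ((u ^ κ)^2 - (v ^ κ)^2)
      - (4*κ^2/(κ-1)) * s^2 * ((u ^ κ)^4 + (v ^ κ)^4)) / 2) = (s * ((u ^ κ)^2 - (v ^ κ)^2)
      - (4*κ^2/(κ-1)) * s^2 * ((u ^ κ)^4 + (v ^ κ)^4)) := by push_cast; ring
  rw [e]
  linarith

lemma cosh_lb (x : ℝ) : 2 + x ^ 2 ≤ Real.exp x + Real.exp (-x) := by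
  have h := Real.cosh_sq' (x / 2)
  have h2 := Real.cosh_two_mul (x / 2)
  rw [mul_div_cancel₀ x two_ne_zero, Real.cosh_eq] at h2
  have h3 : (x / 2) ^ 2 ≤ Real.sinh (x / 2) ^ 2 := by
    rw [sq_le_sq]
    rcases le_total 0 (x / 2) with h0 | h0
    · rw [abs_of_nonneg h0, abs_of_nonneg (Real.sinh_nonneg_iff.2 h0)]
      exact Real.self_le_sinh_iff.2 h0
    · rw [abs_of_nonpos h0, abs_of_nonpos (Real.sinh_nonpos_iff.2 h0)]
      exact neg_le_neg (Real.sinh_le_self_iff.2 h0)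
  linarith

lemma var_lemma {Ω : Type} [MeasurableSpace Ω] (μ : Measure Ω) [IsProbabilityMeasure μ]
    (G Q : Ω → ℝ) (hGm : Measurable G) (hQm : Measurable Q) (hG : MemLp G 2 μ) (Q0 : ∀ x, 0 ≤ Q x)
    (hQ : Integrable Q μ) (C : ℝ) (hC : 0 ≤ C)
    (H : ∀ s : ℝ, (∫⁻ x, ENNReal.ofReal (Real.exp (s * G x - C * s^2 * Q x)) ∂μ) *
      (∫⁻ x, ENNReal.ofReal (Real.exp (-s * G x - C * (-s)^2 * Q x)) ∂μ) ≤ 1) :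
    variance G μ ≤ 2 * C * ∫ x, Q x ∂μ := by
  set ν := μ.prod μ with hν
  set D : Ω × Ω → ℝ := fun z => G z.1 - G z.2 with hD
  set R : Ω × Ω → ℝ := fun z => Q z.1 + Q z.2 with hR
  have R0 : ∀ z, 0 ≤ R z := fun z => add_nonneg (Q0 _) (Q0 _)
  have Dm : Measurable D := by fun_prop
  have Rm : Measurable R := by fun_prop
  have Ri : Integrable R ν := (hQ.comp_fst μ).add (hQ.comp_snd μ)
  have DL : MemLp D 2 ν := (hG.comp_fst μ).sub (hG.comp_snd μ)
  have Di : Integrable (fun z => D z ^ 2) ν := DL.integrable_sq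
  have hle : ∀ s : ℝ, ∫⁻ z, ENNReal.ofReal (Real.exp (s * D z - C * s^2 * R z)) ∂ν ≤ 1 := by
    intro s
    refine le_trans (le_of_eq ?_) (H s)
    rw [← lintegral_prod_mul (by fun_prop) (by fun_prop)]
    refine lintegral_congr fun z => ?_
    rw [← ENNReal.ofReal_mul (by positivity), ← Real.exp_add]
    congr 2
    simp only [hD, hR]; ring
  have ei : ∀ s : ℝ, Integrable (fun z => D z ^ 2 * Real.exp (-(C * s^2 * R z))) ν := by
    intro s
    refine Di.mono' (by fun_prop) (.of_forall fun z => ?_)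
    rw [Real.norm_of_nonneg (by positivity)]
    refine mul_le_of_le_one_right (sq_nonneg _) (Real.exp_le_one_iff.2 ?_)
    have := R0 z
    have : 0 ≤ C * s^2 * R z := by positivity
    linarith
  have step1 : ∀ s : ℝ, s ≠ 0 →
      ∫ z, D z ^ 2 * Real.exp (-(C * s^2 * R z)) ∂ν ≤ 2 * C * ∫ z, R z ∂ν := by
    intro s hs
    have h1 : ∫⁻ z, ENNReal.ofReal ((2 + s^2 * D z ^ 2) * Real.exp (-(C * s^2 * R z))) ∂ν ≤ 2 := by
      calc _ ≤ ∫⁻ z, (ENNReal.ofReal (Real.exp (s * D z - C * s^2 * R z)) +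
              ENNReal.ofReal (Real.exp ((-s) * D z - C * (-s)^2 * R z))) ∂ν := by
            refine lintegral_mono fun z => ?_
            rw [← ENNReal.ofReal_add (by positivity) (by positivity)]
            apply ENNReal.ofReal_le_ofReal
            have e1 : Real.exp (s * D z - C * s^2 * R z) =
              Real.exp (s * D z) * Real.exp (-(C * s^2 * R z)) := by
              rw [← Real.exp_add]; congr 1
            have e2 : Real.exp ((-s) * D z - C * (-s)^2 * R z) =
              Real.exp (-(s * D z)) * Real.exp (-(C * s^2 * R z)) := by
              rw [← Real.exp_add]; congr 1; ring
            rw [e1, e2, ← add_mul]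
            refine mul_le_mul_of_nonneg_right ?_ (Real.exp_pos _).le
            have := cosh_lb (s * D z)
            nlinarith
        _ ≤ 1 + 1 := by
            rw [lintegral_add_left (by fun_prop)]
            exact add_le_add (hle s) (hle (-s))
        _ = 2 := by norm_num
    have h2 : ∫ z, ((2 + s^2 * D z ^ 2) * Real.exp (-(C * s^2 * R z))) ∂ν ≤ 2 := by
      rw [integral_eq_lintegral_of_nonneg_ae (.of_forall fun z => by positivity) (by fun_prop)]
      exact ENNReal.toReal_le_of_le_ofReal (by norm_num) (by simpa using h1)
    have i0 : Integrable (fun z => Real.exp (-(C * s^2 * R z))) ν := by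
      refine (integrable_const (1:ℝ)).mono' (by fun_prop) (.of_forall fun z => ?_)
      rw [Real.norm_of_nonneg (by positivity)]
      refine (Real.exp_le_one_iff.2 ?_)
      have := R0 z
      have : 0 ≤ C * s^2 * R z := by positivity
      linarith
    have h3 : ∫ z, ((2 - 2 * C * s^2 * R z) + s^2 * (D z ^ 2 * Real.exp (-(C * s^2 * R z)))) ∂ν ≤
        ∫ z, ((2 + s^2 * D z ^ 2) * Real.exp (-(C * s^2 * R z))) ∂ν := by
      refine integral_mono (((integrable_const _).sub (Ri.const_mul _)).add ((ei s).const_mul _)) ?_ ?_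
      · have := (i0.const_mul 2).add ((ei s).const_mul (s^2))
        refine this.congr (.of_forall fun z => ?_)
        simp only [Pi.add_apply]; ring
      · intro z
        have := Real.add_one_le_exp (-(C * s^2 * R z))
        simp only
        nlinarith
    rw [integral_add (f := fun z => 2 - 2 * C * s^2 * R z)
      ((integrable_const _).sub (Ri.const_mul _)) ((ei s).const_mul _),
      integral_sub (integrable_const _) (Ri.const_mul _), integral_const_mul, integral_const_mul,
      integral_const] at h3
    simp only [probReal_univ, one_smul] at h3
    have hs2 : 0 < s^2 := by positivity
    refine le_of_mul_le_mul_left ?_ hs2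
    nlinarith
  have step2 : ∫ z, D z ^ 2 ∂ν ≤ 2 * C * ∫ z, R z ∂ν := by
    have ht : Filter.Tendsto (fun k : ℕ => ∫ z, D z ^ 2 *
        Real.exp (-(C * (1 / ((k:ℝ) + 1))^2 * R z)) ∂ν) Filter.atTop
        (nhds (∫ z, D z ^ 2 ∂ν)) := by
      refine tendsto_integral_of_dominated_convergence (fun z => D z ^ 2)
        (fun k => by fun_prop) Di (fun k => .of_forall fun z => ?_) (.of_forall fun z => ?_)
      · rw [Real.norm_of_nonneg (by positivity)]
        refine mul_le_of_le_one_right (sq_nonneg _) (Real.exp_le_one_iff.2 ?_)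
        have := R0 z
        have : 0 ≤ C * (1 / ((k:ℝ) + 1))^2 * R z := by positivity
        linarith
      · have h0 := tendsto_one_div_add_atTop_nhds_zero_nat (𝕜 := ℝ)
        have hc : Continuous fun t : ℝ => D z ^ 2 * Real.exp (-(C * t^2 * R z)) := by fun_prop
        have := (hc.tendsto 0).comp h0
        simp only [ne_eq, OfNat.ofNat_ne_zero, not_false_eq_true, zero_pow, mul_zero, zero_mul,
          neg_zero, Real.exp_zero, mul_one] at this
        exact this
    exact le_of_tendsto' ht fun k => step1 _ (by positivity)
  have eR : ∫ z, R z ∂ν = 2 * ∫ x, Q x ∂μ := by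
    simp only [hR]
    rw [integral_add (hQ.comp_fst μ) (hQ.comp_snd μ), integral_fun_fst, integral_fun_snd]
    simp; ring
  have Gi : Integrable G μ := hG.integrable (by norm_num)
  have G2 : Integrable (fun x => G x ^ 2) μ := hG.integrable_sq
  have eD : ∫ z, D z ^ 2 ∂ν = 2 * variance G μ := by
    have : ∀ z, D z ^ 2 = (G z.1 ^ 2 + G z.2 ^ 2) - 2 * (G z.1 * G z.2) := fun z => by
      simp only [hD]; ring
    simp_rw [this]
    rw [integral_sub (f := fun z : Ω × Ω => G z.1 ^ 2 + G z.2 ^ 2) ((G2.comp_fst μ).add (G2.comp_snd μ)) ((Gi.mul_prod Gi).const_mul 2),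
      integral_add (G2.comp_fst μ) (G2.comp_snd μ), integral_const_mul, integral_prod_mul,
      integral_fun_fst (fun x => G x ^ 2), integral_fun_snd (fun x => G x ^ 2), variance_eq_sub hG]
    simp only [probReal_univ, one_smul, Pi.pow_apply]
    ring
  rw [eR, eD] at step2
  linarith

lemma main_exp {κ : ℝ} (hκ : 1 < κ) (n : ℕ) {Ω : Type} [MeasurableSpace Ω] (P : Measure Ω)
    [IsProbabilityMeasure P] (X : Ω → Fin n → ℝ) (φ : (Fin n → ℝ) → ℝ) (hX : Measurable X)
    (hmap : Measure.map X P = (volume : Measure (Fin n → ℝ)).withDensity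
          (fun x => ENNReal.ofReal (Real.exp (-φ x))))
    (hun : ∀ ε : Fin n → ℝ, (∀ i, ε i = 1 ∨ ε i = -1) → ∀ x, φ (fun i => ε i * x i) = φ x)
    (hconv : ConvexOn ℝ {x : Fin n → ℝ | ∀ i, 0 ≤ x i} (fun x => φ (fun i => x i ^ κ))) (s : ℝ) :
    (∫⁻ ω, ENNReal.ofReal (Real.exp (s * (∑ j, X ω j ^ 2)
        - (4*κ^2/(κ-1)) * s^2 * (∑ j, X ω j ^ 4))) ∂P) *
    (∫⁻ ω, ENNReal.ofReal (Real.exp (-s * (∑ j, X ω j ^ 2)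
        - (4*κ^2/(κ-1)) * (-s)^2 * (∑ j, X ω j ^ 4))) ∂P) ≤ 1 := by
  have hk : 0 < κ := by linarith
  set C := 4*κ^2/(κ-1) with hC
  set U : Set (Fin n → ℝ) := {x | ∀ i, 0 < x i} with hU
  have Uo : IsOpen U := by
    have : U = ⋂ i, {x | 0 < x i} := by ext; simp [hU]
    rw [this]
    exact isOpen_iInter_of_finite fun i => isOpen_lt continuous_const (continuous_apply i)
  set ρ : (Fin n → ℝ) → ℝ≥0∞ := U.indicator (fun x => ENNReal.ofReal (Real.exp (-φ x))) with hρ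
  have φc : ContinuousOn φ U := by
    have h1 : ContinuousOn (fun x : Fin n → ℝ => φ (fun i => x i ^ κ)) U :=
      hconv.continuousOn_interior.mono (interior_maximal (fun x hx i => (hx i).le) Uo)
    have h2 : ContinuousOn (fun (x : Fin n → ℝ) i => x i ^ κ⁻¹) U := by
      refine continuousOn_pi.2 fun i => ?_
      exact ContinuousOn.rpow_const (continuous_apply i).continuousOn fun x hx => Or.inl (hx i).ne'
    have h3 := h1.comp h2 (fun x hx i => Real.rpow_pos_of_pos (hx i) _)
    refine h3.congr fun x hx => ?_
    simp only [Function.comp]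
    congr 1; ext i
    exact (Real.rpow_inv_rpow (hx i).le hk.ne').symm
  have ρm : Measurable ρ := by
    classical
    rw [hρ, ← Set.piecewise_eq_indicator]
    refine ContinuousOn.measurable_piecewise ?_ continuous_zero.continuousOn Uo.measurableSet
    exact ENNReal.continuous_ofReal.comp_continuousOn (Real.continuous_exp.comp_continuousOn φc.neg)
  have hae : (fun x => ENNReal.ofReal (Real.exp (-φ x))) =ᵐ[(volume : Measure (Fin n → ℝ))]
      fun x => ρ (fun i => |x i|) := by
    have h0 : ∀ᵐ x : Fin n → ℝ, ∀ i, x i ≠ 0 := by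
      rw [ae_all_iff]
      intro i
      exact Measure.ae_eval_ne (μ := fun _ : Fin n => (volume : Measure ℝ)) i 0
    filter_upwards [h0] with x hx
    have hm : (fun i => |x i|) ∈ U := fun i => abs_pos.2 (hx i)
    rw [hρ, Set.indicator_of_mem hm]
    have := hun (fun i => if x i < 0 then -1 else 1) (fun i => by
      by_cases h : x i < 0 <;> simp [h]) x
    rw [← this]
    congr 4
    ext i
    by_cases h : x i < 0
    · simp [h, abs_of_neg h]
    · simp [h, abs_of_nonneg (not_lt.1 h)]
  have E : ∀ Ψ : (Fin n → ℝ) → ℝ≥0∞, Measurable Ψ → (∀ x, Ψ (fun i => |x i|) = Ψ x) →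
      ∫⁻ ω, Ψ (X ω) ∂P = ∫⁻ x, ρ x * Ψ x ∂(Measure.pi fun _ : Fin n => absM) := by
    intro Ψ hΨ hev
    have habs : Measurable (fun (x : Fin n → ℝ) i => |x i|) := by fun_prop
    rw [← lintegral_map hΨ hX, hmap, withDensity_congr_ae hae,
      lintegral_withDensity_eq_lintegral_mul _ (f := fun x => ρ fun i => |x i|) (ρm.comp habs) hΨ]
    have hpi : (volume : Measure (Fin n → ℝ)).map (fun x i => |x i|) =
        Measure.pi fun _ : Fin n => absM := by
      have hmp : MeasurePreserving (fun x : ℝ => |x|) volume absM := ⟨by fun_prop, map_abs⟩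
      exact (measurePreserving_pi (fun _ : Fin n => (volume : Measure ℝ))
        (fun _ : Fin n => absM) (fun _ => hmp)).map_eq
    rw [← hpi, lintegral_map (f := fun x => ρ x * Ψ x) (ρm.mul hΨ) habs]
    refine lintegral_congr fun x => ?_
    simp [hev]
  set W : ℝ → (Fin n → ℝ) → ℝ≥0∞ := fun s x => ENNReal.ofReal (Real.exp (s * (∑ j, x j ^ 2)
        - C * s^2 * (∑ j, x j ^ 4))) with hW
  have Wm : ∀ s, Measurable (W s) := fun s => by fun_prop
  have We : ∀ s x, W s (fun i => |x i|) = W s x := fun s x => by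
    have : ∀ a : ℝ, |a|^4 = a^4 := fun a => by
      rw [show (4:ℕ) = 2 * 2 from rfl, pow_mul, sq_abs, ← pow_mul]
    simp [hW, this]
  have e1 := E (W s) (Wm s) (We s)
  have e2 := E (W (-s)) (Wm (-s)) (We (-s))
  have e3 := E (fun _ => 1) measurable_const (fun _ => rfl)
  simp only [lintegral_const, measure_univ, mul_one] at e3
  change (∫⁻ ω, W s (X ω) ∂P) * (∫⁻ ω, W (-s) (X ω) ∂P) ≤ 1
  rw [e1, e2, show (1:ℝ≥0∞) = 1^2 by simp, e3]
  refine (plp1 hκ s).pi n _ _ _ (ρm.mul (Wm s)) (ρm.mul (Wm (-s))) ρm ?_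
  intro a b
  by_cases ha : a ∈ U
  swap
  · simp [hρ, ha]
  by_cases hb : b ∈ U
  swap
  · simp [hρ, hb]
  have hmU : (fun i => mm κ (a i) (b i)) ∈ U := fun i => by
    have := ha i
    have := hb i
    simp only [mm]
    positivity
  have hρ2 : ρ a * ρ b ≤ ρ (fun i => mm κ (a i) (b i)) ^ 2 := by
    rw [hρ, Set.indicator_of_mem ha, Set.indicator_of_mem hb, Set.indicator_of_mem hmU,
      ← ENNReal.ofReal_mul (by positivity), ← ENNReal.ofReal_pow (by positivity)]
    apply ENNReal.ofReal_le_ofReal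
    rw [← Real.exp_add, ← Real.exp_nat_mul, Real.exp_le_exp]
    have h1 : (fun i => a i ^ κ⁻¹) ∈ {x : Fin n → ℝ | ∀ i, 0 ≤ x i} :=
      fun i => Real.rpow_nonneg (ha i).le _
    have h2 : (fun i => b i ^ κ⁻¹) ∈ {x : Fin n → ℝ | ∀ i, 0 ≤ x i} :=
      fun i => Real.rpow_nonneg (hb i).le _
    have := hconv.2 h1 h2 (show (0:ℝ) ≤ 1/2 by norm_num) (show (0:ℝ) ≤ 1/2 by norm_num)
      (by norm_num)
    simp only [Pi.add_apply, Pi.smul_apply, smul_eq_mul] at this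
    have ea : (fun i => (a i ^ κ⁻¹) ^ κ) = a := by
      ext i; exact Real.rpow_inv_rpow (ha i).le hk.ne'
    have eb : (fun i => (b i ^ κ⁻¹) ^ κ) = b := by
      ext i; exact Real.rpow_inv_rpow (hb i).le hk.ne'
    have em : (fun i => (1/2 * a i ^ κ⁻¹ + 1/2 * b i ^ κ⁻¹) ^ κ) = fun i => mm κ (a i) (b i) := by
      ext i; simp only [mm]; congr 1; ring
    rw [ea, eb, em] at this
    push_cast
    linarith
  have hK : (∏ i, KK C s (a i) (b i)) ^ 2 = W s a * W (-s) b := by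
    simp only [KK, hW]
    rw [← ENNReal.ofReal_prod_of_nonneg (fun i _ => by positivity), ← Real.exp_sum,
      ← ENNReal.ofReal_pow (by positivity), ← ENNReal.ofReal_mul (by positivity),
      ← Real.exp_add, ← Real.exp_nat_mul]
    congr 2
    rw [Finset.mul_sum, Finset.mul_sum, Finset.mul_sum, Finset.mul_sum, Finset.mul_sum,
      ← Finset.sum_sub_distrib, ← Finset.sum_sub_distrib, ← Finset.sum_add_distrib]
    refine Finset.sum_congr rfl fun i _ => ?_
    push_cast; ring
  beta_reduce
  rw [mul_pow, hK, mul_mul_mul_comm, mul_comm (ρ a * ρ b)]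
  gcongr

end KPL

/-- Poincaré-type inequality (Klartag): for an unconditional density `e^{-φ}` with
`φ(x₁^κ, …, xₙ^κ)` convex on the positive orthant, `Var |X|² ≤ c_κ ∑ E|X_j|⁴`. -/
theorem var_norm_sq_le (κ : ℝ) (hκ : 1 < κ) :
    ∃ c : ℝ, 0 < c ∧
      ∀ (n : ℕ) (Ω : Type) [MeasureSpace Ω] [IsProbabilityMeasure (ℙ : Measure Ω)]
        (X : Ω → Fin n → ℝ) (φ : (Fin n → ℝ) → ℝ),
        Measurable X →
        -- e^{-φ} is a probability density
        IsProbabilityMeasure ((volume : Measure (Fin n → ℝ)).withDensity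
          (fun x => ENNReal.ofReal (Real.exp (-φ x)))) →
        -- X has density e^{-φ(x)}
        Measure.map X ℙ = (volume : Measure (Fin n → ℝ)).withDensity
          (fun x => ENNReal.ofReal (Real.exp (-φ x))) →
        -- the density is unconditional
        (∀ ε : Fin n → ℝ, (∀ i, ε i = 1 ∨ ε i = -1) →
          ∀ x, φ (fun i => ε i * x i) = φ x) →
        -- φ(x₁^κ, …, xₙ^κ) is convex on the positive orthant
        ConvexOn ℝ {x : Fin n → ℝ | ∀ i, 0 ≤ x i} (fun x => φ (fun i => x i ^ κ)) →
        variance (fun ω => ∑ j, (X ω j) ^ 2) ℙ ≤ c * ∑ j, ∫ ω, |X ω j| ^ 4 ∂ℙ := by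
  have hp : 0 < κ - 1 := by linarith
  refine ⟨2 * (4*κ^2/(κ-1)), by positivity, ?_⟩
  intro n Ω _ _ X φ hX _ hmap hun hconv
  have hXj : ∀ j, Measurable fun ω => X ω j := fun j => (measurable_pi_apply j).comp hX
  have hGm : Measurable (fun ω => ∑ j, (X ω j) ^ 2) := by fun_prop
  have hQm : Measurable (fun ω => ∑ j, (X ω j) ^ 4) := by fun_prop
  have e4 : ∀ a : ℝ, |a|^4 = a^4 := fun a => by
    rw [show (4:ℕ) = 2 * 2 from rfl, pow_mul, sq_abs, ← pow_mul]
  simp_rw [e4]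
  by_cases hG : MemLp (fun ω => ∑ j, (X ω j) ^ 2) 2 (ℙ : Measure Ω)
  swap
  · rw [variance_of_not_memLp hGm.aestronglyMeasurable hG]
    refine mul_nonneg (by positivity) (Finset.sum_nonneg fun j _ => integral_nonneg fun ω => ?_)
    simp only [Pi.zero_apply]
    positivity
  have hint : ∀ j, Integrable (fun ω => X ω j ^ 4) (ℙ : Measure Ω) := by
    intro j
    refine hG.integrable_sq.mono' (by fun_prop) (.of_forall fun ω => ?_)
    rw [Real.norm_of_nonneg (by positivity)]
    have h1 : X ω j ^ 2 ≤ ∑ j, X ω j ^ 2 :=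
      Finset.single_le_sum (f := fun j => X ω j ^ 2) (fun i _ => sq_nonneg _) (Finset.mem_univ j)
    calc X ω j ^ 4 = (X ω j ^ 2) ^ 2 := by ring
      _ ≤ _ := pow_le_pow_left₀ (sq_nonneg _) h1 2
  rw [← integral_finsetSum _ (fun j _ => hint j)]
  exact KPL.var_lemma ℙ _ (fun ω => ∑ j, (X ω j) ^ 4) hGm hQm hG
    (fun ω => Finset.sum_nonneg fun j _ => by positivity) (integrable_finsetSum _ fun j _ => hint j)
    _ (by positivity) (fun s => KPL.main_exp hκ n ℙ X φ hX hmap hun hconv s)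
end

section
/- Let κ ≥ 1 and let φ : ℝⁿ → ℝ be a function such that e^{-φ} is an unconditional probability density and (x_1,...,x_n) ↦ φ(x_1^κ,...,x_n^κ) is convex on the positive orthant ℝⁿ₊. Let X be a random vector with density e^{-φ(x)}. Then for any p ≥ 1 and each i = 1,...,n, one has E|X_i|^p ≤ c_{p,κ} (E|X_i|²)^{p/2}, where c_{p,κ} depends only on p and κ. -/
open MeasureTheory ProbabilityTheory Real

theorem bm_compact {K L C : Set ℝ} (hK : IsCompact K) (hL : IsCompact L) (hK0 : K.Nonempty)
    (hL0 : L.Nonempty) (hC : ∀ x ∈ K, ∀ y ∈ L, (x + y) / 2 ∈ C) :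
    volume K + volume L ≤ 2 * volume C := by
  obtain ⟨a, haK, ha⟩ := hK.exists_isGreatest hK0
  obtain ⟨b, hbL, hb⟩ := hL.exists_isLeast hL0
  have h1 : volume ((fun x => x + (-b)) ⁻¹' K) = volume K := measure_preimage_add_right _ _ _
  have h2 : volume ((fun x => x + (-a)) ⁻¹' L) = volume L := measure_preimage_add_right _ _ _
  have h3 : volume ((fun x => (1/2 : ℝ) * x) ⁻¹' C) = 2 * volume C := by
    rw [Real.volume_preimage_mul_left (by norm_num)]
    norm_num
  have hm : MeasurableSet ((fun x => x + (-a)) ⁻¹' L) :=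
    (measurable_id.add_const _) hL.measurableSet
  have hi : volume ((fun x => x + (-b)) ⁻¹' K ∩ (fun x => x + (-a)) ⁻¹' L) = 0 := by
    refine measure_mono_null (t := {a + b}) ?_ (by simp)
    rintro x ⟨hx1, hx2⟩
    have := ha hx1
    have := hb hx2
    simp only [Set.mem_singleton_iff]
    linarith
  rw [← h1, ← h2, ← h3, ← measure_union_add_inter _ hm, hi, add_zero]
  apply measure_mono
  rintro x (hx | hx)
  · have := hC _ hx _ hbL
    simp only [Set.mem_preimage]
    convert this using 1; ring
  · have := hC _ haK _ hx
    simp only [Set.mem_preimage]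
    convert this using 1; ring

theorem bm_meas {A B C : Set ℝ} (hA : MeasurableSet A) (hB : MeasurableSet B) (hA0 : A.Nonempty)
    (hB0 : B.Nonempty) (hC : ∀ x ∈ A, ∀ y ∈ B, (x + y) / 2 ∈ C) :
    volume A + volume B ≤ 2 * volume C := by
  obtain ⟨a, ha⟩ := hA0
  obtain ⟨b, hb⟩ := hB0
  rw [hA.measure_eq_iSup_isCompact, hB.measure_eq_iSup_isCompact]
  simp only [iSup_and']
  refine ENNReal.biSup_add_biSup_le' ⟨∅, by simp⟩ ⟨∅, by simp⟩ ?_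
  rintro K ⟨hKA, hK⟩ L ⟨hLB, hL⟩
  calc volume K + volume L ≤ volume (insert a K) + volume (insert b L) := by
        gcongr <;> exact Set.subset_insert _ _
    _ ≤ _ := bm_compact (hK.insert a) (hL.insert b) (by simp) (by simp) (by
        intro x hx y hy
        exact hC x (Set.insert_subset ha hKA hx) y (Set.insert_subset hb hLB hy))

theorem pl_norm {f g h : ℝ → ℝ} (hf : Measurable f) (hg : Measurable g) (hh : Measurable h)
    (f0 : ∀ x, 0 ≤ f x) (g0 : ∀ x, 0 ≤ g x) (h0 : ∀ x, 0 ≤ h x)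
    (f1 : ∀ x, f x ≤ 1) (g1 : ∀ x, g x ≤ 1)
    (fs : ∀ s < 1, ∃ x, s < f x) (gs : ∀ s < 1, ∃ x, s < g x)
    (H : ∀ x y, f x * g y ≤ h ((x + y) / 2) ^ 2) :
    (∫⁻ x, ENNReal.ofReal (f x)) + (∫⁻ x, ENNReal.ofReal (g x)) ≤ 2 * ∫⁻ x, ENNReal.ofReal (h x) := by
  rw [lintegral_eq_lintegral_meas_lt _ (.of_forall f0) hf.aemeasurable,
    lintegral_eq_lintegral_meas_lt _ (.of_forall g0) hg.aemeasurable,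
    lintegral_eq_lintegral_meas_lt _ (.of_forall h0) hh.aemeasurable]
  have M : ∀ u : ℝ → ℝ, Measurable (fun t => volume {a | t < u a}) := fun u =>
    Antitone.measurable (fun s t hst => measure_mono (fun x hx => lt_of_le_of_lt hst hx))
  rw [← lintegral_add_left (M f), ← lintegral_const_mul _ (M h)]
  refine setLIntegral_mono' measurableSet_Ioi ?_
  intro t ht
  rcases lt_or_ge t 1 with h1 | h1
  · refine bm_meas (measurableSet_lt measurable_const hf) (measurableSet_lt measurable_const hg)
      (fs t h1) (gs t h1) ?_
    intro x hx y hy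
    simp only [Set.mem_ofPred_eq, Set.mem_Ioi] at *
    have := H x y
    refine lt_of_pow_lt_pow_left₀ 2 (h0 _) (lt_of_lt_of_le ?_ this)
    nlinarith
  · have e1 : {a | t < f a} = ∅ := by
      ext x; simp; exact (f1 x).trans h1
    have e2 : {a | t < g a} = ∅ := by
      ext x; simp; exact (g1 x).trans h1
    simp [e1, e2]

theorem amgm {I J H : ENNReal} (h : I + J ≤ 2 * H) : I * J ≤ H ^ 2 := by
  by_cases hH : H = ⊤
  · simp [hH]
  have hI : I ≠ ⊤ := by
    rintro rfl
    simp at h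
    exact absurd h (ENNReal.mul_ne_top (by simp) hH)
  have hJ : J ≠ ⊤ := by
    rintro rfl
    simp at h
    exact absurd h (ENNReal.mul_ne_top (by simp) hH)
  lift I to NNReal using hI
  lift J to NNReal using hJ
  lift H to NNReal using hH
  norm_cast at *
  rw [← NNReal.coe_le_coe] at *
  push_cast at *
  have := I.2; have := J.2
  nlinarith [sq_nonneg ((I:ℝ) - J), mul_self_le_mul_self (add_nonneg I.2 J.2) h]

theorem pl_bdd {f g h : ℝ → ENNReal} (hf : Measurable f) (hg : Measurable g) (hh : Measurable h)
    (f1 : ⨆ x, f x ≠ ⊤) (g1 : ⨆ x, g x ≠ ⊤)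
    (H : ∀ x y, f x * g y ≤ h ((x + y) / 2) ^ 2) :
    (∫⁻ x, f x) * (∫⁻ x, g x) ≤ (∫⁻ x, h x) ^ 2 := by
  obtain ⟨a, ha⟩ := Option.ne_none_iff_exists'.1 f1
  obtain ⟨b, hb⟩ := Option.ne_none_iff_exists'.1 g1
  change (⨆ x, f x) = (a : ENNReal) at ha
  change (⨆ x, g x) = (b : ENNReal) at hb
  have fa : ∀ x, f x ≤ a := fun x => ha ▸ le_iSup f x
  have gb : ∀ x, g x ≤ b := fun x => hb ▸ le_iSup g x
  rcases eq_or_ne a 0 with rfl | a0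
  · have : ∀ x, f x = 0 := fun x => by simpa using fa x
    simp [this]
  rcases eq_or_ne b 0 with rfl | b0
  · have : ∀ x, g x = 0 := fun x => by simpa using gb x
    simp [this]
  have a0' : 0 < (a : ℝ) := by positivity
  have b0' : 0 < (b : ℝ) := by positivity
  obtain ⟨r, hr⟩ : ∃ r : NNReal, r * r = a * b := ⟨NNReal.sqrt (a * b), by simp⟩
  have r0 : r ≠ 0 := by rintro rfl; simp at hr; tauto
  have r0' : 0 < (r : ℝ) := by positivity
  have hr' : (r : ℝ) * r = a * b := by exact_mod_cast congrArg NNReal.toReal hr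
  have fin_f : ∀ x, f x ≠ ⊤ := fun x => ne_top_of_le_ne_top (by simp) (fa x)
  have fin_g : ∀ x, g x ≠ ⊤ := fun x => ne_top_of_le_ne_top (by simp) (gb x)
  have fa' : ∀ x, (f x).toReal ≤ a := fun x => ENNReal.toReal_mono (by simp) (fa x)
  have gb' : ∀ x, (g x).toReal ≤ b := fun x => ENNReal.toReal_mono (by simp) (gb x)
  classical
  have key := pl_norm (f := fun x => (f x).toReal / a) (g := fun x => (g x).toReal / b)
    (h := fun x => if h x = ⊤ then 1 else (h x).toReal / r)
    (hf.ennreal_toReal.div_const _) (hg.ennreal_toReal.div_const _)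
    (Measurable.ite (hh (measurableSet_singleton ⊤)) measurable_const
      (hh.ennreal_toReal.div_const _))
    (fun x => by positivity) (fun x => by positivity) (fun x => by positivity)
    (fun x => by rw [div_le_one a0']; exact fa' x)
    (fun x => by rw [div_le_one b0']; exact gb' x)
    (fun s hs => by
      rcases lt_or_ge s 0 with h0 | h0
      · exact ⟨0, h0.trans_le (by positivity)⟩
      have : ENNReal.ofReal (s * a) < ⨆ x, f x := by
        rw [ha, ENNReal.ofReal_lt_iff_lt_toReal (by positivity) (by simp)]
        simp; nlinarith
      obtain ⟨x, hx⟩ := lt_iSup_iff.1 this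
      refine ⟨x, ?_⟩
      rw [lt_div_iff₀ a0']
      rwa [ENNReal.ofReal_lt_iff_lt_toReal (by positivity) (fin_f x)] at hx)
    (fun s hs => by
      rcases lt_or_ge s 0 with h0 | h0
      · exact ⟨0, h0.trans_le (by positivity)⟩
      have : ENNReal.ofReal (s * b) < ⨆ x, g x := by
        rw [hb, ENNReal.ofReal_lt_iff_lt_toReal (by positivity) (by simp)]
        simp; nlinarith
      obtain ⟨x, hx⟩ := lt_iSup_iff.1 this
      refine ⟨x, ?_⟩
      rw [lt_div_iff₀ b0']
      rwa [ENNReal.ofReal_lt_iff_lt_toReal (by positivity) (fin_g x)] at hx)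
    (fun x y => by
      rw [div_mul_div_comm, div_le_iff₀ (by positivity)]
      split_ifs with ht
      · rw [one_pow, one_mul]
        exact mul_le_mul (fa' x) (gb' y) (by positivity) (by positivity)
      · rw [div_pow, ← hr', ← sq, div_mul_cancel₀ _ (by positivity)]
        have := ENNReal.toReal_mono (by finiteness) (H x y)
        simpa using this)
  have key2 := amgm key
  have e1 : ∫⁻ x, f x = a * ∫⁻ x, ENNReal.ofReal ((f x).toReal / a) := by
    rw [← lintegral_const_mul' _ _ (by simp)]
    congr 1; ext x
    rw [ENNReal.ofReal_div_of_pos a0', ENNReal.ofReal_toReal (fin_f x), ENNReal.ofReal_coe_nnreal,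
      ENNReal.mul_div_cancel (by simpa using a0) (by simp)]
  have e2 : ∫⁻ x, g x = b * ∫⁻ x, ENNReal.ofReal ((g x).toReal / b) := by
    rw [← lintegral_const_mul' _ _ (by simp)]
    congr 1; ext x
    rw [ENNReal.ofReal_div_of_pos b0', ENNReal.ofReal_toReal (fin_g x), ENNReal.ofReal_coe_nnreal,
      ENNReal.mul_div_cancel (by simpa using b0) (by simp)]
  have e3 : r * ∫⁻ x, ENNReal.ofReal (if h x = ⊤ then 1 else (h x).toReal / r) ≤ ∫⁻ x, h x := by
    rw [← lintegral_const_mul' _ _ (by simp)]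
    refine lintegral_mono (fun x => ?_)
    split_ifs with ht
    · simp [ht]
    · rw [ENNReal.ofReal_div_of_pos r0', ENNReal.ofReal_toReal ht, ENNReal.ofReal_coe_nnreal,
      ENNReal.mul_div_cancel (by simpa using r0) (by simp)]
  calc _ = ((r * r : NNReal) : ENNReal) * ((∫⁻ x, ENNReal.ofReal ((f x).toReal / a)) *
        ∫⁻ x, ENNReal.ofReal ((g x).toReal / b)) := by
          rw [e1, e2, hr]; push_cast; ring
    _ ≤ ((r * r : NNReal) : ENNReal) *
        (∫⁻ x, ENNReal.ofReal (if h x = ⊤ then 1 else (h x).toReal / r)) ^ 2 :=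
          mul_le_mul_right key2 _
    _ = (r * ∫⁻ x, ENNReal.ofReal (if h x = ⊤ then 1 else (h x).toReal / r)) ^ 2 := by
          push_cast; ring
    _ ≤ _ := by gcongr

theorem lint_trunc {f : ℝ → ENNReal} (hf : Measurable f) :
    ∫⁻ x, f x = ⨆ N : ℕ, ∫⁻ x, min (f x) N := by
  rw [← lintegral_iSup (fun N => hf.min measurable_const)]
  · congr 1; ext x
    refine le_antisymm ?_ (iSup_le fun N => min_le_left _ _)
    rw [← inf_iSup_eq, ENNReal.iSup_natCast]; simp
  · intro M N h x
    exact min_le_min_left _ (by exact_mod_cast h)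

theorem pl_one {f g h : ℝ → ENNReal} (hf : Measurable f) (hg : Measurable g) (hh : Measurable h)
    (H : ∀ x y, f x * g y ≤ h ((x + y) / 2) ^ 2) :
    (∫⁻ x, f x) * (∫⁻ x, g x) ≤ (∫⁻ x, h x) ^ 2 := by
  rw [lint_trunc hf, lint_trunc hg, ENNReal.iSup_mul]
  refine iSup_le fun M => ?_
  rw [ENNReal.mul_iSup]
  refine iSup_le fun N => ?_
  refine pl_bdd (hf.min measurable_const) (hg.min measurable_const) hh ?_ ?_ ?_
  · exact ne_top_of_le_ne_top (ENNReal.natCast_ne_top M) (iSup_le fun x => min_le_right _ _)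
  · exact ne_top_of_le_ne_top (ENNReal.natCast_ne_top N) (iSup_le fun x => min_le_right _ _)
  · intro x y
    exact (mul_le_mul' (min_le_left _ _) (min_le_left _ _)).trans (H x y)

theorem lint_abs (F : ℝ → ENNReal) : ∫⁻ x, F |x| = 2 * ∫⁻ x in Set.Ioi 0, F x := by
  rw [← lintegral_add_compl _ (measurableSet_Ioi (a := (0:ℝ))), two_mul]
  congr 1
  · exact setLIntegral_congr_fun measurableSet_Ioi (fun x hx => by rw [abs_of_pos hx])
  · rw [Set.compl_Ioi, setLIntegral_congr Iio_ae_eq_Iic.symm]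
    have := (Measure.measurePreserving_neg (volume : Measure ℝ)).setLIntegral_comp_preimage_emb
      (MeasurableEquiv.neg ℝ).measurableEmbedding F (Set.Ioi 0)
    rw [← this]
    simp only [Set.neg_preimage, Set.neg_Ioi, neg_zero]
    exact setLIntegral_congr_fun measurableSet_Iio (fun x hx => by rw [abs_of_neg hx])

theorem lint_pow {κ : ℝ} (hκ : 1 ≤ κ) (F : ℝ → ENNReal) :
    ∫⁻ x in Set.Ioi 0, F x =
      ∫⁻ u in Set.Ioi 0, ENNReal.ofReal (κ * u ^ (κ - 1)) * F (u ^ κ) := by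
  have hk : 0 < κ := by linarith
  have im : (fun u : ℝ => u ^ κ) '' Set.Ioi 0 = Set.Ioi 0 := by
    ext x
    constructor
    · rintro ⟨u, hu, rfl⟩
      exact rpow_pos_of_pos hu _
    · intro hx
      refine ⟨x ^ κ⁻¹, rpow_pos_of_pos hx _, ?_⟩
      exact rpow_inv_rpow (le_of_lt hx) hk.ne'
  have := lintegral_image_eq_lintegral_abs_deriv_mul (f := fun u : ℝ => u ^ κ)
    (f' := fun u => κ * u ^ (κ - 1)) (measurableSet_Ioi (a := (0:ℝ)))
    (fun x hx => (hasDerivAt_rpow_const (Or.inr hκ)).hasDerivWithinAt) (by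
      intro x hx y hy h
      exact (rpow_left_inj (le_of_lt hx) (le_of_lt hy) hk.ne').1 h) F
  rw [im] at this
  rw [this]
  refine setLIntegral_congr_fun measurableSet_Ioi (fun x hx => ?_)
  have : 0 < x := hx
  rw [abs_of_nonneg (by positivity)]

theorem pl_kappa {κ : ℝ} (hκ : 1 ≤ κ) {f g h : ℝ → ENNReal} (hf : Measurable f)
    (hg : Measurable g) (hh : Measurable h)
    (H : ∀ x y, 0 < x → 0 < y → f x * g y ≤ h (((x ^ κ⁻¹ + y ^ κ⁻¹) / 2) ^ κ) ^ 2) :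
    (∫⁻ x, f |x|) * (∫⁻ x, g |x|) ≤ (∫⁻ x, h |x|) ^ 2 := by
  have hk : 0 < κ := by linarith
  rw [lint_abs, lint_abs, lint_abs, lint_pow hκ f, lint_pow hκ g, lint_pow hκ h]
  have hp : Measurable (fun u : ℝ => u ^ κ) := measurable_id.pow_const κ
  have hq : Measurable (fun u : ℝ => ENNReal.ofReal (κ * u ^ (κ - 1))) :=
    ((measurable_id.pow_const (κ - 1)).const_mul κ).ennreal_ofReal
  have key := pl_one ((hq.mul (hf.comp hp)).indicator (measurableSet_Ioi (a := (0:ℝ))))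
    ((hq.mul (hg.comp hp)).indicator (measurableSet_Ioi (a := (0:ℝ))))
    ((hq.mul (hh.comp hp)).indicator (measurableSet_Ioi (a := (0:ℝ)))) (by
      intro x y
      by_cases hx : 0 < x; swap
      · simp [Set.indicator, hx]
      by_cases hy : 0 < y; swap
      · simp [Set.indicator, hy]
      have hxy : 0 < (x + y) / 2 := by positivity
      rw [Set.indicator_of_mem (show x ∈ Set.Ioi 0 from hx),
        Set.indicator_of_mem (show y ∈ Set.Ioi 0 from hy),
        Set.indicator_of_mem (show (x + y) / 2 ∈ Set.Ioi 0 from hxy)]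
      simp only [Pi.mul_apply, Function.comp]
      have h1 := H (x ^ κ) (y ^ κ) (by positivity) (by positivity)
      rw [rpow_rpow_inv hx.le hk.ne', rpow_rpow_inv hy.le hk.ne'] at h1
      have h2 : ENNReal.ofReal (κ * x ^ (κ - 1)) * ENNReal.ofReal (κ * y ^ (κ - 1)) ≤
          ENNReal.ofReal (κ * ((x + y) / 2) ^ (κ - 1)) ^ 2 := by
        rw [← ENNReal.ofReal_mul (by positivity), ← ENNReal.ofReal_pow (by positivity)]
        apply ENNReal.ofReal_le_ofReal
        have : x ^ (κ - 1) * y ^ (κ - 1) ≤ (((x + y) / 2) ^ (κ - 1)) ^ 2 := by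
          rw [← mul_rpow hx.le hy.le, sq, ← mul_rpow hxy.le hxy.le]
          apply rpow_le_rpow (by positivity) _ (by linarith)
          nlinarith [sq_nonneg (x - y)]
        calc _ = κ ^ 2 * (x ^ (κ - 1) * y ^ (κ - 1)) := by ring
          _ ≤ κ ^ 2 * (((x + y) / 2) ^ (κ - 1)) ^ 2 := by gcongr
          _ = _ := by ring
      calc _ = (ENNReal.ofReal (κ * x ^ (κ - 1)) * ENNReal.ofReal (κ * y ^ (κ - 1))) *
            (f (x ^ κ) * g (y ^ κ)) := by ring
        _ ≤ _ := mul_le_mul' h2 h1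
        _ = _ := by ring)
  rw [lintegral_indicator measurableSet_Ioi, lintegral_indicator measurableSet_Ioi,
    lintegral_indicator measurableSet_Ioi] at key
  rw [mul_pow, mul_mul_mul_comm, ← sq]
  exact mul_le_mul_right key _

theorem lint_cons {n : ℕ} {f : (Fin (n + 1) → ℝ) → ENNReal} (hf : Measurable f) :
    ∫⁻ x : Fin (n + 1) → ℝ, f (fun i => |x i|) =
      ∫⁻ t, ∫⁻ v : Fin n → ℝ, f (Fin.cons |t| (fun i => |v i|)) := by
  have hm : Measurable (fun x : Fin (n + 1) → ℝ => f (fun i => |x i|)) :=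
    hf.comp (measurable_pi_lambda _ fun i => (measurable_pi_apply i).abs)
  have := (volume_preserving_piFinSuccAbove (fun _ : Fin (n + 1) => ℝ) 0).symm
  rw [← this.lintegral_comp hm, Measure.volume_eq_prod, lintegral_prod]
  · congr 1; ext t; congr 1; ext v
    congr 1; ext i
    refine Fin.cases ?_ (fun j => ?_) i <;> simp
  · exact (hm.comp (MeasurableEquiv.measurable _)).aemeasurable

theorem meas_cons (n : ℕ) :
    Measurable (fun p : ℝ × (Fin n → ℝ) => (Fin.cons p.1 (fun i => |p.2 i|) : Fin (n + 1) → ℝ)) := by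
  refine measurable_pi_lambda _ fun i => ?_
  refine Fin.cases ?_ (fun j => ?_) i
  · simpa using measurable_fst
  · simpa using ((measurable_pi_apply j).comp measurable_snd).abs

theorem pl_n {κ : ℝ} (hκ : 1 ≤ κ) (n : ℕ) : ∀ {f g h : (Fin n → ℝ) → ENNReal}, Measurable f →
    Measurable g → Measurable h →
    (∀ x y, (∀ i, 0 < x i) → (∀ i, 0 < y i) →
      f x * g y ≤ h (fun i => (((x i) ^ κ⁻¹ + (y i) ^ κ⁻¹) / 2) ^ κ) ^ 2) →
    (∫⁻ x : Fin n → ℝ, f (fun i => |x i|)) * (∫⁻ x : Fin n → ℝ, g (fun i => |x i|)) ≤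
      (∫⁻ x : Fin n → ℝ, h (fun i => |x i|)) ^ 2 := by
  induction n with
  | zero =>
    intro f g h hf hg hh H
    have D : ∀ u : (Fin 0 → ℝ) → ENNReal, ∫⁻ x, u x = u default := by
      intro u
      rw [lintegral_unique, volume_pi, Measure.pi_of_empty]
      simp
      exact congrArg u (Subsingleton.elim _ _)
    simp only [D]
    have := H default default (fun i => i.elim0) (fun i => i.elim0)
    convert this using 3 <;> exact Subsingleton.elim _ _
  | succ n ih =>
    intro f g h hf hg hh H
    rw [lint_cons hf, lint_cons hg, lint_cons hh]
    have M : ∀ {u : (Fin (n + 1) → ℝ) → ENNReal}, Measurable u →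
        Measurable (fun t : ℝ => ∫⁻ v : Fin n → ℝ, u (Fin.cons t (fun i => |v i|))) := by
      intro u hu
      exact (hu.comp (meas_cons n)).lintegral_prod_right'
    have M2 : ∀ {u : (Fin (n + 1) → ℝ) → ENNReal}, Measurable u → ∀ t : ℝ,
        Measurable (fun v : Fin n → ℝ => u (Fin.cons t v)) := by
      intro u hu t
      refine hu.comp (measurable_pi_lambda _ fun i => ?_)
      refine Fin.cases ?_ (fun j => ?_) i
      · simp
      · simpa using measurable_pi_apply j
    refine pl_kappa hκ (M hf) (M hg) (M hh) ?_
    intro s t hs ht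
    refine ih (M2 hf s) (M2 hg t) (M2 hh _) ?_
    intro x y hx hy
    have := H (Fin.cons s x) (Fin.cons t y) (fun i => by refine Fin.cases ?_ (fun j => ?_) i <;> simp [*])
      (fun i => by refine Fin.cases ?_ (fun j => ?_) i <;> simp [*])
    convert this using 3
    ext i
    refine Fin.cases ?_ (fun j => ?_) i <;> simp

theorem meas_w {κ : ℝ} (hκ : 1 ≤ κ) {n : ℕ} {φ : (Fin n → ℝ) → ℝ}
    (hc : ConvexOn ℝ {x : Fin n → ℝ | ∀ i, 0 ≤ x i} (fun x => φ (fun i => x i ^ κ))) :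
    Measurable ({x : Fin n → ℝ | ∀ i, 0 < x i}.indicator
      (fun x => ENNReal.ofReal (Real.exp (-φ x)))) := by
  have hk : 0 < κ := by linarith
  have ho : IsOpen {x : Fin n → ℝ | ∀ i, 0 < x i} := by
    have : {x : Fin n → ℝ | ∀ i, 0 < x i} = ⋂ i, {x | 0 < x i} := by ext; simp
    rw [this]
    exact isOpen_iInter_of_finite fun i => isOpen_lt continuous_const (continuous_apply i)
  have hcv : Convex ℝ {x : Fin n → ℝ | ∀ i, 0 < x i} := by
    intro x hx y hy a b ha hb hab i
    have h1 := hx i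
    have h2 := hy i
    simp only [Pi.add_apply, Pi.smul_apply, smul_eq_mul]
    rcases eq_or_lt_of_le ha with rfl | ha
    · have : b = 1 := by linarith
      subst this; simpa using h2
    · have := mul_pos ha h1
      have := mul_nonneg hb h2.le
      linarith
  have hψ := (hc.subset (fun x hx i => (hx i).le) hcv).continuousOn ho
  have hφ : ContinuousOn φ {x : Fin n → ℝ | ∀ i, 0 < x i} := by
    have h1 : ContinuousOn (fun x : Fin n → ℝ => (fun i => x i ^ κ⁻¹))
        {x : Fin n → ℝ | ∀ i, 0 < x i} := by
      refine continuousOn_pi.2 fun i => ?_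
      exact (continuous_apply i).continuousOn.rpow_const (fun x hx => Or.inl (hx i).ne')
    have h2 := hψ.comp h1 (fun x hx i => rpow_pos_of_pos (hx i) _)
    refine h2.congr ?_
    intro x hx
    simp only [Function.comp]
    congr 1; ext i
    rw [rpow_inv_rpow (hx i).le hk.ne']
  have h3 : ContinuousOn (fun x => ENNReal.ofReal (Real.exp (-φ x)))
      {x : Fin n → ℝ | ∀ i, 0 < x i} :=
    ENNReal.continuous_ofReal.comp_continuousOn (Real.continuous_exp.comp_continuousOn hφ.neg)
  classical
  rw [← Set.piecewise_eq_indicator]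
  exact h3.measurable_piecewise continuousOn_const ho.measurableSet

theorem nu_eq {n : ℕ} {φ : (Fin n → ℝ) → ℝ}
    (hs : ∀ ε : Fin n → ℝ, (∀ i, ε i = 1 ∨ ε i = -1) → ∀ x, φ (fun i => ε i * x i) = φ x)
    {B : Set (Fin n → ℝ)} (hB : MeasurableSet B) :
    (volume : Measure (Fin n → ℝ)).withDensity (fun x => ENNReal.ofReal (Real.exp (-φ x)))
      ((fun x i => |x i|) ⁻¹' B) = ∫⁻ x : Fin n → ℝ, B.indicator
        ({x : Fin n → ℝ | ∀ i, 0 < x i}.indicator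
        (fun x => ENNReal.ofReal (Real.exp (-φ x)))) (fun i => |x i|) := by
  have hB' : MeasurableSet ((fun (x : Fin n → ℝ) i => |x i|) ⁻¹' B) :=
    (measurable_pi_lambda _ fun i => (measurable_pi_apply i).abs) hB
  rw [withDensity_apply _ hB', ← lintegral_indicator hB']
  have hne : ∀ᵐ x : Fin n → ℝ, ∀ i, x i ≠ 0 := ae_all_iff.2 fun i => by
    rw [volume_pi]; exact Measure.ae_eval_ne (μ := fun _ => volume) i 0
  refine lintegral_congr_ae ?_
  filter_upwards [hne] with x hx
  have e : φ (fun i => |x i|) = φ x := by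
    rw [← hs (fun i => if x i < 0 then -1 else 1) (fun i => by
      by_cases h : x i < 0 <;> simp [h]) x]
    congr 1; ext i
    by_cases h : x i < 0
    · simp [h, abs_of_neg]
    · simp [h, abs_of_nonneg (not_lt.1 h)]
  have hp : (fun i => |x i|) ∈ {x : Fin n → ℝ | ∀ i, 0 < x i} := fun i => abs_pos.2 (hx i)
  by_cases hb : (fun i => |x i|) ∈ B
  · rw [Set.indicator_of_mem hb, Set.indicator_of_mem hp, Set.indicator_of_mem
      (show x ∈ (fun (x : Fin n → ℝ) i => |x i|) ⁻¹' B from hb), e]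
  · rw [Set.indicator_of_notMem hb, Set.indicator_of_notMem
      (show x ∉ (fun (x : Fin n → ℝ) i => |x i|) ⁻¹' B from hb)]

theorem tail_sq {κ : ℝ} (hκ : 1 ≤ κ) {n : ℕ} {φ : (Fin n → ℝ) → ℝ}
    (hpr : IsProbabilityMeasure ((volume : Measure (Fin n → ℝ)).withDensity
          (fun x => ENNReal.ofReal (Real.exp (-φ x)))))
    (hs : ∀ ε : Fin n → ℝ, (∀ i, ε i = 1 ∨ ε i = -1) → ∀ x, φ (fun i => ε i * x i) = φ x)
    (hc : ConvexOn ℝ {x : Fin n → ℝ | ∀ i, 0 ≤ x i} (fun x => φ (fun i => x i ^ κ)))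
    (i : Fin n) (t : ℝ) (ht : 0 ≤ t) :
    (volume : Measure (Fin n → ℝ)).withDensity (fun x => ENNReal.ofReal (Real.exp (-φ x)))
      {x | 2 ^ κ * t ≤ |x i|} ≤
    ((volume : Measure (Fin n → ℝ)).withDensity (fun x => ENNReal.ofReal (Real.exp (-φ x)))
      {x | t ≤ |x i|}) ^ 2 := by
  have hk : 0 < κ := by linarith
  have hm : ∀ s : ℝ, MeasurableSet {x : Fin n → ℝ | s ≤ x i} := fun s =>
    measurableSet_le measurable_const (measurable_pi_apply i)
  have h1 := nu_eq hs (hm t)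
  have h2 := nu_eq hs (hm (2 ^ κ * t))
  have h3 := nu_eq hs (MeasurableSet.univ)
  rw [Set.preimage_univ, measure_univ] at h3
  have hw := meas_w hκ hc
  have key := pl_n hκ n (hw.indicator (hm (2 ^ κ * t))) (hw.indicator MeasurableSet.univ)
    (hw.indicator (hm t)) (by
      intro x y hx hy
      by_cases hxt : 2 ^ κ * t ≤ x i; swap
      · rw [Set.indicator_of_notMem (show x ∉ {x : Fin n → ℝ | 2 ^ κ * t ≤ x i} from hxt)]
        simp
      have hz : (fun i => (((x i) ^ κ⁻¹ + (y i) ^ κ⁻¹) / 2) ^ κ) ∈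
          {x : Fin n → ℝ | ∀ i, 0 < x i} := by
        intro j
        have := hx j; have := hy j
        simp only
        positivity
      have hzt : (fun i => (((x i) ^ κ⁻¹ + (y i) ^ κ⁻¹) / 2) ^ κ) ∈
          {x : Fin n → ℝ | t ≤ x i} := by
        have h0 := hx i
        have h0' := hy i
        have : 2 * t ^ κ⁻¹ ≤ x i ^ κ⁻¹ := by
          have := rpow_le_rpow (by positivity) hxt (inv_nonneg.2 hk.le)
          rwa [mul_rpow (by positivity) ht, rpow_rpow_inv (by norm_num) hk.ne'] at this
        have h5 : t ^ κ⁻¹ ≤ ((x i) ^ κ⁻¹ + (y i) ^ κ⁻¹) / 2 := by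
          have : 0 < y i ^ κ⁻¹ := by positivity
          linarith
        have := rpow_le_rpow (by positivity) h5 hk.le
        rwa [rpow_inv_rpow ht hk.ne'] at this
      rw [Set.indicator_of_mem (show x ∈ {x : Fin n → ℝ | 2 ^ κ * t ≤ x i} from hxt),
        Set.indicator_of_mem (Set.mem_univ y), Set.indicator_of_mem hzt, Set.indicator_of_mem hz,
        Set.indicator_of_mem (show x ∈ {x : Fin n → ℝ | ∀ i, 0 < x i} from hx),
        Set.indicator_of_mem (show y ∈ {x : Fin n → ℝ | ∀ i, 0 < x i} from hy),
        ← ENNReal.ofReal_mul (by positivity), ← ENNReal.ofReal_pow (by positivity),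
        ← Real.exp_add, sq, ← Real.exp_add]
      apply ENNReal.ofReal_le_ofReal
      apply Real.exp_le_exp.2
      have := hc.2 (show (fun i => x i ^ κ⁻¹) ∈ _ from fun j => rpow_nonneg (hx j).le _)
        (show (fun i => y i ^ κ⁻¹) ∈ _ from fun j => rpow_nonneg (hy j).le _)
        (show (0:ℝ) ≤ 1 / 2 by norm_num) (show (0:ℝ) ≤ 1 / 2 by norm_num) (by norm_num)
      simp only [smul_eq_mul, Pi.add_apply, Pi.smul_apply] at this
      have e1 : (fun i => (x i ^ κ⁻¹) ^ κ) = x := by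
        ext j; exact rpow_inv_rpow (hx j).le hk.ne'
      have e2 : (fun i => (y i ^ κ⁻¹) ^ κ) = y := by
        ext j; exact rpow_inv_rpow (hy j).le hk.ne'
      have e3 : (fun i => (1 / 2 * x i ^ κ⁻¹ + 1 / 2 * y i ^ κ⁻¹) ^ κ) =
          (fun i => (((x i) ^ κ⁻¹ + (y i) ^ κ⁻¹) / 2) ^ κ) := by
        ext j; congr 1; ring
      rw [e1, e2, e3] at this
      linarith)
  rw [← h1, ← h2, ← h3, mul_one] at key
  exact key

theorem moment_le {Ω : Type*} [MeasurableSpace Ω] (μ : Measure Ω) [IsProbabilityMeasure μ]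
    {Y : Ω → ℝ} (hY : Measurable Y) (Y0 : ∀ ω, 0 ≤ Y ω) {L q t : ℝ} (hL : 1 < L) (hq : 0 < q)
    (ht : 0 < t)
    (H : ∀ k : ℕ, μ {ω | L ^ k * t ≤ Y ω} ≤ ENNReal.ofReal ((1 / (2 * L ^ q)) ^ (k + 1))) :
    ∫⁻ ω, ENNReal.ofReal (Y ω ^ q) ∂μ ≤ ENNReal.ofReal (2 * t ^ q) := by
  have hL0 : 0 < L := by linarith
  have hms : ∀ k : ℕ, MeasurableSet {ω | L ^ k * t ≤ Y ω} := fun k =>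
    measurableSet_le measurable_const hY
  have pt : ∀ ω, ENNReal.ofReal (Y ω ^ q) ≤ ENNReal.ofReal (t ^ q) +
      ∑' k : ℕ, {ω | L ^ k * t ≤ Y ω}.indicator
        (fun _ => ENNReal.ofReal ((L ^ (k + 1) * t) ^ q)) ω := by
    intro ω
    rcases le_total (Y ω) t with h | h
    · refine le_trans ?_ le_self_add
      exact ENNReal.ofReal_le_ofReal (rpow_le_rpow (Y0 ω) h hq.le)
    · obtain ⟨k, hk1, hk2⟩ := exists_nat_pow_near ((one_le_div ht).2 h) hL
      rw [le_div_iff₀ ht] at hk1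
      rw [div_lt_iff₀ ht] at hk2
      refine le_trans ?_ le_add_self
      refine le_trans ?_ (ENNReal.le_tsum k)
      rw [Set.indicator_of_mem (show ω ∈ {ω | L ^ k * t ≤ Y ω} from hk1)]
      exact ENNReal.ofReal_le_ofReal (rpow_le_rpow (Y0 ω) hk2.le hq.le)
  refine (lintegral_mono pt).trans ?_
  rw [lintegral_add_left measurable_const, lintegral_tsum (fun k =>
    (measurable_const.indicator (hms k)).aemeasurable)]
  simp only [lintegral_const, measure_univ, mul_one]
  have hk : ∀ k : ℕ, ∫⁻ ω, {ω | L ^ k * t ≤ Y ω}.indicator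
        (fun _ => ENNReal.ofReal ((L ^ (k + 1) * t) ^ q)) ω ∂μ ≤
        ENNReal.ofReal (t ^ q / 2 / 2 ^ k) := by
    intro k
    rw [lintegral_indicator_const (hms k)]
    refine (mul_le_mul_right (H k) _).trans ?_
    rw [← ENNReal.ofReal_mul (by positivity)]
    apply ENNReal.ofReal_le_ofReal
    apply le_of_eq
    rw [mul_rpow (by positivity) ht.le, ← rpow_natCast L, ← rpow_mul hL0.le, mul_comm _ q,
      rpow_mul hL0.le, rpow_natCast]
    have : 0 < L ^ q := by positivity
    rw [div_pow, mul_pow]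
    field_simp
    ring
  calc _ ≤ ENNReal.ofReal (t ^ q) + ∑' k : ℕ, ENNReal.ofReal (t ^ q / 2 / 2 ^ k) := by
        gcongr with k; exact hk k
    _ = ENNReal.ofReal (t ^ q) + ENNReal.ofReal (t ^ q) := by
        rw [← ENNReal.ofReal_tsum_of_nonneg (fun k => by positivity) (summable_geometric_two' _),
          tsum_geometric_two']
    _ = _ := by rw [← ENNReal.ofReal_add (by positivity) (by positivity)]; ring_nf
    _ ≤ _ := le_rfl

theorem main_aux {Ω : Type*} [MeasurableSpace Ω] (μ : Measure Ω) [IsProbabilityMeasure μ]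
    {Y : Ω → ℝ} (hY : Measurable Y) (Y0 : ∀ ω, 0 ≤ Y ω) {L p : ℝ} (hL : 1 < L) (hp : 1 ≤ p)
    (T : ∀ t, 0 ≤ t → μ {ω | L * t ≤ Y ω} ≤ μ {ω | t ≤ Y ω} ^ 2) :
    ∫ ω, Y ω ^ p ∂μ ≤ (2 * (2 * L ^ p) ^ (p / 2)) * (∫ ω, Y ω ^ (2:ℝ) ∂μ) ^ (p / 2) := by
  have hL0 : 0 < L := by linarith
  have step : ∀ q t : ℝ, 0 < q → 0 < t → μ {ω | t ≤ Y ω} ≤ ENNReal.ofReal (1 / (2 * L ^ q)) →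
      ∫⁻ ω, ENNReal.ofReal (Y ω ^ q) ∂μ ≤ ENNReal.ofReal (2 * t ^ q) := by
    intro q t hq ht h
    refine moment_le μ hY Y0 hL hq ht ?_
    intro k
    have hLq : 1 ≤ L ^ q := one_le_rpow hL.le hq.le
    have hδ : 1 / (2 * L ^ q) ≤ 1 := by
      rw [div_le_one (by positivity)]; linarith
    induction k with
    | zero => simpa using h
    | succ k ih =>
      have h1 := T (L ^ k * t) (by positivity)
      rw [← mul_assoc, ← pow_succ'] at h1
      refine h1.trans ((pow_le_pow_left' ih 2).trans ?_)
      rw [← ENNReal.ofReal_pow (by positivity), ← pow_mul]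
      apply ENNReal.ofReal_le_ofReal
      exact pow_le_pow_of_le_one (by positivity) hδ (by omega)
  have hA : ∫⁻ ω, ENNReal.ofReal (Y ω ^ (2:ℝ)) ∂μ ≠ ⊤ := by
    obtain ⟨t, ht, h⟩ : ∃ t : ℝ, 0 < t ∧
        μ {ω | t ≤ Y ω} ≤ ENNReal.ofReal (1 / (2 * L ^ (2:ℝ))) := by
      have lim := tendsto_measure_iInter_atTop (μ := μ) (s := fun N : ℕ => {ω | (N : ℝ) ≤ Y ω})
        (fun N => (measurableSet_le measurable_const hY).nullMeasurableSet)
        (fun M N h ω hω => le_trans (b := (N : ℝ)) (by exact_mod_cast h) hω) ⟨0, measure_ne_top _ _⟩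
      have e : ⋂ N : ℕ, {ω | (N : ℝ) ≤ Y ω} = ∅ := by
        ext ω
        simp only [Set.mem_iInter, Set.mem_empty_iff_false, iff_false, not_forall]
        obtain ⟨N, hN⟩ := exists_nat_gt (Y ω)
        exact ⟨N, fun h => absurd hN (not_lt.2 h)⟩
      rw [e, measure_empty] at lim
      have pos : (0 : ENNReal) < ENNReal.ofReal (1 / (2 * L ^ (2:ℝ))) := by
        rw [ENNReal.ofReal_pos]; positivity
      obtain ⟨N, hN, hN0⟩ := ((lim.eventually (gt_mem_nhds pos)).and
        (Filter.eventually_gt_atTop 0)).exists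
      exact ⟨N, by exact_mod_cast hN0, hN.le⟩
    exact ne_top_of_le_ne_top ENNReal.ofReal_ne_top (step 2 t (by norm_num) ht h)
  have m2 : Measurable (fun ω => Y ω ^ (2:ℝ)) := hY.pow_const _
  have mp : Measurable (fun ω => Y ω ^ p) := hY.pow_const _
  have e2 : ∫ ω, Y ω ^ (2:ℝ) ∂μ = (∫⁻ ω, ENNReal.ofReal (Y ω ^ (2:ℝ)) ∂μ).toReal :=
    integral_eq_lintegral_of_nonneg_ae (.of_forall fun ω => rpow_nonneg (Y0 ω) _)
      m2.aestronglyMeasurable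
  have ep : ∫ ω, Y ω ^ p ∂μ = (∫⁻ ω, ENNReal.ofReal (Y ω ^ p) ∂μ).toReal :=
    integral_eq_lintegral_of_nonneg_ae (.of_forall fun ω => rpow_nonneg (Y0 ω) _)
      mp.aestronglyMeasurable
  set A := ∫⁻ ω, ENNReal.ofReal (Y ω ^ (2:ℝ)) ∂μ with hAdef
  have p0 : 0 < p := by linarith
  rcases eq_or_ne A 0 with hA0 | hA0
  · have : ∫⁻ ω, ENNReal.ofReal (Y ω ^ p) ∂μ = 0 := by
      rw [hAdef, lintegral_eq_zero_iff m2.ennreal_ofReal] at hA0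
      rw [lintegral_eq_zero_iff mp.ennreal_ofReal]
      filter_upwards [hA0] with ω hω
      simp only [Pi.zero_apply, ENNReal.ofReal_eq_zero] at *
      have : Y ω = 0 := by
        rw [rpow_two] at hω
        nlinarith [Y0 ω]
      rw [this, zero_rpow p0.ne']
    rw [ep, this, e2]
    simp only [ENNReal.toReal_zero]
    positivity
  · have s0 : 0 < A.toReal := ENNReal.toReal_pos hA0 hA
    have D0 : 0 < 2 * L ^ p := by positivity
    set s := A.toReal with hs
    set t := (s * (2 * L ^ p)) ^ (1/2 : ℝ) with ht
    have t0 : 0 < t := by positivity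
    have t2 : t ^ (2:ℝ) = s * (2 * L ^ p) := by
      rw [ht, ← rpow_mul (by positivity)]; norm_num
    have cheb : μ {ω | t ≤ Y ω} ≤ ENNReal.ofReal (1 / (2 * L ^ p)) := by
      have hpos : 0 < t ^ (2:ℝ) := by positivity
      have := meas_ge_le_lintegral_div (μ := μ) m2.ennreal_ofReal.aemeasurable
        (ε := ENNReal.ofReal (t ^ (2:ℝ))) (by simpa using t0.ne') ENNReal.ofReal_ne_top
      refine le_trans (measure_mono ?_) (this.trans (le_of_eq ?_))
      · intro ω hω
        exact ENNReal.ofReal_le_ofReal (rpow_le_rpow t0.le hω (by norm_num))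
      · rw [← hAdef, ← ENNReal.ofReal_toReal hA, ← ENNReal.ofReal_div_of_pos hpos, t2, ← hs]
        congr 1
        field_simp
    have fin := step p t p0 t0 cheb
    rw [ep, e2]
    refine (ENNReal.toReal_mono ENNReal.ofReal_ne_top fin).trans (le_of_eq ?_)
    rw [ENNReal.toReal_ofReal (by positivity), ht, ← rpow_mul (by positivity),
      mul_rpow (by positivity) (by positivity)]
    ring_nf

theorem moment_reverse_holder (κ : ℝ) (hκ : 1 ≤ κ) (p : ℝ) (hp : 1 ≤ p) :
    ∃ c : ℝ, 0 < c ∧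
      ∀ (n : ℕ) (Ω : Type) [MeasureSpace Ω] [IsProbabilityMeasure (ℙ : Measure Ω)]
        (X : Ω → Fin n → ℝ) (φ : (Fin n → ℝ) → ℝ),
        Measurable X →
        -- e^{-φ} is a probability density
        IsProbabilityMeasure ((volume : Measure (Fin n → ℝ)).withDensity
          (fun x => ENNReal.ofReal (Real.exp (-φ x)))) →
        -- X has density e^{-φ(x)}
        Measure.map X ℙ = (volume : Measure (Fin n → ℝ)).withDensity
          (fun x => ENNReal.ofReal (Real.exp (-φ x))) →
        -- the density is unconditional
        (∀ ε : Fin n → ℝ, (∀ i, ε i = 1 ∨ ε i = -1) →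
          ∀ x, φ (fun i => ε i * x i) = φ x) →
        -- φ(x₁^κ, …, xₙ^κ) is convex on the positive orthant
        ConvexOn ℝ {x : Fin n → ℝ | ∀ i, 0 ≤ x i} (fun x => φ (fun i => x i ^ κ)) →
        ∀ i : Fin n,
          ∫ ω, |X ω i| ^ p ∂ℙ ≤ c * (∫ ω, |X ω i| ^ (2:ℝ) ∂ℙ) ^ (p / 2) := by
  have hk : 0 < κ := by linarith
  have hL : (1:ℝ) < 2 ^ κ := one_lt_rpow (by norm_num) hk
  refine ⟨2 * (2 * (2 ^ κ) ^ p) ^ (p / 2), by positivity, ?_⟩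
  intro n Ω _ _ X φ hX hpr hmap hs hc i
  have hXi : Measurable (fun ω => X ω i) := (measurable_pi_apply i).comp hX
  refine main_aux ℙ (Y := fun ω => |X ω i|) hXi.abs (fun ω => abs_nonneg _) hL hp ?_
  intro t ht
  have key := tail_sq hκ hpr hs hc i t ht
  rw [← hmap] at key
  have hm : ∀ s : ℝ, MeasurableSet {x : Fin n → ℝ | s ≤ |x i|} := fun s =>
    measurableSet_le measurable_const (measurable_pi_apply i).abs
  rw [Measure.map_apply hX (hm _), Measure.map_apply hX (hm _)] at key
  exact key
end
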